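/- arXiv:2306.14536 — 3 statements merged into one kernel-verified Lean document; each statement's English description precedes it below -/
import Mathlib

section
/- Let $d = 1$, $m \in (0,1)$, and let $\varphi \in C_0^\infty$ be supported in $(1/2, 2)$. Then for every $k \in \mathbb{Z}$ and every $x$ with $|x| < 1$, $\sup_{t \in (-1,1)} \big| \int_{\mathbb{R}} e^{i(x\xi + t|\xi|^m)} \varphi(2^{-k}|\xi|) \, d\xi \big| \lesssim 2^{k/2} |x|^{-1/2} (1 + 2^k |x|^{1/(1-m)})^{-1/2}$. -/
open MeasureTheory Set Complex
open scoped ENNReal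

/-!
Rescaling frequencies to size one and folding the negative half-line onto the positive one turns
the integral into two oscillatory integrals with phase `A y + B y ^ m`, where `|A| = 2 ^ k |x|` and
`B = 2 ^ (m k) t`. If `|A|` dominates `|B|`, the derivative of the phase is at least `|A| / 2`, and
van der Corput's first-derivative test gives the decay `1 / |A|`. Otherwise the second derivative
has size `|B| ≳ |A|`, and the second-derivative test gives `|A| ^ (-1 / 2)`; in this regime
`|t| < 1` forces `2 ^ k |x| ^ (1 / (1 - m))` to be bounded, so the last factor of the estimate
costs only a constant. The amplitude is removed by integrating by parts against the primitive of
the oscillating factor.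
-/

section VanDerCorput

variable {a b r : ℝ} {ψ ψ' ψ'' : ℝ → ℝ} {E : Type*} [NormedAddCommGroup E]

theorem norm_integral_smul_le_of_norm_integral_le [NormedSpace ℂ E] [CompleteSpace E] {K : ℝ}
    {f : ℝ → ℂ} {g g' : ℝ → E} (hab : a ≤ b) (hf : ContinuousOn f (Icc a b))
    (hg : ∀ x ∈ Icc a b, HasDerivAt g (g' x) x) (hg' : ContinuousOn g' (Icc a b))
    (hK : ∀ x ∈ Icc a b, ‖∫ y in a..x, f y‖ ≤ K) :
    ‖∫ x in a..b, f x • g x‖ ≤ K * (‖g b‖ + ∫ x in a..b, ‖g' x‖) := by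
  set F : ℝ → ℂ := fun x ↦ ∫ y in a..x, f y
  have hFc : ContinuousOn F (uIcc a b) := intervalIntegral.continuousOn_primitive_interval
    (by rw [uIcc_of_le hab]; exact hf.integrableOn_Icc)
  have hF : ∀ x ∈ Ioo a b, HasDerivAt F (f x) x := fun x hx ↦
    intervalIntegral.integral_hasDerivAt_right
      ((hf.mono (Icc_subset_Icc_right hx.2.le)).intervalIntegrable_of_Icc hx.1.le)
      ((hf.mono Ioo_subset_Icc_self).stronglyMeasurableAtFilter isOpen_Ioo x hx)
      (hf.continuousAt (Icc_mem_nhds hx.1 hx.2))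
  have by_parts : ∫ x in a..b, f x • g x = F b • g b - ∫ x in a..b, F x • g' x := by
    have hgc : ContinuousOn g (uIcc a b) := by
      rw [uIcc_of_le hab]
      exact HasDerivAt.continuousOn hg
    have hFa : F a = 0 := intervalIntegral.integral_same
    rw [intervalIntegral.integral_smul_deriv_eq_deriv_smul_of_hasDerivAt hFc hgc
      (by rwa [min_eq_left hab, max_eq_right hab])
      (by
        rw [min_eq_left hab, max_eq_right hab]
        exact fun x hx ↦ hg x (Ioo_subset_Icc_self hx))
      (hf.intervalIntegrable_of_Icc hab) (hg'.intervalIntegrable_of_Icc hab), hFa]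
    module
  rw [by_parts, mul_add]
  refine norm_sub_le_of_le ?_ ?_
  · rw [norm_smul]
    gcongr
    exact hK b (right_mem_Icc.2 hab)
  · rw [← intervalIntegral.integral_const_mul]
    refine intervalIntegral.norm_integral_le_of_norm_le hab (.of_forall fun x hx ↦ ?_)
      ((hg'.norm.intervalIntegrable_of_Icc hab).const_mul K)
    rw [norm_smul]
    gcongr
    exact hK x (Ioc_subset_Icc_self hx)

theorem norm_integral_le_of_norm_integral_le_away [NormedSpace ℝ E] {f : ℝ → E} {c δ C M : ℝ}
    (hf : ContinuousOn f (Icc a b)) (hc : c ∈ Icc a b) (hδ : 0 ≤ δ) (hM : 0 ≤ M)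
    (hC : ∀ x ∈ Icc a b, ‖f x‖ ≤ C)
    (haway : ∀ u v, a ≤ u → u ≤ v → v ≤ b → (∀ x ∈ Icc u v, δ ≤ |x - c|) →
      ‖∫ x in u..v, f x‖ ≤ M) :
    ‖∫ x in a..b, f x‖ ≤ 2 * M + 2 * δ * C := by
  obtain ⟨p, hap, hpc, hδp, left⟩ : ∃ p, a ≤ p ∧ p ≤ c ∧ c - δ ≤ p ∧ ‖∫ x in a..p, f x‖ ≤ M := by
    rcases le_total (c - δ) a with h | h
    · exact ⟨a, le_rfl, hc.1, h, by rwa [intervalIntegral.integral_same, norm_zero]⟩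
    · exact ⟨c - δ, h, by linarith, le_rfl, haway _ _ le_rfl h (by linarith [hc.2])
        fun x hx ↦ by linarith [neg_le_abs (x - c), hx.2]⟩
  obtain ⟨q, hcq, hqb, hqδ, right⟩ : ∃ q, c ≤ q ∧ q ≤ b ∧ q ≤ c + δ ∧ ‖∫ x in q..b, f x‖ ≤ M := by
    rcases le_total b (c + δ) with h | h
    · exact ⟨b, hc.2, le_rfl, h, by rwa [intervalIntegral.integral_same, norm_zero]⟩
    · exact ⟨c + δ, by linarith, h, le_rfl, haway _ _ (by linarith [hc.1]) h le_rfl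
        fun x hx ↦ by linarith [le_abs_self (x - c), hx.1]⟩
  have hpq : p ≤ q := hpc.trans hcq
  have middle : ‖∫ x in p..q, f x‖ ≤ 2 * δ * C := by
    refine (intervalIntegral.norm_integral_le_of_norm_le_const fun x hx ↦ hC x ?_).trans ?_
    · rw [uIoc_of_le hpq] at hx
      exact ⟨hap.trans hx.1.le, hx.2.trans hqb⟩
    · have : 0 ≤ C := (norm_nonneg _).trans (hC c hc)
      rw [abs_of_nonneg (sub_nonneg.2 hpq), mul_comm]
      gcongr
      linarith
  have hint : ∀ u v, a ≤ u → u ≤ v → v ≤ b → IntervalIntegrable f volume u v :=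
    fun u v hu huv hv ↦ (hf.mono (Icc_subset_Icc hu hv)).intervalIntegrable_of_Icc huv
  have hpb : p ≤ b := hpq.trans hqb
  rw [← intervalIntegral.integral_add_adjacent_intervals (hint a p le_rfl hap hpb)
    (hint p b hap hpb le_rfl), ← intervalIntegral.integral_add_adjacent_intervals
    (hint p q hap hpq hqb) (hint q b (hap.trans hpq) hqb le_rfl)]
  calc _ ≤ M + (2 * δ * C + M) := norm_add_le_of_le left (norm_add_le_of_le middle right)
    _ = 2 * M + 2 * δ * C := by ring

theorem integral_norm_deriv_inv_le {g g' : ℝ → ℝ} (hab : a ≤ b) (hr : 0 < r)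
    (hg : ∀ x ∈ Icc a b, HasDerivAt g (g' x) x) (hg' : ContinuousOn g' (Icc a b))
    (hmono : ∀ x ∈ Icc a b, 0 ≤ g' x) (hlower : ∀ x ∈ Icc a b, r ≤ |g x|) :
    ∫ x in a..b, ‖-g' x / g x ^ 2‖ ≤ 2 / r := by
  have hne : ∀ x ∈ Icc a b, g x ≠ 0 := fun x hx ↦ abs_pos.1 (hr.trans_le (hlower x hx))
  have hcont : ContinuousOn (fun x ↦ -g' x / g x ^ 2) (Icc a b) :=
    hg'.neg.div ((HasDerivAt.continuousOn hg).pow 2) fun x hx ↦ pow_ne_zero 2 (hne x hx)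
  have hinv : ∀ x ∈ Icc a b, |(g x)⁻¹| ≤ 1 / r := fun x hx ↦ by
    rw [abs_inv, ← one_div]
    exact one_div_le_one_div_of_le hr (hlower x hx)
  rw [← uIcc_of_le hab] at hg hmono hne
  have hnorm : ∀ x ∈ uIcc a b, ‖-g' x / g x ^ 2‖ = -(-g' x / g x ^ 2) := fun x hx ↦
    Real.norm_of_nonpos (div_nonpos_of_nonpos_of_nonneg (neg_nonpos.2 (hmono x hx)) (sq_nonneg _))
  calc ∫ x in a..b, ‖-g' x / g x ^ 2‖
      = (g a)⁻¹ - (g b)⁻¹ := by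
        rw [intervalIntegral.integral_congr hnorm, intervalIntegral.integral_neg,
          intervalIntegral.integral_eq_sub_of_hasDerivAt
            (fun x hx ↦ (hg x hx).fun_inv (hne x hx)) (hcont.intervalIntegrable_of_Icc hab),
          neg_sub]
    _ ≤ 1 / r + 1 / r := by
        linarith [abs_le.1 (hinv a (left_mem_Icc.2 hab)), abs_le.1 (hinv b (right_mem_Icc.2 hab))]
    _ = 2 / r := by ring

theorem norm_integral_cexp_I_mul_le_sub (ψ : ℝ → ℝ) (hab : a ≤ b) :
    ‖∫ x in a..b, cexp (I * ψ x)‖ ≤ b - a := by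
  have := intervalIntegral.norm_integral_le_of_norm_le_const (a := a) (b := b)
    (fun x _ ↦ (norm_exp_I_mul_ofReal (ψ x)).le)
  rwa [one_mul, abs_of_nonneg (sub_nonneg.2 hab)] at this

theorem norm_integral_cexp_I_mul_neg (ψ : ℝ → ℝ) (a b : ℝ) :
    ‖∫ x in a..b, cexp (I * ↑(-ψ x))‖ = ‖∫ x in a..b, cexp (I * ψ x)‖ := by
  have conj_exp (x : ℝ) : cexp (I * ↑(-ψ x)) = (starRingEnd ℂ) (cexp (I * ψ x)) := by
    simp [← exp_conj]
  simp_rw [conj_exp, intervalIntegral.intervalIntegral_eq_integral_uIoc, integral_conj, norm_smul,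
    RCLike.norm_conj]

theorem norm_integral_deriv_mul_cexp_I_mul_le_two (hab : a ≤ b)
    (hψ : ∀ x ∈ Icc a b, HasDerivAt ψ (ψ' x) x) (hψ' : ContinuousOn ψ' (Icc a b)) :
    ‖∫ x in a..b, ψ' x * cexp (I * ψ x)‖ ≤ 2 := by
  have hψc : ContinuousOn ψ (Icc a b) := HasDerivAt.continuousOn hψ
  have hcont : ContinuousOn (fun x ↦ ψ' x * cexp (I * ψ x)) (Icc a b) := by fun_prop
  have hprim : ∀ x ∈ uIcc a b,
      HasDerivAt (fun y ↦ -I * cexp (I * ψ y)) (ψ' x * cexp (I * ψ x)) x := fun x hx ↦ by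
    rw [uIcc_of_le hab] at hx
    refine (((hψ x hx).ofReal_comp.const_mul I).cexp.const_mul (-I)).congr_deriv ?_
    linear_combination (-(ψ' x * cexp (I * ψ x))) * I_sq
  rw [intervalIntegral.integral_eq_sub_of_hasDerivAt hprim (hcont.intervalIntegrable_of_Icc hab)]
  refine (norm_sub_le _ _).trans_eq ?_
  simp only [norm_mul, norm_neg, norm_I, norm_exp_I_mul_ofReal]
  norm_num

/-- **Van der Corput's lemma**, first-derivative test. -/
theorem norm_integral_cexp_I_mul_le_of_le_abs_deriv (hab : a ≤ b) (hr : 0 < r)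
    (hψ : ∀ x ∈ Icc a b, HasDerivAt ψ (ψ' x) x) (hψ' : ∀ x ∈ Icc a b, HasDerivAt ψ' (ψ'' x) x)
    (hψ'' : ContinuousOn ψ'' (Icc a b)) (hconvex : ∀ x ∈ Icc a b, 0 ≤ ψ'' x)
    (hlower : ∀ x ∈ Icc a b, r ≤ |ψ' x|) :
    ‖∫ x in a..b, cexp (I * ψ x)‖ ≤ 6 / r := by
  have hne : ∀ x ∈ Icc a b, ψ' x ≠ 0 := fun x hx ↦ abs_pos.1 (hr.trans_le (hlower x hx))
  have hψc : ContinuousOn ψ (Icc a b) := HasDerivAt.continuousOn hψ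
  have hψ'c : ContinuousOn ψ' (Icc a b) := HasDerivAt.continuousOn hψ'
  have partial_le : ∀ x ∈ Icc a b, ‖∫ y in a..x, ψ' y * cexp (I * ψ y)‖ ≤ 2 := fun x hx ↦
    norm_integral_deriv_mul_cexp_I_mul_le_two hx.1
      (fun y hy ↦ hψ y (Icc_subset_Icc_right hx.2 hy)) (hψ'c.mono (Icc_subset_Icc_right hx.2))
  calc ‖∫ x in a..b, cexp (I * ψ x)‖
      = ‖∫ x in a..b, (ψ' x * cexp (I * ψ x)) • (((ψ' x)⁻¹ : ℝ) : ℂ)‖ := by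
        congr 1
        refine intervalIntegral.integral_congr fun x hx ↦ ?_
        rw [uIcc_of_le hab] at hx
        have : (ψ' x : ℂ) ≠ 0 := ofReal_ne_zero.2 (hne x hx)
        simp only [smul_eq_mul, ofReal_inv]
        field_simp
    _ ≤ 2 * (‖(((ψ' b)⁻¹ : ℝ) : ℂ)‖ + ∫ x in a..b, ‖((-ψ'' x / ψ' x ^ 2 : ℝ) : ℂ)‖) :=
        norm_integral_smul_le_of_norm_integral_le hab (by fun_prop)
          (fun x hx ↦ ((hψ' x hx).fun_inv (hne x hx)).ofReal_comp)
          (continuous_ofReal.comp_continuousOn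
            (hψ''.neg.div (hψ'c.pow 2) fun x hx ↦ pow_ne_zero 2 (hne x hx)))
          partial_le
    _ ≤ 2 * (1 / r + 2 / r) := by
        simp only [norm_real]
        gcongr
        · rw [norm_inv, ← one_div]
          exact one_div_le_one_div_of_le hr (hlower b (right_mem_Icc.2 hab))
        · exact integral_norm_deriv_inv_le hab hr hψ' hψ'' hconvex hlower
    _ = 6 / r := by ring

theorem exists_mul_abs_sub_le_abs {g : ℝ → ℝ} (hab : a ≤ b)
    (hg : ContinuousOn g (Icc a b))
    (hgrowth : ∀ x ∈ Icc a b, ∀ y ∈ Icc a b, x ≤ y → r * (y - x) ≤ g y - g x) :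
    ∃ c ∈ Icc a b, ∀ x ∈ Icc a b, r * |x - c| ≤ |g x| := by
  have ha := left_mem_Icc.2 hab
  have hb := right_mem_Icc.2 hab
  rcases le_total 0 (g a) with hga | hga
  · refine ⟨a, ha, fun x hx ↦ ?_⟩
    rw [abs_of_nonneg (sub_nonneg.2 hx.1)]
    linarith [hgrowth a ha x hx hx.1, le_abs_self (g x)]
  rcases le_total (g b) 0 with hgb | hgb
  · refine ⟨b, hb, fun x hx ↦ ?_⟩
    rw [abs_sub_comm, abs_of_nonneg (sub_nonneg.2 hx.2)]
    linarith [hgrowth x hx b hb hx.2, neg_le_abs (g x)]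
  obtain ⟨c, hc, hgc⟩ := intermediate_value_Icc hab hg ⟨hga, hgb⟩
  refine ⟨c, hc, fun x hx ↦ ?_⟩
  rcases le_total x c with hxc | hcx
  · rw [abs_sub_comm, abs_of_nonneg (sub_nonneg.2 hxc)]
    linarith [hgrowth x hx c hc hxc, neg_le_abs (g x)]
  · rw [abs_of_nonneg (sub_nonneg.2 hcx)]
    linarith [hgrowth c hc x hx hcx, le_abs_self (g x)]

/-- **Van der Corput's lemma**, second-derivative test. -/
theorem norm_integral_cexp_I_mul_le_of_le_deriv_deriv (hab : a ≤ b) (hr : 0 < r)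
    (hψ : ∀ x ∈ Icc a b, HasDerivAt ψ (ψ' x) x) (hψ' : ∀ x ∈ Icc a b, HasDerivAt ψ' (ψ'' x) x)
    (hψ'' : ContinuousOn ψ'' (Icc a b)) (hlower : ∀ x ∈ Icc a b, r ≤ ψ'' x) :
    ‖∫ x in a..b, cexp (I * ψ x)‖ ≤ 14 / √r := by
  obtain ⟨c, hc, hψ'_lower⟩ : ∃ c ∈ Icc a b, ∀ x ∈ Icc a b, r * |x - c| ≤ |ψ' x| := by
    refine exists_mul_abs_sub_le_abs hab (HasDerivAt.continuousOn hψ')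
      ((convex_Icc a b).mul_sub_le_image_sub_of_le_deriv (HasDerivAt.continuousOn hψ')
        (fun x hx ↦ ?_) fun x hx ↦ ?_)
    · exact (hψ' x (interior_subset hx)).differentiableAt.differentiableWithinAt
    · rw [(hψ' x (interior_subset hx)).deriv]
      exact hlower x (interior_subset hx)
  have hs : 0 < √r := Real.sqrt_pos.2 hr
  have hψc : ContinuousOn ψ (Icc a b) := HasDerivAt.continuousOn hψ
  have away : ∀ u v, a ≤ u → u ≤ v → v ≤ b → (∀ x ∈ Icc u v, 1 / √r ≤ |x - c|) →
      ‖∫ x in u..v, cexp (I * ψ x)‖ ≤ 6 / √r := by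
    intro u v hu huv hv hdist
    have hsub : Icc u v ⊆ Icc a b := Icc_subset_Icc hu hv
    refine norm_integral_cexp_I_mul_le_of_le_abs_deriv huv hs (fun x hx ↦ hψ x (hsub hx))
      (fun x hx ↦ hψ' x (hsub hx)) (hψ''.mono hsub)
      (fun x hx ↦ hr.le.trans (hlower x (hsub hx))) fun x hx ↦ ?_
    calc √r = r * (1 / √r) := by rw [mul_one_div, Real.div_sqrt]
      _ ≤ r * |x - c| := by gcongr; exact hdist x hx
      _ ≤ |ψ' x| := hψ'_lower x (hsub hx)
  calc ‖∫ x in a..b, cexp (I * ψ x)‖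
      ≤ 2 * (6 / √r) + 2 * (1 / √r) * 1 :=
        norm_integral_le_of_norm_integral_le_away (by fun_prop) hc (by positivity) (by positivity)
          (fun x _ ↦ (norm_exp_I_mul_ofReal (ψ x)).le) away
    _ = 14 / √r := by ring

end VanDerCorput

section FractionalPhase

variable {m a b A B : ℝ}

/-- The phase `θ_k` of the propagator on the positive half-line after rescaling frequencies to
size one: `A = 2 ^ k * x` and `B = 2 ^ (m * k) * t`. -/
noncomputable def fractionalPhase (m A B y : ℝ) : ℝ := A * y + B * y ^ m

/-- A ratio `|A| / |B|` from which on the linear part of `fractionalPhase m A B` contributes at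
least half of its derivative on `[a, ∞)`, so that there is no stationary point there. -/
noncomputable def dominanceRatio (m a : ℝ) : ℝ := 2 * (m * a ^ (m - 1))

theorem dominanceRatio_nonneg (hm : 0 ≤ m) (ha : 0 ≤ a) : 0 ≤ dominanceRatio m a := by
  unfold dominanceRatio
  positivity

theorem fractionalPhase_neg (m A B y : ℝ) :
    fractionalPhase m (-A) (-B) y = -fractionalPhase m A B y := by
  unfold fractionalPhase
  ring

theorem norm_integral_cexp_fractionalPhase_neg (m A B a b : ℝ) :
    ‖∫ y in a..b, cexp (I * fractionalPhase m (-A) (-B) y)‖ =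
      ‖∫ y in a..b, cexp (I * fractionalPhase m A B y)‖ := by
  simp_rw [fractionalPhase_neg, norm_integral_cexp_I_mul_neg]

theorem hasDerivAt_fractionalPhase (m A B : ℝ) {y : ℝ} (hy : y ≠ 0) :
    HasDerivAt (fractionalPhase m A B) (A + B * (m * y ^ (m - 1))) y := by
  simpa using! ((hasDerivAt_id y).const_mul A).add
    ((Real.hasDerivAt_rpow_const (p := m) (.inl hy)).const_mul B)

theorem hasDerivAt_deriv_fractionalPhase (m A B : ℝ) {y : ℝ} (hy : y ≠ 0) :
    HasDerivAt (fun z ↦ A + B * (m * z ^ (m - 1))) (-B * (m * (1 - m) * y ^ (m - 2))) y := by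
  refine ((((Real.hasDerivAt_rpow_const (p := m - 1) (.inl hy)).const_mul m).const_mul
    B).const_add A).congr_deriv ?_
  rw [sub_sub, one_add_one_eq_two]
  ring

theorem continuousOn_deriv_deriv_fractionalPhase (m B b : ℝ) (ha : 0 < a) :
    ContinuousOn (fun y ↦ -B * (m * (1 - m) * y ^ (m - 2))) (Icc a b) :=
  continuousOn_const.mul <| continuousOn_const.mul <|
    continuousOn_id.rpow_const fun _ hy ↦ .inl (ha.trans_le hy.1).ne'

theorem half_abs_le_abs_deriv_fractionalPhase (hm0 : 0 ≤ m) (hm1 : m ≤ 1) (ha : 0 < a)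
    (hdom : dominanceRatio m a * |B| ≤ |A|) {y : ℝ} (hy : a ≤ y) :
    |A| / 2 ≤ |A + B * (m * y ^ (m - 1))| := by
  have hpow : y ^ (m - 1) ≤ a ^ (m - 1) :=
    Real.rpow_le_rpow_of_nonpos ha hy (sub_nonpos.2 hm1)
  have hsmall : |B * (m * y ^ (m - 1))| ≤ |A| / 2 := by
    have hy0 : 0 ≤ y := ha.le.trans hy
    calc |B * (m * y ^ (m - 1))| = |B| * (m * y ^ (m - 1)) := by
          rw [abs_mul, abs_of_nonneg (by positivity : 0 ≤ m * y ^ (m - 1))]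
      _ ≤ |B| * (m * a ^ (m - 1)) := by gcongr
      _ = dominanceRatio m a * |B| / 2 := by rw [dominanceRatio]; ring
      _ ≤ |A| / 2 := by gcongr
  linarith [abs_sub_abs_le_abs_add A (B * (m * y ^ (m - 1)))]

theorem norm_integral_cexp_fractionalPhase_le_of_dominant (hm0 : 0 ≤ m) (hm1 : m ≤ 1) (ha : 0 < a)
    (hab : a ≤ b) (hdom : dominanceRatio m a * |B| ≤ |A|) :
    ‖∫ y in a..b, cexp (I * fractionalPhase m A B y)‖ ≤ (b - a + 12) / (1 + |A|) := by
  wlog hB : B ≤ 0 generalizing A B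
  · rw [← norm_integral_cexp_fractionalPhase_neg, ← abs_neg A]
    exact this (by simpa only [abs_neg] using hdom) (neg_nonpos.2 (not_le.1 hB).le)
  have hne : ∀ y ∈ Icc a b, y ≠ 0 := fun y hy ↦ (ha.trans_le hy.1).ne'
  have decay : ‖∫ y in a..b, cexp (I * fractionalPhase m A B y)‖ * |A| ≤ 12 := by
    rcases eq_or_ne A 0 with rfl | hA
    · norm_num
    rw [← le_div_iff₀ (abs_pos.2 hA)]
    calc _ ≤ 6 / (|A| / 2) :=
          norm_integral_cexp_I_mul_le_of_le_abs_deriv hab (half_pos (abs_pos.2 hA))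
            (fun y hy ↦ hasDerivAt_fractionalPhase m A B (hne y hy))
            (fun y hy ↦ hasDerivAt_deriv_fractionalPhase m A B (hne y hy))
            (continuousOn_deriv_deriv_fractionalPhase m B b ha)
            (fun y hy ↦ mul_nonneg (neg_nonneg.2 hB) (mul_nonneg
              (mul_nonneg hm0 (sub_nonneg.2 hm1)) (Real.rpow_nonneg (ha.le.trans hy.1) _)))
            (fun y hy ↦ half_abs_le_abs_deriv_fractionalPhase hm0 hm1 ha hdom hy.1)
      _ = 12 / |A| := by ring
  rw [le_div_iff₀ (by positivity), mul_add, mul_one]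
  exact add_le_add (norm_integral_cexp_I_mul_le_sub _ hab) decay

theorem norm_integral_cexp_fractionalPhase_le_of_ne_zero (hm0 : 0 < m) (hm1 : m < 1) (ha : 0 < a)
    (hab : a ≤ b) (hB : B ≠ 0) :
    ‖∫ y in a..b, cexp (I * fractionalPhase m A B y)‖ ≤
      14 / √(m * (1 - m) * b ^ (m - 2) * |B|) := by
  wlog hB0 : B ≤ 0 generalizing A B
  · rw [← norm_integral_cexp_fractionalPhase_neg, ← abs_neg B]
    exact this (neg_ne_zero.2 hB) (neg_nonpos.2 (not_le.1 hB0).le)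
  have hne : ∀ y ∈ Icc a b, y ≠ 0 := fun y hy ↦ (ha.trans_le hy.1).ne'
  have : 0 < m * (1 - m) := mul_pos hm0 (sub_pos.2 hm1)
  have hb : 0 < b := ha.trans_le hab
  refine norm_integral_cexp_I_mul_le_of_le_deriv_deriv hab (by positivity)
    (fun y hy ↦ hasDerivAt_fractionalPhase m A B (hne y hy))
    (fun y hy ↦ hasDerivAt_deriv_fractionalPhase m A B (hne y hy))
    (continuousOn_deriv_deriv_fractionalPhase m B b ha) fun y hy ↦ ?_
  have hpow : b ^ (m - 2) ≤ y ^ (m - 2) :=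
    Real.rpow_le_rpow_of_nonpos (ha.trans_le hy.1) hy.2 (by linarith)
  rw [abs_of_nonpos hB0, mul_comm]
  have : 0 ≤ -B := neg_nonneg.2 hB0
  gcongr

/-- In the application `S = 2 ^ k * |x| ^ (1 / (1 - m))`, which is bounded in the stationary
regime. -/
theorem norm_integral_cexp_fractionalPhase_le (hm0 : 0 < m) (hm1 : m < 1) (ha : 0 < a)
    (hab : a ≤ b) {S S₀ : ℝ} (hA : A ≠ 0) (hS : 0 ≤ S) (hSA : S ≤ |A|)
    (hS₀ : |A| < dominanceRatio m a * |B| → S ≤ S₀) :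
    ‖∫ y in a..b, cexp (I * fractionalPhase m A B y)‖ ≤
      (b - a + 12 + 14 * √(dominanceRatio m a * (1 + S₀) / (m * (1 - m) * b ^ (m - 2)))) /
        √(|A| * (1 + S)) := by
  have hA0 : 0 < |A| := abs_pos.2 hA
  have hcoef : 0 < m * (1 - m) := mul_pos hm0 (sub_pos.2 hm1)
  have hb : 0 < b := ha.trans_le hab
  have : 0 ≤ b - a := sub_nonneg.2 hab
  set T := dominanceRatio m a
  set κ := m * (1 - m) * b ^ (m - 2)
  have hκ : 0 < κ := by positivity
  rw [add_div]
  rcases le_or_gt (T * |B|) |A| with hdom | hstat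
  · refine le_add_of_le_of_nonneg ?_ (by positivity)
    calc _ ≤ (b - a + 12) / (1 + |A|) :=
          norm_integral_cexp_fractionalPhase_le_of_dominant hm0.le hm1.le ha hab hdom
      _ ≤ (b - a + 12) / √(|A| * (1 + S)) := by
          gcongr
          rw [Real.sqrt_le_left (by positivity)]
          nlinarith
  · refine le_add_of_nonneg_of_le (by positivity) ?_
    have hB : B ≠ 0 := by
      rintro rfl
      simp only [abs_zero, mul_zero] at hstat
      exact hA0.not_gt hstat
    have : 0 < |B| := abs_pos.2 hB
    have hscale : √(|A| * (1 + S)) ≤ √(T * (1 + S₀) / κ) * √(κ * |B|) := by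
      rw [← Real.sqrt_mul' _ (by positivity)]
      refine Real.sqrt_le_sqrt ?_
      calc |A| * (1 + S) ≤ T * |B| * (1 + S₀) := by
            gcongr
            · exact (hA0.trans hstat).le
            · exact hS₀ hstat
        _ = T * (1 + S₀) / κ * (κ * |B|) := by field_simp
    calc _ ≤ 14 / √(κ * |B|) :=
          norm_integral_cexp_fractionalPhase_le_of_ne_zero hm0 hm1 ha hab hB
      _ ≤ 14 * √(T * (1 + S₀) / κ) / √(|A| * (1 + S)) := by
          rw [div_le_div_iff₀ (by positivity) (by positivity), mul_assoc]
          gcongr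

theorem exists_norm_integral_cexp_fractionalPhase_smul_le {E : Type*} [NormedAddCommGroup E]
    [NormedSpace ℂ E] [CompleteSpace E] {φ : ℝ → E} {S₀ : ℝ} (hm0 : 0 < m) (hm1 : m < 1)
    (ha : 0 < a) (hab : a ≤ b) (hφ : ContDiff ℝ 1 φ) (hS₀ : 0 ≤ S₀) :
    ∃ K, 0 ≤ K ∧ ∀ A B S : ℝ, A ≠ 0 → 0 ≤ S → S ≤ |A| →
      (|A| < dominanceRatio m a * |B| → S ≤ S₀) →
      ‖∫ y in a..b, cexp (I * fractionalPhase m A B y) • φ y‖ ≤ K / √(|A| * (1 + S)) := by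
  have : 0 < m * (1 - m) := mul_pos hm0 (sub_pos.2 hm1)
  have hb : 0 < b := ha.trans_le hab
  have : 0 ≤ b - a := sub_nonneg.2 hab
  have hT : 0 ≤ dominanceRatio m a := dominanceRatio_nonneg hm0.le ha.le
  set K₀ := b - a + 12 + 14 * √(dominanceRatio m a * (1 + S₀) / (m * (1 - m) * b ^ (m - 2)))
  have hvar : 0 ≤ ‖φ b‖ + ∫ y in a..b, ‖deriv φ y‖ :=
    add_nonneg (norm_nonneg _)
      (intervalIntegral.integral_nonneg_of_forall hab fun _ ↦ norm_nonneg _)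
  refine ⟨K₀ * (‖φ b‖ + ∫ y in a..b, ‖deriv φ y‖), by positivity, fun A B S hA hS hSA hstat ↦ ?_⟩
  have partial_le : ∀ z ∈ Icc a b,
      ‖∫ y in a..z, cexp (I * fractionalPhase m A B y)‖ ≤ K₀ / √(|A| * (1 + S)) := by
    intro z ⟨haz, hzb⟩
    refine (norm_integral_cexp_fractionalPhase_le hm0 hm1 ha haz hA hS hSA hstat).trans ?_
    have hpow : b ^ (m - 2) ≤ z ^ (m - 2) :=
      Real.rpow_le_rpow_of_nonpos (ha.trans_le haz) hzb (by linarith)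
    dsimp only [K₀]
    gcongr
  have hphase : ContinuousOn (fractionalPhase m A B) (Icc a b) := HasDerivAt.continuousOn
    fun y hy ↦ hasDerivAt_fractionalPhase m A B (ha.trans_le hy.1).ne'
  calc _ ≤ K₀ / √(|A| * (1 + S)) * (‖φ b‖ + ∫ y in a..b, ‖deriv φ y‖) :=
        norm_integral_smul_le_of_norm_integral_le hab (by fun_prop)
          (fun y _ ↦ (hφ.differentiable one_ne_zero y).hasDerivAt)
          (hφ.continuous_deriv le_rfl).continuousOn partial_le
    _ = _ := div_mul_eq_mul_div _ _ _

end FractionalPhase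

section FractionalKernel

variable {m a b N x t : ℝ} {E : Type*} [NormedAddCommGroup E]

theorem integral_eq_setIntegral_Ioi_comp_neg_add [NormedSpace ℝ E] {f : ℝ → E}
    (hf : Integrable f) :
    ∫ y, f y = (∫ y in Ioi 0, f (-y)) + ∫ y in Ioi 0, f y := by
  rw [integral_comp_neg_Ioi, neg_zero,
    intervalIntegral.integral_Iic_add_Ioi hf.integrableOn hf.integrableOn]

theorem setIntegral_Ioi_eq_intervalIntegral [NormedSpace ℝ E] {f : ℝ → E} {c : ℝ} (hca : c < a)
    (hab : a ≤ b) (hf : ∀ y ∈ Ioi c, y ∉ Icc a b → f y = 0) :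
    ∫ y in Ioi c, f y = ∫ y in a..b, f y := by
  rw [intervalIntegral.integral_of_le hab, ← integral_Icc_eq_integral_Ioc]
  exact setIntegral_eq_of_subset_of_forall_sdiff_eq_zero measurableSet_Ioi
    (fun y hy ↦ hca.trans_le hy.1) fun y hy ↦ hf y hy.1 hy.2

variable [NormedSpace ℂ E] {φ : ℝ → E}

/-- The kernel of the fractional Schrödinger propagator `exp (i t (-Δ) ^ (m / 2))` localized by `φ`
to frequencies of size `N`, in dimension one and up to the normalization of the Fourier
transform. -/
noncomputable def fractionalKernel (m : ℝ) (φ : ℝ → E) (N x t : ℝ) : E :=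
  ∫ ξ : ℝ, cexp (I * ((x * ξ + t * |ξ| ^ m : ℝ) : ℂ)) • φ (N⁻¹ * |ξ|)

theorem fractionalKernel_eq_smul (m : ℝ) (φ : ℝ → E) (hN : 0 < N) (x t : ℝ) :
    fractionalKernel m φ N x t = N • fractionalKernel m φ 1 (x * N) (t * N ^ m) := by
  have rescaled (y : ℝ) : cexp (I * ((x * N * y + t * N ^ m * |y| ^ m : ℝ) : ℂ)) • φ (1⁻¹ * |y|) =
      cexp (I * ((x * (N * y) + t * |N * y| ^ m : ℝ) : ℂ)) • φ (N⁻¹ * |N * y|) := by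
    rw [abs_mul, abs_of_pos hN, Real.mul_rpow hN.le (abs_nonneg y), inv_mul_cancel_left₀ hN.ne',
      inv_one, one_mul, mul_assoc, mul_assoc]
  unfold fractionalKernel
  simp_rw [rescaled]
  rw [Measure.integral_comp_mul_left (fun ξ ↦ cexp (I * ((x * ξ + t * |ξ| ^ m : ℝ) : ℂ)) •
    φ (N⁻¹ * |ξ|)), abs_of_pos (inv_pos.2 hN), smul_inv_smul₀ hN.ne']

theorem fractionalKernel_one_eq_integral_add_integral (hm : 0 ≤ m) (ha : 0 < a) (hab : a ≤ b)
    (hφ : Continuous φ) (hsupp : Function.support φ ⊆ Icc a b) (A B : ℝ) :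
    fractionalKernel m φ 1 A B =
      (∫ y in a..b, cexp (I * fractionalPhase m (-A) B y) • φ y) +
        ∫ y in a..b, cexp (I * fractionalPhase m A B y) • φ y := by
  set f : ℝ → E := fun y ↦ cexp (I * ((A * y + B * |y| ^ m : ℝ) : ℂ)) • φ (1⁻¹ * |y|)
  have hzero : ∀ y, |y| ∉ Icc a b → f y = 0 := fun y hy ↦ by
    have : φ |y| = 0 := Function.notMem_support.1 fun h ↦ hy (hsupp h)
    simp only [f, inv_one, one_mul, this, smul_zero]
  have hint : Integrable f := by
    have : Continuous fun y : ℝ ↦ |y| ^ m := continuous_abs.rpow_const fun _ ↦ .inr hm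
    refine Continuous.integrable_of_hasCompactSupport (by fun_prop)
      (HasCompactSupport.intro (isCompact_Icc (a := -b) (b := b)) fun y hy ↦ hzero y fun h ↦ hy ?_)
    exact abs_le.1 h.2
  unfold fractionalKernel
  rw [integral_eq_setIntegral_Ioi_comp_neg_add hint,
    setIntegral_Ioi_eq_intervalIntegral ha hab fun y hy hy' ↦
      hzero (-y) (by rwa [abs_neg, abs_of_pos hy]),
    setIntegral_Ioi_eq_intervalIntegral ha hab fun y hy hy' ↦ hzero y (by rwa [abs_of_pos hy])]
  congr 1 <;> refine intervalIntegral.integral_congr fun y hy ↦ ?_ <;>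
    rw [uIcc_of_le hab] at hy <;>
    simp only [f, fractionalPhase, abs_neg, abs_of_pos (ha.trans_le hy.1), inv_one, one_mul,
      mul_neg, neg_mul]

end FractionalKernel

section Scaling

variable {m N x t T : ℝ}

theorem mul_abs_rpow_le_abs_mul (hm0 : 0 ≤ m) (hm1 : m < 1) (hN : 0 ≤ N) (hx : |x| ≤ 1) :
    N * |x| ^ (1 / (1 - m)) ≤ |x * N| := by
  have : |x| ^ (1 / (1 - m)) ≤ |x| := Real.rpow_le_self_of_le_one (abs_nonneg x) hx <| by
    rw [le_div_iff₀ (sub_pos.2 hm1)]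
    linarith
  rw [abs_mul, abs_of_nonneg hN, mul_comm |x|]
  gcongr

theorem mul_abs_rpow_le_rpow (hm1 : m < 1) (hN : 0 < N) (hT : 0 ≤ T) (ht : |t| ≤ 1)
    (hstat : |x * N| ≤ T * |t * N ^ m|) :
    N * |x| ^ (1 / (1 - m)) ≤ T ^ (1 / (1 - m)) := by
  have h1m : 0 < 1 - m := sub_pos.2 hm1
  have hNm : 0 < N ^ m := Real.rpow_pos_of_pos hN m
  have hbase : N ^ (1 - m) * |x| ≤ T := by
    refine le_of_mul_le_mul_right ?_ hNm
    calc N ^ (1 - m) * |x| * N ^ m = |x * N| := by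
          rw [mul_right_comm, ← Real.rpow_add hN, sub_add_cancel, Real.rpow_one, abs_mul,
            abs_of_pos hN, mul_comm]
      _ ≤ T * (|t| * N ^ m) := by rwa [abs_mul t, abs_of_pos hNm] at hstat
      _ ≤ T * (1 * N ^ m) := by gcongr
      _ = T * N ^ m := by rw [one_mul]
  calc N * |x| ^ (1 / (1 - m)) = (N ^ (1 - m) * |x|) ^ (1 / (1 - m)) := by
        rw [Real.mul_rpow (by positivity) (abs_nonneg x), ← Real.rpow_mul hN.le,
          mul_one_div_cancel h1m.ne', Real.rpow_one]
    _ ≤ T ^ (1 / (1 - m)) := by gcongr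

theorem mul_div_sqrt_abs_mul_eq (hN : 0 < N) (K : ℝ) {P : ℝ} (hP : 0 ≤ P) :
    N * (K / √(|x * N| * P)) =
      K * N ^ (1 / 2 : ℝ) * |x| ^ (-(1 : ℝ) / 2) * P ^ (-(1 : ℝ) / 2) := by
  have rpow_neg_half {y : ℝ} (hy : 0 ≤ y) : y ^ (-(1 : ℝ) / 2) = (√y)⁻¹ := by
    rw [neg_div, Real.rpow_neg hy, Real.sqrt_eq_rpow]
  rw [rpow_neg_half (abs_nonneg x), rpow_neg_half hP, ← Real.sqrt_eq_rpow, abs_mul,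
    abs_of_pos hN, Real.sqrt_mul' _ hP, Real.sqrt_mul (abs_nonneg x)]
  calc N * (K / (√|x| * √N * √P)) = N / √N * K * (√|x|)⁻¹ * (√P)⁻¹ := by
        simp only [div_eq_mul_inv, mul_inv]
        ring
    _ = K * √N * (√|x|)⁻¹ * (√P)⁻¹ := by rw [Real.div_sqrt, mul_comm √N]

end Scaling

theorem statement4_general {E : Type*} [NormedAddCommGroup E] [NormedSpace ℂ E] [CompleteSpace E]
    {m a b : ℝ} (hm0 : 0 < m) (hm1 : m < 1) (ha : 0 < a) (hab : a ≤ b) {φ : ℝ → E}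
    (hφ : ContDiff ℝ 1 φ) (hsupp : Function.support φ ⊆ Icc a b) :
    ∃ C : ℝ, 0 < C ∧ ∀ N x t : ℝ, 0 < N → |x| ≤ 1 → x ≠ 0 → |t| ≤ 1 →
      ‖fractionalKernel m φ N x t‖ ≤
        C * N ^ (1 / 2 : ℝ) * |x| ^ (-(1 : ℝ) / 2) *
          (1 + N * |x| ^ (1 / (1 - m))) ^ (-(1 : ℝ) / 2) := by
  have hT : 0 ≤ dominanceRatio m a := dominanceRatio_nonneg hm0.le ha.le
  obtain ⟨K, hK, half_line_le⟩ := exists_norm_integral_cexp_fractionalPhase_smul_le hm0 hm1 ha hab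
    hφ (Real.rpow_nonneg hT (1 / (1 - m)))
  refine ⟨2 * K + 1, by positivity, fun N x t hN hx hx0 ht ↦ ?_⟩
  set S := N * |x| ^ (1 / (1 - m))
  have hS : 0 ≤ S := by positivity
  have hA : x * N ≠ 0 := mul_ne_zero hx0 hN.ne'
  have hSA : S ≤ |x * N| := mul_abs_rpow_le_abs_mul hm0.le hm1 hN.le hx
  have hstat : |x * N| < dominanceRatio m a * |t * N ^ m| →
      S ≤ dominanceRatio m a ^ (1 / (1 - m)) :=
    fun h ↦ mul_abs_rpow_le_rpow hm1 hN hT ht h.le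
  have reflected_le := half_line_le (-(x * N)) (t * N ^ m) S (neg_ne_zero.2 hA) hS
  rw [abs_neg] at reflected_le
  rw [← mul_div_sqrt_abs_mul_eq hN _ (by positivity : 0 ≤ 1 + S), fractionalKernel_eq_smul m φ hN,
    fractionalKernel_one_eq_integral_add_integral hm0.le ha hab hφ.continuous hsupp, norm_smul,
    Real.norm_of_nonneg hN.le]
  gcongr
  calc _ ≤ K / √(|x * N| * (1 + S)) + K / √(|x * N| * (1 + S)) :=
        norm_add_le_of_le (reflected_le hSA hstat) (half_line_le _ _ S hA hS hSA hstat)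
    _ = 2 * K / √(|x * N| * (1 + S)) := by ring
    _ ≤ (2 * K + 1) / √(|x * N| * (1 + S)) := by gcongr; exact le_add_of_nonneg_right zero_le_one

/-- For `d = 1`, `m ∈ (0,1)`, and a bump `φ` supported in `(1/2,2)`,
the refined local-in-time dispersive estimate
`sup_{t ∈ (-1,1)} |∫ e^{i(xξ + t|ξ|^m)} φ(2^{-k}|ξ|) dξ|
  ≲ 2^{k/2} |x|^{-1/2} (1 + 2^k |x|^{1/(1-m)})^{-1/2}`
holds for every `k ∈ ℤ` and every `x` with `0 < |x| < 1`. -/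
theorem statement4 (m : ℝ) (hm0 : 0 < m) (hm1 : m < 1)
    (φ : ℝ → ℝ) (hφ : ContDiff ℝ (⊤ : ℕ∞) φ) (hφsupp : Function.support φ ⊆ Set.Ioo (1/2 : ℝ) 2) :
    ∃ C : ℝ, 0 < C ∧
      ∀ (k : ℤ) (x : ℝ), |x| < 1 → x ≠ 0 →
        ∀ t : ℝ, t ∈ Set.Ioo (-1 : ℝ) 1 →
          ‖∫ ξ : ℝ, Complex.exp (Complex.I * ((x * ξ + t * |ξ| ^ m : ℝ) : ℂ)) *
              (φ ((2 : ℝ) ^ (-k) * |ξ|) : ℂ)‖ ≤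
            C * (2 : ℝ) ^ ((k : ℝ) / 2) * |x| ^ (-(1 : ℝ) / 2) *
              (1 + (2 : ℝ) ^ (k : ℤ) * |x| ^ ((1 : ℝ) / (1 - m))) ^ (-(1 : ℝ) / 2) := by
  obtain ⟨C, hC, bound⟩ := statement4_general (φ := fun y ↦ (φ y : ℂ)) hm0 hm1 one_half_pos
    (by norm_num : (1 / 2 : ℝ) ≤ 2) (ofRealCLM.contDiff.comp (hφ.of_le (by simp)))
    fun y hy ↦ Ioo_subset_Icc_self (hφsupp (ofReal_ne_zero.1 hy))
  refine ⟨C, hC, fun k x hx hx0 t ht ↦ ?_⟩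
  have hsqrt : (2 : ℝ) ^ ((k : ℝ) / 2) = ((2 : ℝ) ^ k) ^ (1 / 2 : ℝ) := by
    rw [← Real.rpow_intCast, ← Real.rpow_mul zero_le_two, mul_one_div]
  rw [zpow_neg, hsqrt]
  exact bound (2 ^ k) x t (by positivity) hx.le hx0 (abs_lt.2 ht).le
end

section
/- Let $d \ge 1$ and $m \in (1,\infty)$. Let $\varphi \in C_0^\infty$ be supported in $(1/2,2)$ with $\sum_{k \in \mathbb{Z}} \varphi(2^{-k}r) = 1$ for $r > 0$, and set $\varphi_{\le N}(r) = \sum_{k \le N} \varphi(2^{-k} r)$. Then $\sup_{t \in \mathbb{R}} \big| \int_{\mathbb{R}^d} e^{i(x\cdot\xi + t|\xi|^m)} \frac{\varphi_{\le N}(|\xi|)}{|\xi|^{d/2}} \, d\xi \big| \lesssim |x|^{-d/2}$ uniformly in $N \in \mathbb{Z}$ and $x \ne 0$. -/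
open MeasureTheory Set Complex
open scoped ENNReal RealInnerProductSpace

/-!
In polar coordinates the integral becomes an oscillatory integral over `0 < r < ∞` of the amplitude
`r ^ (d / 2 - 1)`, up to a symbol of order `0`, against the Fourier transform of the unit sphere at
`r x`; rescaling reduces to `‖x‖ = 1`. The sphere's Fourier transform solves a Bessel equation, so
multiplied by `r ^ ((d - 1) / 2)` it is for `r ≥ 1` a sum of two half waves `e ^ (± i r)` with
amplitudes of order `0`. This leaves the integrals of `e ^ (i (± r + t r ^ m))` against amplitudes
of order `-1 / 2`. Away from the critical point `ρ` of the phase, where `|t| ρ ^ (m - 1)` is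
comparable to `1`, they are bounded by the first derivative test. On the window `|r - ρ| ≲ √ρ` the
amplitude has size `ρ ^ (-1 / 2)`, so there the trivial estimate suffices. The part `r ≤ 1` is
bounded by size, since `r ^ (d / 2 - 1)` is integrable at `0`. The bound is uniform in `N` because
the dyadic sum is a symbol of order `0` uniformly in `N`.
-/

/-- `f` is a symbol of order `σ` on `s` with constant `A`: the bounds `‖f⁽ʲ⁾ r‖ ≤ A r ^ (σ - j)` of
the classical symbol classes, asked only for `j = 0, 1`. -/
structure IsSymbolOn (f : ℝ → ℂ) (σ A : ℝ) (s : Set ℝ) : Prop where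
  differentiableAt : ∀ r ∈ s, DifferentiableAt ℝ f r
  continuousOn_deriv : ContinuousOn (deriv f) s
  norm_le : ∀ r ∈ s, ‖f r‖ ≤ A * r ^ σ
  norm_deriv_le : ∀ r ∈ s, ‖deriv f r‖ ≤ A * r ^ (σ - 1)

namespace IsSymbolOn

variable {f g : ℝ → ℂ} {σ τ A B c : ℝ} {s t : Set ℝ}

theorem of_hasDerivAt {f' : ℝ → ℂ} (hf : ∀ r ∈ s, HasDerivAt f (f' r) r) (hf' : ContinuousOn f' s)
    (hfA : ∀ r ∈ s, ‖f r‖ ≤ A * r ^ σ) (hf'A : ∀ r ∈ s, ‖f' r‖ ≤ A * r ^ (σ - 1)) :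
    IsSymbolOn f σ A s where
  differentiableAt r hr := (hf r hr).differentiableAt
  continuousOn_deriv := hf'.congr fun r hr ↦ (hf r hr).deriv
  norm_le := hfA
  norm_deriv_le r hr := (hf r hr).deriv ▸ hf'A r hr

theorem mono (hf : IsSymbolOn f σ A s) (hts : t ⊆ s) : IsSymbolOn f σ A t where
  differentiableAt r hr := hf.differentiableAt r (hts hr)
  continuousOn_deriv := hf.continuousOn_deriv.mono hts
  norm_le r hr := hf.norm_le r (hts hr)
  norm_deriv_le r hr := hf.norm_deriv_le r (hts hr)

theorem continuousOn (hf : IsSymbolOn f σ A s) : ContinuousOn f s := fun r hr ↦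
  (hf.differentiableAt r hr).continuousAt.continuousWithinAt

theorem nonneg {r : ℝ} (hf : IsSymbolOn f σ A s) (hr : r ∈ s) (hr0 : 0 < r) : 0 ≤ A :=
  nonneg_of_mul_nonneg_left ((norm_nonneg _).trans (hf.norm_le r hr)) (Real.rpow_pos_of_pos hr0 σ)

theorem mul (hs : s ⊆ Ioi 0) (hf : IsSymbolOn f σ A s) (hg : IsSymbolOn g τ B s) :
    IsSymbolOn (fun r ↦ f r * g r) (σ + τ) (2 * A * B) s := by
  refine of_hasDerivAt
    (fun r hr ↦ (hf.differentiableAt r hr).hasDerivAt.mul (hg.differentiableAt r hr).hasDerivAt)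
    ((hf.continuousOn_deriv.mul hg.continuousOn).add (hf.continuousOn.mul hg.continuousOn_deriv))
    (fun r hr ↦ ?_) (fun r hr ↦ ?_)
  all_goals
    have hr0 : 0 < r := hs hr
    have hA := hf.nonneg hr hr0
    have hB := hg.nonneg hr hr0
  · calc ‖f r * g r‖ ≤ (A * r ^ σ) * (B * r ^ τ) := by
          rw [norm_mul]; gcongr; exacts [hf.norm_le r hr, hg.norm_le r hr]
      _ = A * B * r ^ (σ + τ) := by rw [Real.rpow_add hr0]; ring
      _ ≤ 2 * A * B * r ^ (σ + τ) := by gcongr; linarith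
  · calc ‖deriv f r * g r + f r * deriv g r‖
        ≤ A * r ^ (σ - 1) * (B * r ^ τ) + A * r ^ σ * (B * r ^ (τ - 1)) := by
          refine (norm_add_le _ _).trans ?_
          rw [norm_mul, norm_mul]
          gcongr
          exacts [hf.norm_deriv_le r hr, hg.norm_le r hr, hf.norm_le r hr, hg.norm_deriv_le r hr]
      _ = 2 * A * B * r ^ (σ + τ - 1) := by
          rw [show σ + τ - 1 = σ - 1 + τ by ring, Real.rpow_add hr0, Real.rpow_sub_one hr0.ne',
            Real.rpow_sub_one hr0.ne']
          ring

theorem rpow (σ : ℝ) : IsSymbolOn (fun r ↦ ((r ^ σ : ℝ) : ℂ)) σ (max 1 |σ|) (Ioi 0) := by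
  refine of_hasDerivAt (f' := fun r ↦ ((σ * r ^ (σ - 1) : ℝ) : ℂ))
    (fun r hr ↦ (Real.hasDerivAt_rpow_const (Or.inl (ne_of_gt hr))).ofReal_comp)
    (continuous_ofReal.comp_continuousOn
      (continuousOn_const.mul (continuousOn_id.rpow_const fun r hr ↦ Or.inl (ne_of_gt hr))))
    (fun r hr ↦ ?_) (fun r hr ↦ ?_)
  all_goals have hr0 : 0 < r := hr
  · rw [norm_real, Real.norm_of_nonneg (by positivity)]
    exact le_mul_of_one_le_left (by positivity) (le_max_left 1 |σ|)
  · rw [norm_real, norm_mul, Real.norm_of_nonneg (Real.rpow_nonneg hr0.le _), Real.norm_eq_abs]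
    gcongr
    exact le_max_right 1 |σ|

theorem comp_mul_left (hc : 0 < c) (hf : IsSymbolOn f σ A (Ioi 0)) :
    IsSymbolOn (fun r ↦ f (c * r)) σ (A * c ^ σ) (Ioi 0) := by
  have hcr : ∀ r ∈ Ioi (0 : ℝ), c * r ∈ Ioi (0 : ℝ) := fun r hr ↦ mul_pos hc hr
  refine of_hasDerivAt (f' := fun r ↦ c • deriv f (c * r))
    (fun r hr ↦ ((hf.differentiableAt _ (hcr r hr)).hasDerivAt.scomp r
      ((hasDerivAt_id' r).const_mul c)).congr_deriv (by rw [mul_one]))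
    ((hf.continuousOn_deriv.comp (continuous_const_mul c).continuousOn hcr).const_smul c)
    (fun r hr ↦ ?_) (fun r hr ↦ ?_)
  · refine (hf.norm_le _ (hcr r hr)).trans_eq ?_
    rw [Real.mul_rpow hc.le (le_of_lt hr)]
    ring
  · rw [norm_smul, Real.norm_of_nonneg hc.le]
    refine (mul_le_mul_of_nonneg_left (hf.norm_deriv_le _ (hcr r hr)) hc.le).trans_eq ?_
    rw [Real.mul_rpow hc.le (le_of_lt hr), Real.rpow_sub_one hc.ne']
    field_simp

end IsSymbolOn

section FirstDerivativeTest

variable {a b δ : ℝ}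

theorem abs_inv_le_one_div {q : ℝ} (hδ : 0 < δ) (hq : δ ≤ |q|) : |q⁻¹| ≤ 1 / δ := by
  rw [abs_inv, ← one_div]
  exact one_div_le_one_div_of_le hδ hq

theorem integral_abs_deriv_div_sq_le {q q' : ℝ → ℝ} (hab : a ≤ b) (hδ : 0 < δ)
    (hq : ∀ r ∈ Icc a b, HasDerivAt q (q' r) r) (hq' : ContinuousOn q' (Icc a b))
    (hsign : (∀ r ∈ Icc a b, 0 ≤ q' r) ∨ ∀ r ∈ Icc a b, q' r ≤ 0)
    (hlow : ∀ r ∈ Icc a b, δ ≤ |q r|) :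
    ∫ r in a..b, |q' r| / q r ^ 2 ≤ 2 / δ := by
  have hne : ∀ r ∈ Icc a b, q r ≠ 0 := fun r hr ↦ abs_pos.1 (hδ.trans_le (hlow r hr))
  have hftc : ∫ r in a..b, -q' r / q r ^ 2 = (q b)⁻¹ - (q a)⁻¹ := by
    refine intervalIntegral.integral_eq_sub_of_hasDerivAt (f := fun r ↦ (q r)⁻¹) ?_
      (ContinuousOn.intervalIntegrable ?_) <;> rw [uIcc_of_le hab]
    · exact fun r hr ↦ (hq r hr).inv (hne r hr)
    · exact hq'.neg.div ((HasDerivAt.continuousOn hq).pow 2) fun r hr ↦ pow_ne_zero 2 (hne r hr)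
  have habs : ∫ r in a..b, |q' r| / q r ^ 2 ≤ |(q b)⁻¹ - (q a)⁻¹| := by
    rw [← hftc]
    rcases hsign with h | h
    · rw [← abs_neg, ← intervalIntegral.integral_neg]
      refine le_of_eq_of_le (intervalIntegral.integral_congr fun r hr ↦ ?_) (le_abs_self _)
      rw [uIcc_of_le hab] at hr
      simp only [abs_of_nonneg (h r hr), neg_div, neg_neg]
    · refine le_of_eq_of_le (intervalIntegral.integral_congr fun r hr ↦ ?_) (le_abs_self _)
      rw [uIcc_of_le hab] at hr
      simp only [abs_of_nonpos (h r hr)]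
  have hinv : ∀ r ∈ Icc a b, |(q r)⁻¹| ≤ 1 / δ := fun r hr ↦ abs_inv_le_one_div hδ (hlow r hr)
  calc _ ≤ |(q b)⁻¹ - (q a)⁻¹| := habs
    _ ≤ |(q b)⁻¹| + |(q a)⁻¹| := abs_sub _ _
    _ ≤ 1 / δ + 1 / δ := add_le_add (hinv b (right_mem_Icc.2 hab)) (hinv a (left_mem_Icc.2 hab))
    _ = 2 / δ := by ring

theorem norm_exp_I_mul_ofReal_mul (x : ℝ) (z : ℂ) : ‖exp (I * x) * z‖ = ‖z‖ := by
  rw [norm_mul, norm_exp_I_mul_ofReal, one_mul]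

theorem norm_integral_exp_mul_deriv_phase_mul_le {p q : ℝ → ℝ} {g g' : ℝ → ℂ} (hab : a ≤ b)
    (hp : ∀ r ∈ Icc a b, HasDerivAt p (q r) r) (hq : ContinuousOn q (Icc a b))
    (hg : ∀ r ∈ Icc a b, HasDerivAt g (g' r) r) (hg' : ContinuousOn g' (Icc a b)) :
    ‖∫ r in a..b, exp (I * p r) * (q r * g r)‖ ≤ ‖g a‖ + ‖g b‖ + ∫ r in a..b, ‖g' r‖ := by
  have hexp : ∀ r ∈ Icc a b, HasDerivAt (fun r ↦ -I * exp (I * p r)) (exp (I * p r) * q r) r :=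
    fun r hr ↦ ((((hp r hr).ofReal_comp.const_mul I).cexp).const_mul (-I)).congr_deriv <| by
      linear_combination -(exp (I * p r) * q r) * I_sq
  have hibp := intervalIntegral.integral_mul_deriv_eq_deriv_mul (a := a) (b := b)
    (by rwa [uIcc_of_le hab]) (by rwa [uIcc_of_le hab])
    (ContinuousOn.intervalIntegrable (by rwa [uIcc_of_le hab]))
    (ContinuousOn.intervalIntegrable (by
      rw [uIcc_of_le hab]
      exact ((continuous_exp.comp_continuousOn (continuousOn_const.mul
        (continuous_ofReal.comp_continuousOn (HasDerivAt.continuousOn hp)))).mul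
        (continuous_ofReal.comp_continuousOn hq)))) (u := g) (u' := g')
  have hnorm : ∀ (r : ℝ) (z : ℂ), ‖z * (-I * exp (I * p r))‖ = ‖z‖ := fun r z ↦ by
    rw [norm_mul, norm_mul, norm_neg, norm_I, norm_exp_I_mul_ofReal, one_mul, mul_one]
  calc ‖∫ r in a..b, exp (I * p r) * (q r * g r)‖
      = ‖g b * (-I * exp (I * p b)) - g a * (-I * exp (I * p a)) -
          ∫ r in a..b, g' r * (-I * exp (I * p r))‖ := by
        rw [← hibp]; congr 2 with r; ring
    _ ≤ ‖g b‖ + ‖g a‖ + ∫ r in a..b, ‖g' r‖ := by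
        refine (norm_sub_le _ _).trans (add_le_add ((norm_sub_le _ _).trans_eq ?_) ?_)
        · rw [hnorm, hnorm]
        · refine (intervalIntegral.norm_integral_le_integral_norm hab).trans_eq ?_
          simp only [hnorm]
    _ = _ := by ring

section

variable {S : ℝ} {q q' : ℝ → ℝ} {f : ℝ → ℂ} (hab : a ≤ b) (hδ : 0 < δ)
  (hq : ∀ r ∈ Icc a b, HasDerivAt q (q' r) r) (hq' : ContinuousOn q' (Icc a b))
  (hsign : (∀ r ∈ Icc a b, 0 ≤ q' r) ∨ ∀ r ∈ Icc a b, q' r ≤ 0)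
  (hlow : ∀ r ∈ Icc a b, δ ≤ |q r|)
  (hf : ∀ r ∈ Icc a b, DifferentiableAt ℝ f r) (hf' : ContinuousOn (deriv f) (Icc a b))
  (hS : ∀ r ∈ Icc a b, ‖f r‖ ≤ S)

include hab hδ hq hq' hsign hlow hf hf' hS

theorem integral_norm_deriv_inv_smul_le :
    ∫ r in a..b, ‖(q r)⁻¹ • deriv f r + (-q' r / q r ^ 2) • f r‖ ≤
      (2 * S + ∫ r in a..b, ‖deriv f r‖) / δ := by
  have hne : ∀ r ∈ Icc a b, q r ≠ 0 := fun r hr ↦ abs_pos.1 (hδ.trans_le (hlow r hr))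
  have hqc := HasDerivAt.continuousOn hq
  have hfc : ContinuousOn f (Icc a b) := fun r hr ↦ (hf r hr).continuousAt.continuousWithinAt
  have hS0 : 0 ≤ S := (norm_nonneg _).trans (hS a (left_mem_Icc.2 hab))
  have hint : ∀ {h : ℝ → ℝ}, ContinuousOn h (Icc a b) → IntervalIntegrable h volume a b :=
    fun hh ↦ ContinuousOn.intervalIntegrable (by rwa [uIcc_of_le hab])
  have hf'i := (hint hf'.norm).const_mul (1 / δ)
  have hq'i : IntervalIntegrable (fun r ↦ S * (|q' r| / q r ^ 2)) volume a b :=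
    (hint (hq'.abs.div (hqc.pow 2) fun r hr ↦ pow_ne_zero 2 (hne r hr))).const_mul S
  have hcont : ContinuousOn (fun r ↦ (q r)⁻¹ • deriv f r + (-q' r / q r ^ 2) • f r) (Icc a b) :=
    ((hqc.inv₀ hne).smul hf').add
      ((hq'.neg.div (hqc.pow 2) fun r hr ↦ pow_ne_zero 2 (hne r hr)).smul hfc)
  calc _ ≤ ∫ r in a..b, (1 / δ * ‖deriv f r‖ + S * (|q' r| / q r ^ 2)) := by
        refine intervalIntegral.integral_mono_on hab (hint hcont.norm) (hf'i.add hq'i)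
          fun r hr ↦ (norm_add_le _ _).trans ?_
        rw [norm_smul, norm_smul, Real.norm_eq_abs, Real.norm_eq_abs, abs_div, abs_neg, abs_sq,
          mul_comm S]
        gcongr
        exacts [abs_inv_le_one_div hδ (hlow r hr), hS r hr]
    _ = 1 / δ * (∫ r in a..b, ‖deriv f r‖) + S * ∫ r in a..b, |q' r| / q r ^ 2 := by
        rw [intervalIntegral.integral_add hf'i hq'i, intervalIntegral.integral_const_mul,
          intervalIntegral.integral_const_mul]
    _ ≤ 1 / δ * (∫ r in a..b, ‖deriv f r‖) + S * (2 / δ) := by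
        gcongr
        exact integral_abs_deriv_div_sq_le hab hδ hq hq' hsign hlow
    _ = _ := by ring

theorem norm_integral_exp_mul_le_of_le_abs_deriv {p : ℝ → ℝ}
    (hp : ∀ r ∈ Icc a b, HasDerivAt p (q r) r) :
    ‖∫ r in a..b, exp (I * p r) * f r‖ ≤ (4 * S + ∫ r in a..b, ‖deriv f r‖) / δ := by
  have hne : ∀ r ∈ Icc a b, q r ≠ 0 := fun r hr ↦ abs_pos.1 (hδ.trans_le (hlow r hr))
  have hqc := HasDerivAt.continuousOn hq
  have hfc : ContinuousOn f (Icc a b) := fun r hr ↦ (hf r hr).continuousAt.continuousWithinAt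
  set g : ℝ → ℂ := fun r ↦ (q r)⁻¹ • f r
  set g' : ℝ → ℂ := fun r ↦ (q r)⁻¹ • deriv f r + (-q' r / q r ^ 2) • f r
  have hg : ∀ r ∈ Icc a b, HasDerivAt g (g' r) r := fun r hr ↦
    ((hq r hr).inv (hne r hr)).smul (hf r hr).hasDerivAt
  have hg' : ContinuousOn g' (Icc a b) :=
    ((hqc.inv₀ hne).smul hf').add
      ((hq'.neg.div (hqc.pow 2) fun r hr ↦ pow_ne_zero 2 (hne r hr)).smul hfc)
  have hgS : ∀ r ∈ Icc a b, ‖g r‖ ≤ 1 / δ * S := fun r hr ↦ by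
    rw [norm_smul, Real.norm_eq_abs]
    gcongr
    exacts [abs_inv_le_one_div hδ (hlow r hr), hS r hr]
  calc ‖∫ r in a..b, exp (I * p r) * f r‖
      = ‖∫ r in a..b, exp (I * p r) * (q r * g r)‖ := by
        congr 1
        refine intervalIntegral.integral_congr fun r hr ↦ ?_
        rw [uIcc_of_le hab] at hr
        simp only [g, real_smul, ofReal_inv, mul_inv_cancel_left₀ (ofReal_ne_zero.2 (hne r hr))]
    _ ≤ ‖g a‖ + ‖g b‖ + ∫ r in a..b, ‖g' r‖ :=
        norm_integral_exp_mul_deriv_phase_mul_le hab hp hqc hg hg'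
    _ ≤ 1 / δ * S + 1 / δ * S + (2 * S + ∫ r in a..b, ‖deriv f r‖) / δ := by
        gcongr
        exacts [hgS a (left_mem_Icc.2 hab), hgS b (right_mem_Icc.2 hab),
          integral_norm_deriv_inv_smul_le hab hδ hq hq' hsign hlow hf hf' hS]
    _ = _ := by ring

end

theorem IsSymbolOn.norm_integral_exp_mul_le {σ A : ℝ} {p q q' : ℝ → ℝ} {f : ℝ → ℂ} (hσ : σ < 0)
    (ha : 0 < a) (hab : a ≤ b) (hδ : 0 < δ) (hp : ∀ r ∈ Icc a b, HasDerivAt p (q r) r)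
    (hq : ∀ r ∈ Icc a b, HasDerivAt q (q' r) r) (hq' : ContinuousOn q' (Icc a b))
    (hsign : (∀ r ∈ Icc a b, 0 ≤ q' r) ∨ ∀ r ∈ Icc a b, q' r ≤ 0)
    (hlow : ∀ r ∈ Icc a b, δ ≤ |q r|) (hf : IsSymbolOn f σ A (Icc a b)) :
    ‖∫ r in a..b, exp (I * p r) * f r‖ ≤ (4 - 1 / σ) * A * a ^ σ / δ := by
  have hA : 0 ≤ A := hf.nonneg (left_mem_Icc.2 hab) ha
  have hf'L1 : ∫ r in a..b, ‖deriv f r‖ ≤ -1 / σ * (A * a ^ σ) := by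
    have h0 : (0 : ℝ) ∉ uIcc a b := by rw [uIcc_of_le hab]; exact fun h ↦ ha.not_ge h.1
    calc ∫ r in a..b, ‖deriv f r‖ ≤ ∫ r in a..b, A * r ^ (σ - 1) :=
          intervalIntegral.integral_mono_on hab
            (ContinuousOn.intervalIntegrable (by
              rw [uIcc_of_le hab]; exact hf.continuousOn_deriv.norm))
            ((intervalIntegral.intervalIntegrable_rpow (Or.inr h0)).const_mul A) hf.norm_deriv_le
      _ = -1 / σ * (A * a ^ σ) - -1 / σ * (A * b ^ σ) := by
          rw [intervalIntegral.integral_const_mul,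
            integral_rpow (Or.inr ⟨by linarith, h0⟩), sub_add_cancel]
          ring
      _ ≤ -1 / σ * (A * a ^ σ) :=
          sub_le_self _ (mul_nonneg (div_nonneg_of_nonpos (by norm_num) hσ.le)
            (mul_nonneg hA (Real.rpow_nonneg (ha.le.trans hab) σ)))
  refine (norm_integral_exp_mul_le_of_le_abs_deriv (S := A * a ^ σ) hab hδ hq hq' hsign hlow
    hf.differentiableAt hf.continuousOn_deriv (fun r hr ↦ (hf.norm_le r hr).trans ?_) hp).trans ?_
  · exact mul_le_mul_of_nonneg_left (Real.rpow_le_rpow_of_nonpos ha hr.1 hσ.le) hA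
  · gcongr
    linear_combination hf'L1

end FirstDerivativeTest

/-- The integrals of `F` over all intervals with endpoints in `s` are bounded by `C`. This is how
oscillatory integrals without absolute convergence are controlled. -/
def IntegralBoundedOn (F : ℝ → ℂ) (s : Set ℝ) (C : ℝ) : Prop :=
  ∀ a ∈ s, ∀ b ∈ s, a ≤ b → ‖∫ r in a..b, F r‖ ≤ C

namespace IntegralBoundedOn

variable {F G : ℝ → ℂ} {s t : Set ℝ} {x B C : ℝ}

theorem mono (hF : IntegralBoundedOn F s B) (hts : t ⊆ s) (hBC : B ≤ C) :
    IntegralBoundedOn F t C := fun a ha b hb hab ↦ (hF a (hts ha) b (hts hb) hab).trans hBC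

theorem add [s.OrdConnected] (hFc : ContinuousOn F s) (hGc : ContinuousOn G s)
    (hF : IntegralBoundedOn F s B) (hG : IntegralBoundedOn G s C) :
    IntegralBoundedOn (fun r ↦ F r + G r) s (B + C) := fun a ha b hb hab ↦ by
  have hs : uIcc a b ⊆ s := OrdConnected.uIcc_subset ‹_› ha hb
  rw [intervalIntegral.integral_add (hFc.mono hs).intervalIntegrable
    (hGc.mono hs).intervalIntegrable]
  exact norm_add_le_of_le (hF a ha b hb hab) (hG a ha b hb hab)

theorem of_inter_Iic_of_inter_Ici [s.OrdConnected] (hFc : ContinuousOn F s) (hB : 0 ≤ B)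
    (hC : 0 ≤ C) (hle : IntegralBoundedOn F (s ∩ Iic x) B)
    (hge : IntegralBoundedOn F (s ∩ Ici x) C) : IntegralBoundedOn F s (B + C) := by
  intro a ha b hb hab
  rcases le_total b x with hbx | hxb
  · linarith [hle a ⟨ha, hab.trans hbx⟩ b ⟨hb, hbx⟩ hab]
  rcases le_total x a with hxa | hax
  · linarith [hge a ⟨ha, hxa⟩ b ⟨hb, hxb⟩ hab]
  have hx : x ∈ s := OrdConnected.out ‹_› ha hb ⟨hax, hxb⟩
  have hint : ∀ {y z}, y ∈ s → z ∈ s → IntervalIntegrable F volume y z := fun hy hz ↦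
    (hFc.mono (OrdConnected.uIcc_subset ‹_› hy hz)).intervalIntegrable
  rw [← intervalIntegral.integral_add_adjacent_intervals (hint ha hx) (hint hx hb)]
  exact norm_add_le_of_le (hle a ⟨ha, hax⟩ x ⟨hx, self_mem_Iic⟩ hax)
    (hge x ⟨hx, self_mem_Ici⟩ b ⟨hb, hxb⟩ hxb)

theorem norm_integral_Ioi_le {a : ℝ} (hF : IntegralBoundedOn F (Ici a) C)
    (hint : IntegrableOn F (Ioi a)) : ‖∫ r in Ioi a, F r‖ ≤ C :=
  le_of_tendsto (intervalIntegral_tendsto_integral_Ioi a hint Filter.tendsto_id).norm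
    ((Filter.eventually_ge_atTop a).mono fun b hb ↦ hF a self_mem_Ici b hb hb)

end IntegralBoundedOn

section RpowPhase

theorem min_one_mul_one_sub_le_one_sub_rpow {β z : ℝ} (hβ : 0 < β) (hz : 0 ≤ z) (hz1 : z ≤ 1) :
    min β 1 * (1 - z) ≤ 1 - z ^ β := by
  rcases le_total β 1 with h | h
  · have := rpow_one_add_le_one_add_mul_self (s := z - 1) (by linarith) hβ.le h
    rw [add_sub_cancel] at this
    rw [min_eq_left h]
    linarith
  · have := Real.rpow_le_rpow_of_exponent_ge' hz hz1 zero_le_one h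
    rw [Real.rpow_one] at this
    rw [min_eq_right h]
    linarith

theorem min_abs_sub_one_le_abs_one_sub_rpow {β y : ℝ} (hβ : 0 < β) (hy : 0 < y) :
    min β 1 / 2 * min |y - 1| 1 ≤ |1 - y ^ β| := by
  have hκ : 0 < min β 1 := lt_min hβ one_pos
  rcases le_total y 1 with h | h
  · have hmin : min |y - 1| 1 ≤ 1 - y := by
      rw [abs_sub_comm, abs_of_nonneg (by linarith)]
      exact min_le_left _ _
    refine le_trans ?_ (le_abs_self _)
    nlinarith [min_one_mul_one_sub_le_one_sub_rpow hβ hy.le h]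
  · have hinv := min_one_mul_one_sub_le_one_sub_rpow hβ (inv_pos.2 hy).le (inv_le_one_of_one_le₀ h)
    rw [Real.inv_rpow hy.le] at hinv
    have hexpand : 1 - (y ^ β)⁻¹ ≤ y ^ β - 1 := by
      rw [← sub_nonneg,
        show y ^ β - 1 - (1 - (y ^ β)⁻¹) = (y ^ β - 1) ^ 2 / y ^ β by field_simp]
      positivity
    have hmin : min |y - 1| 1 ≤ 2 * (1 - y⁻¹) := by
      rw [show 2 * (1 - y⁻¹) = 2 * (y - 1) / y by field_simp, le_div_iff₀ hy,
        abs_of_nonneg (by linarith)]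
      rcases le_total y 2 with h' | h'
      · rw [min_eq_left (by linarith)]; nlinarith
      · rw [min_eq_right (by linarith)]; linarith
    calc min β 1 / 2 * min |y - 1| 1 ≤ min β 1 / 2 * (2 * (1 - y⁻¹)) := by gcongr
      _ = min β 1 * (1 - y⁻¹) := by ring
      _ ≤ y ^ β - 1 := hinv.trans hexpand
      _ ≤ |1 - y ^ β| := by rw [abs_sub_comm]; exact le_abs_self _

variable {ε t m ρ r : ℝ}

theorem exists_pos_critical_point (hm : 1 < m) (hεt : ε * t < 0) :
    ∃ ρ : ℝ, 0 < ρ ∧ ε + t * (m * ρ ^ (m - 1)) = 0 := by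
  have ht : t ≠ 0 := right_ne_zero_of_mul hεt.ne
  have hpos : 0 < -ε / (t * m) := by
    rw [show -ε / (t * m) = -(ε * t) / (t ^ 2 * m) by field_simp]
    have : 0 < -(ε * t) := by linarith
    positivity
  refine ⟨(-ε / (t * m)) ^ (m - 1)⁻¹, Real.rpow_pos_of_pos hpos _, ?_⟩
  rw [Real.rpow_inv_rpow hpos.le (by linarith)]
  field_simp
  ring

theorem le_abs_deriv_phase_of_critical_point (hm : 1 < m) (hε : |ε| = 1) (hρ : 0 < ρ)
    (hcrit : ε + t * (m * ρ ^ (m - 1)) = 0) (hr : 0 < r) :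
    min (m - 1) 1 / 2 * min (|r - ρ| / ρ) 1 ≤ |ε + t * (m * r ^ (m - 1))| := by
  have hfactor : ε + t * (m * r ^ (m - 1)) = ε * (1 - (r / ρ) ^ (m - 1)) := by
    have : r ^ (m - 1) = ρ ^ (m - 1) * (r / ρ) ^ (m - 1) := by
      rw [← Real.mul_rpow hρ.le (by positivity), mul_div_cancel₀ _ hρ.ne']
    rw [this]
    linear_combination (r / ρ) ^ (m - 1) * hcrit
  rw [hfactor, abs_mul, hε, one_mul, ← abs_of_pos hρ, ← abs_div, abs_of_pos hρ, sub_div,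
    div_self hρ.ne']
  exact min_abs_sub_one_le_abs_one_sub_rpow (by linarith) (by positivity)

theorem one_le_abs_deriv_phase (hm : 0 ≤ m) (hε : |ε| = 1) (hεt : 0 ≤ ε * t) (hr : 0 ≤ r) :
    1 ≤ |ε + t * (m * r ^ (m - 1))| := by
  have hnonneg : 0 ≤ ε * t * (m * r ^ (m - 1)) := by positivity
  have hsq : ε * ε = 1 := by rw [← abs_mul_abs_self, hε, one_mul]
  calc (1 : ℝ) ≤ 1 + ε * t * (m * r ^ (m - 1)) := le_add_of_nonneg_right hnonneg
    _ ≤ |1 + ε * t * (m * r ^ (m - 1))| := le_abs_self _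
    _ = |ε * (ε + t * (m * r ^ (m - 1)))| := by rw [← hsq]; ring_nf
    _ = |ε + t * (m * r ^ (m - 1))| := by rw [abs_mul, hε, one_mul]

variable {σ A a b δ : ℝ} {f : ℝ → ℂ}

theorem norm_integral_exp_rpow_phase_mul_le (hσ : σ < 0) (ha : 0 < a) (hab : a ≤ b)
    (hδ : 0 < δ) (hlow : ∀ r ∈ Icc a b, δ ≤ |ε + t * (m * r ^ (m - 1))|)
    (hf : IsSymbolOn f σ A (Icc a b)) :
    ‖∫ r in a..b, exp (I * ((ε * r + t * r ^ m : ℝ) : ℂ)) * f r‖ ≤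
      (4 - 1 / σ) * A * a ^ σ / δ := by
  have hne : ∀ r ∈ Icc a b, r ≠ 0 := fun r hr ↦ (ha.trans_le hr.1).ne'
  refine hf.norm_integral_exp_mul_le (q := fun r ↦ ε + t * (m * r ^ (m - 1)))
    (q' := fun r ↦ t * (m * ((m - 1) * r ^ (m - 1 - 1)))) hσ ha hab hδ (fun r hr ↦ ?_)
    (fun r hr ↦ ?_) ?_ ?_ hlow
  · exact (((hasDerivAt_id' r).const_mul ε).add
      ((Real.hasDerivAt_rpow_const (Or.inl (hne r hr))).const_mul t)).congr_deriv (by ring)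
  · exact (((Real.hasDerivAt_rpow_const (Or.inl (hne r hr))).const_mul m).const_mul t).const_add ε
  · exact continuousOn_const.mul (continuousOn_const.mul (continuousOn_const.mul
      (continuousOn_id.rpow_const fun r hr ↦ Or.inl (hne r hr))))
  · have heq : ∀ r : ℝ, t * (m * ((m - 1) * r ^ (m - 1 - 1))) =
      t * (m * (m - 1)) * r ^ (m - 1 - 1) := fun r ↦ by ring
    have hpow : ∀ r ∈ Icc a b, 0 ≤ r ^ (m - 1 - 1) := fun r hr ↦
      Real.rpow_nonneg (ha.le.trans hr.1) _
    refine (le_total 0 (t * (m * (m - 1)))).imp (fun h r hr ↦ ?_) fun h r hr ↦ ?_ <;> rw [heq]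
    · exact mul_nonneg h (hpow r hr)
    · exact mul_nonpos_of_nonpos_of_nonneg h (hpow r hr)

end RpowPhase

section StationaryPhase

variable {ε t m ρ κ A : ℝ} {f : ℝ → ℂ}

theorem sqrt_mul_rpow_neg_half_le {a : ℝ} (ha : 0 < a) (hρa : ρ / 2 ≤ a) :
    √ρ * a ^ (-(1 / 2) : ℝ) ≤ 2 := by
  rw [Real.rpow_neg ha.le, ← Real.sqrt_eq_rpow, ← div_eq_mul_inv,
    div_le_iff₀ (Real.sqrt_pos.2 ha)]
  calc √ρ ≤ √(2 ^ 2 * a) := Real.sqrt_le_sqrt (by linarith)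
    _ = 2 * √a := by rw [Real.sqrt_mul (by norm_num), Real.sqrt_sq (by norm_num)]

theorem rpow_neg_half_le_one {a : ℝ} (ha : 1 ≤ a) : a ^ (-(1 / 2) : ℝ) ≤ 1 :=
  Real.rpow_le_one_of_one_le_of_nonpos ha (by norm_num)

theorem IsSymbolOn.norm_integral_exp_rpow_phase_mul_le_of_one_le {a b δ : ℝ} (ha : 1 ≤ a)
    (hab : a ≤ b) (hδ : 0 < δ) (hlow : ∀ r ∈ Icc a b, δ ≤ |ε + t * (m * r ^ (m - 1))|)
    (hf : IsSymbolOn f (-(1 / 2)) A (Ici 1)) :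
    ‖∫ r in a..b, exp (I * ((ε * r + t * r ^ m : ℝ) : ℂ)) * f r‖ ≤
      6 * A * a ^ (-(1 / 2) : ℝ) / δ := by
  convert norm_integral_exp_rpow_phase_mul_le (by norm_num) (one_pos.trans_le ha) hab hδ hlow
    (hf.mono fun r hr ↦ ha.trans hr.1) using 4
  norm_num

section

variable (hκ : 0 < κ) (hρ : 0 < ρ)
  (hlow : ∀ r, 1 ≤ r → κ * min (|r - ρ| / ρ) 1 ≤ |ε + t * (m * r ^ (m - 1))|)
  (hf : IsSymbolOn f (-(1 / 2)) A (Ici 1))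

include hκ hρ hlow hf

theorem integralBoundedOn_left_of_critical_point :
    IntegralBoundedOn (fun r ↦ exp (I * ((ε * r + t * r ^ m : ℝ) : ℂ)) * f r)
      (Icc 1 (ρ / 2)) (12 / κ * A) := by
  intro a ha b hb hab
  have hsub : Icc a b ⊆ Ici 1 := fun r hr ↦ ha.1.trans hr.1
  have hA : 0 ≤ A := hf.nonneg self_mem_Ici one_pos
  have hfar : ∀ r ∈ Icc a b, κ / 2 ≤ |ε + t * (m * r ^ (m - 1))| := fun r hr ↦ by
    refine le_trans ?_ (hlow r (hsub hr))
    rw [div_eq_mul_one_div]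
    gcongr
    refine le_min ?_ (by norm_num)
    rw [le_div_iff₀ hρ, abs_sub_comm]
    linarith [hr.2, hb.2, le_abs_self (ρ - r)]
  calc _ ≤ 6 * A * a ^ (-(1 / 2) : ℝ) / (κ / 2) :=
        hf.norm_integral_exp_rpow_phase_mul_le_of_one_le ha.1 hab (half_pos hκ) hfar
    _ ≤ 6 * A * 1 / (κ / 2) := by gcongr; exact rpow_neg_half_le_one ha.1
    _ = 12 / κ * A := by field_simp; ring

theorem norm_integral_le_of_sqrt_le_abs_sub_critical_point {a b : ℝ} (ha : 1 ≤ a)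
    (hρa : ρ / 2 ≤ a) (hab : a ≤ b) (haway : ∀ r ∈ Icc a b, √ρ ≤ |r - ρ|) :
    ‖∫ r in a..b, exp (I * ((ε * r + t * r ^ m : ℝ) : ℂ)) * f r‖ ≤ 12 / κ * A := by
  have hsub : Icc a b ⊆ Ici 1 := fun r hr ↦ ha.trans hr.1
  have hA : 0 ≤ A := hf.nonneg self_mem_Ici one_pos
  have hsqrt : 0 < √ρ := Real.sqrt_pos.2 hρ
  have hfar : ∀ r ∈ Icc a b, κ * min (1 / √ρ) 1 ≤ |ε + t * (m * r ^ (m - 1))| := fun r hr ↦ by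
    refine le_trans ?_ (hlow r (hsub hr))
    refine mul_le_mul_of_nonneg_left (min_le_min_right 1 ?_) hκ.le
    rw [div_le_div_iff₀ hsqrt hρ, one_mul]
    calc ρ = √ρ * √ρ := (Real.mul_self_sqrt hρ.le).symm
      _ ≤ |r - ρ| * √ρ := by gcongr; exact haway r hr
  have hpow : a ^ (-(1 / 2) : ℝ) ≤ 2 * min (1 / √ρ) 1 := by
    rw [mul_min_of_nonneg _ _ zero_le_two, le_min_iff, mul_one_div, le_div_iff₀ hsqrt, mul_comm]
    exact ⟨sqrt_mul_rpow_neg_half_le (by linarith) hρa, by linarith [rpow_neg_half_le_one ha]⟩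
  have : 0 < min (1 / √ρ) 1 := by positivity
  calc _ ≤ 6 * A * a ^ (-(1 / 2) : ℝ) / (κ * min (1 / √ρ) 1) :=
        hf.norm_integral_exp_rpow_phase_mul_le_of_one_le ha hab (by positivity) hfar
    _ ≤ 6 * A * (2 * min (1 / √ρ) 1) / (κ * min (1 / √ρ) 1) := by gcongr
    _ = 12 / κ * A := by field_simp; ring

end

theorem integralBoundedOn_near_critical_point (hf : IsSymbolOn f (-(1 / 2)) A (Ici 1)) :
    IntegralBoundedOn (fun r ↦ exp (I * ((ε * r + t * r ^ m : ℝ) : ℂ)) * f r)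
      (Ici (max 1 (ρ / 2)) ∩ Icc (ρ - √ρ) (ρ + √ρ)) (4 * A) := by
  rintro a ⟨ha, ha'⟩ b ⟨-, hb'⟩ hab
  obtain ⟨ha1, hρa⟩ := max_le_iff.1 (mem_Ici.1 ha)
  have hA : 0 ≤ A := hf.nonneg self_mem_Ici one_pos
  have ha0 : 0 < a := by linarith
  have hbound : ∀ r ∈ uIoc a b, ‖exp (I * ((ε * r + t * r ^ m : ℝ) : ℂ)) * f r‖ ≤
      A * a ^ (-(1 / 2) : ℝ) := fun r hr ↦ by
    rw [uIoc_of_le hab] at hr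
    rw [norm_exp_I_mul_ofReal_mul]
    refine (hf.norm_le r (ha1.trans hr.1.le)).trans ?_
    exact mul_le_mul_of_nonneg_left (Real.rpow_le_rpow_of_nonpos ha0 hr.1.le (by norm_num)) hA
  calc _ ≤ A * a ^ (-(1 / 2) : ℝ) * |b - a| :=
        intervalIntegral.norm_integral_le_of_norm_le_const hbound
    _ ≤ A * a ^ (-(1 / 2) : ℝ) * (2 * √ρ) := by
        gcongr
        rw [abs_of_nonneg (by linarith)]
        linarith [ha'.1, hb'.2]
    _ = 2 * A * (√ρ * a ^ (-(1 / 2) : ℝ)) := by ring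
    _ ≤ 2 * A * 2 := by gcongr; exact sqrt_mul_rpow_neg_half_le ha0 hρa
    _ = 4 * A := by ring

theorem IsSymbolOn.continuousOn_exp_rpow_phase_mul {σ : ℝ} (hm : 0 ≤ m)
    (hf : IsSymbolOn f σ A (Ici 1)) :
    ContinuousOn (fun r ↦ exp (I * ((ε * r + t * r ^ m : ℝ) : ℂ)) * f r) (Ici 1) := by
  have : Continuous fun r : ℝ ↦ r ^ m := Real.continuous_rpow_const hm
  exact (by fun_prop : Continuous fun r : ℝ ↦
    exp (I * ((ε * r + t * r ^ m : ℝ) : ℂ))).continuousOn.mul hf.continuousOn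

theorem integralBoundedOn_of_critical_point (hm : 0 ≤ m) (hκ : 0 < κ) (hρ : 0 < ρ)
    (hlow : ∀ r, 1 ≤ r → κ * min (|r - ρ| / ρ) 1 ≤ |ε + t * (m * r ^ (m - 1))|)
    (hf : IsSymbolOn f (-(1 / 2)) A (Ici 1)) :
    IntegralBoundedOn (fun r ↦ exp (I * ((ε * r + t * r ^ m : ℝ) : ℂ)) * f r) (Ici 1)
      ((36 / κ + 4) * A) := by
  have hA : 0 ≤ A := hf.nonneg self_mem_Ici one_pos
  have hκA : 0 ≤ 12 / κ * A := by positivity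
  have hcont := hf.continuousOn_exp_rpow_phase_mul (ε := ε) (t := t) hm
  set F : ℝ → ℂ := fun r ↦ exp (I * ((ε * r + t * r ^ m : ℝ) : ℂ)) * f r
  have hcont' : ContinuousOn F (Ici (max 1 (ρ / 2))) :=
    hcont.mono (Ici_subset_Ici.2 (le_max_left _ _))
  have hbelow : IntegralBoundedOn F (Ici (max 1 (ρ / 2)) ∩ Iic (ρ - √ρ)) (12 / κ * A) :=
    fun a ha b hb hab ↦ norm_integral_le_of_sqrt_le_abs_sub_critical_point hκ hρ hlow hf
      ((le_max_left _ _).trans ha.1) ((le_max_right _ _).trans ha.1) hab fun r hr ↦ by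
        rw [abs_sub_comm]
        linarith [le_abs_self (ρ - r), hr.2, mem_Iic.1 hb.2]
  have habove : IntegralBoundedOn F (Ici (max 1 (ρ / 2)) ∩ Ici (ρ + √ρ)) (12 / κ * A) :=
    fun a ha b _ hab ↦ norm_integral_le_of_sqrt_le_abs_sub_critical_point hκ hρ hlow hf
      ((le_max_left _ _).trans ha.1) ((le_max_right _ _).trans ha.1) hab fun r hr ↦ by
        linarith [le_abs_self (r - ρ), hr.1, mem_Ici.1 ha.2]
  have hnear : IntegralBoundedOn F (Ici (max 1 (ρ / 2)) ∩ Ici (ρ - √ρ) ∩ Iic (ρ + √ρ)) (4 * A) :=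
    (integralBoundedOn_near_critical_point hf).mono (fun r hr ↦ ⟨hr.1.1, hr.1.2, hr.2⟩) le_rfl
  have hright : IntegralBoundedOn F (Ici (max 1 (ρ / 2)) ∩ Ici (ρ - √ρ)) (4 * A + 12 / κ * A) :=
    have : (Ici (max 1 (ρ / 2)) ∩ Ici (ρ - √ρ)).OrdConnected :=
      ordConnected_Ici.inter ordConnected_Ici
    .of_inter_Iic_of_inter_Ici (hcont'.mono inter_subset_left) (by positivity) hκA hnear
      (habove.mono (inter_subset_inter_left _ inter_subset_left) le_rfl)
  have hge : IntegralBoundedOn F (Ici 1 ∩ Ici (ρ / 2)) (12 / κ * A + (4 * A + 12 / κ * A)) := by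
    rw [Ici_inter_Ici]
    exact .of_inter_Iic_of_inter_Ici hcont' hκA (by positivity) hbelow hright
  have hle : IntegralBoundedOn F (Ici 1 ∩ Iic (ρ / 2)) (12 / κ * A) :=
    integralBoundedOn_left_of_critical_point hκ hρ hlow hf
  exact (IntegralBoundedOn.of_inter_Iic_of_inter_Ici hcont hκA (by positivity) hle hge).mono
    Subset.rfl (by ring_nf; rfl)

theorem exists_integralBoundedOn_exp_rpow_phase_mul (hm : 1 < m) :
    ∃ K : ℝ, 0 < K ∧ ∀ (ε t A : ℝ) (f : ℝ → ℂ), |ε| = 1 → IsSymbolOn f (-(1 / 2)) A (Ici 1) →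
      IntegralBoundedOn (fun r ↦ exp (I * ((ε * r + t * r ^ m : ℝ) : ℂ)) * f r) (Ici 1)
        (K * A) := by
  have hκ : 0 < min (m - 1) 1 / 2 := half_pos (lt_min (by linarith) one_pos)
  set κ := min (m - 1) 1 / 2
  refine ⟨36 / κ + 6, by positivity, fun ε t A f hε hf ↦ ?_⟩
  have hA : 0 ≤ A := hf.nonneg self_mem_Ici one_pos
  rcases le_or_gt 0 (ε * t) with hεt | hεt
  · intro a ha b _ hab
    calc _ ≤ 6 * A * a ^ (-(1 / 2) : ℝ) / 1 :=
          hf.norm_integral_exp_rpow_phase_mul_le_of_one_le ha hab one_pos fun r hr ↦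
            one_le_abs_deriv_phase (by linarith) hε hεt (zero_le_one.trans (ha.trans hr.1))
      _ ≤ 6 * A * 1 / 1 := by gcongr; exact rpow_neg_half_le_one ha
      _ ≤ (36 / κ + 6) * A := by
          rw [mul_one, div_one]
          gcongr
          exact le_add_of_nonneg_left (by positivity)
  · obtain ⟨ρ, hρ, hcrit⟩ := exists_pos_critical_point hm hεt
    refine (integralBoundedOn_of_critical_point (by linarith) hκ hρ (fun r hr ↦
      le_abs_deriv_phase_of_critical_point hm hε hρ hcrit (by linarith)) hf).mono Subset.rfl ?_
    gcongr
    norm_num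

end StationaryPhase

section HalfWaves

variable {n : ℝ} {V : ℝ → ℝ}

section

variable {F : Type*} [NormedAddCommGroup F] [InnerProductSpace ℝ F] {u u' : ℝ → F}

theorem antitoneOn_energy_mul_exp
    (hu : ∀ r ∈ Ici (1 : ℝ), HasDerivAt u (u' r) r)
    (hu' : ∀ r ∈ Ici (1 : ℝ), HasDerivAt u' ((V r - 1) • u r) r)
    (hV : ∀ r ∈ Ici (1 : ℝ), |V r| ≤ n / r ^ 2) :
    AntitoneOn (fun r ↦ (‖u r‖ ^ 2 + ‖u' r‖ ^ 2) * Real.exp (n / r)) (Ici 1) := by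
  have hderiv : ∀ r ∈ Ici (1 : ℝ),
      HasDerivAt (fun r ↦ (‖u r‖ ^ 2 + ‖u' r‖ ^ 2) * Real.exp (n / r))
        ((2 * (V r * ⟪u r, u' r⟫) - n / r ^ 2 * (‖u r‖ ^ 2 + ‖u' r‖ ^ 2)) *
          Real.exp (n / r)) r := fun r hr ↦ by
    have hr0 : r ≠ 0 := (one_pos.trans_le hr).ne'
    refine (((hu r hr).norm_sq.add (hu' r hr).norm_sq).mul
      ((hasDerivAt_inv hr0).const_mul n).exp).congr_deriv ?_
    simp only [Pi.add_apply, inner_smul_right, real_inner_comm (u r) (u' r), div_eq_mul_inv]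
    ring
  refine antitoneOn_of_hasDerivWithinAt_nonpos (convex_Ici 1) (HasDerivAt.continuousOn hderiv)
    (fun r hr ↦ (hderiv r (interior_subset hr)).hasDerivWithinAt) fun r hr ↦
      mul_nonpos_of_nonpos_of_nonneg (sub_nonpos.2 ?_) (Real.exp_pos _).le
  calc 2 * (V r * ⟪u r, u' r⟫) ≤ 2 * (|V r| * (‖u r‖ * ‖u' r‖)) := by
        refine mul_le_mul_of_nonneg_left ((le_abs_self _).trans ?_) zero_le_two
        rw [abs_mul]
        gcongr
        exact abs_real_inner_le_norm _ _
    _ = |V r| * (2 * ‖u r‖ * ‖u' r‖) := by ring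
    _ ≤ n / r ^ 2 * (‖u r‖ ^ 2 + ‖u' r‖ ^ 2) :=
        mul_le_mul (hV r (interior_subset hr)) (two_mul_le_add_sq _ _) (by positivity)
          ((abs_nonneg _).trans (hV r (interior_subset hr)))

theorem exists_norm_le_of_schrodinger_ode (hn : 0 ≤ n)
    (hu : ∀ r ∈ Ici (1 : ℝ), HasDerivAt u (u' r) r)
    (hu' : ∀ r ∈ Ici (1 : ℝ), HasDerivAt u' ((V r - 1) • u r) r)
    (hV : ∀ r ∈ Ici (1 : ℝ), |V r| ≤ n / r ^ 2) :
    ∃ K : ℝ, ∀ r ∈ Ici (1 : ℝ), ‖u r‖ ≤ K ∧ ‖u' r‖ ≤ K := by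
  refine ⟨√((‖u 1‖ ^ 2 + ‖u' 1‖ ^ 2) * Real.exp (n / 1)), fun r hr ↦ ?_⟩
  have henergy : ‖u r‖ ^ 2 + ‖u' r‖ ^ 2 ≤ (‖u 1‖ ^ 2 + ‖u' 1‖ ^ 2) * Real.exp (n / 1) :=
    (le_mul_of_one_le_right (by positivity)
      (Real.one_le_exp (div_nonneg hn (zero_le_one.trans hr)))).trans
      (antitoneOn_energy_mul_exp hu hu' hV self_mem_Ici hr hr)
  exact ⟨Real.le_sqrt_of_sq_le ((le_add_of_nonneg_right (by positivity)).trans henergy),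
    Real.le_sqrt_of_sq_le ((le_add_of_nonneg_left (by positivity)).trans henergy)⟩

end

/-- The amplitude of the half wave `exp (i ε r)`, for `ε = ±1`, in a function `u` with derivative
`u'`. It is constant when `u'' = -u`, by variation of constants. -/
noncomputable def halfWaveAmplitude (u u' : ℝ → ℂ) (ε r : ℝ) : ℂ :=
  exp (I * ((-(ε * r) : ℝ) : ℂ)) * ((u r - I * ε * u' r) / 2)

variable {u u' : ℝ → ℂ} {ε r : ℝ}

theorem eq_exp_mul_halfWaveAmplitude_add (u u' : ℝ → ℂ) (r : ℝ) :
    u r = exp (I * ((1 * r : ℝ) : ℂ)) * halfWaveAmplitude u u' 1 r +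
      exp (I * ((-1 * r : ℝ) : ℂ)) * halfWaveAmplitude u u' (-1) r := by
  simp only [halfWaveAmplitude, ← mul_assoc, ← exp_add, ← mul_add, ← ofReal_add, add_neg_cancel]
  push_cast
  simp only [mul_zero, exp_zero]
  ring

theorem hasDerivAt_halfWaveAmplitude (hε : ε ^ 2 = 1) (hu : HasDerivAt u (u' r) r)
    (hu' : HasDerivAt u' ((V r - 1) • u r) r) :
    HasDerivAt (halfWaveAmplitude u u' ε)
      (exp (I * ((-(ε * r) : ℝ) : ℂ)) * (-(I * ε * V r * u r) / 2)) r := by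
  have hexp := ((((hasDerivAt_id' r).const_mul ε).neg.ofReal_comp).const_mul I).cexp
  refine (hexp.mul ((hu.sub (hu'.const_mul (I * ε))).div_const 2)).congr_deriv ?_
  have hε' : (ε : ℂ) ^ 2 = 1 := mod_cast hε
  simp only [Pi.sub_apply, Pi.neg_apply, real_smul]
  push_cast
  linear_combination exp (I * -(ε * r)) * u' r / 2 * (I ^ 2 * hε' + I_sq)

theorem exists_isSymbolOn_halfWaveAmplitude (hn : 0 ≤ n)
    (hu : ∀ r ∈ Ici (1 : ℝ), HasDerivAt u (u' r) r)
    (hu' : ∀ r ∈ Ici (1 : ℝ), HasDerivAt u' ((V r - 1) • u r) r)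
    (hVc : ContinuousOn V (Ici 1)) (hV : ∀ r ∈ Ici (1 : ℝ), |V r| ≤ n / r ^ 2) :
    ∃ A : ℝ, ∀ ε : ℝ, |ε| = 1 → IsSymbolOn (halfWaveAmplitude u u' ε) 0 A (Ici 1) := by
  obtain ⟨K, hK⟩ := exists_norm_le_of_schrodinger_ode hn hu hu' hV
  have hK0 : 0 ≤ K := (norm_nonneg _).trans (hK 1 self_mem_Ici).1
  refine ⟨(1 + n) * K, fun ε hε ↦ .of_hasDerivAt
    (fun r hr ↦ hasDerivAt_halfWaveAmplitude (by rw [← sq_abs, hε, one_pow]) (hu r hr) (hu' r hr))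
    ?_ (fun r hr ↦ ?_) (fun r hr ↦ ?_)⟩
  · have huc := HasDerivAt.continuousOn hu
    fun_prop
  · rw [halfWaveAmplitude, norm_exp_I_mul_ofReal_mul, Real.rpow_zero, mul_one, norm_div, norm_ofNat,
      div_le_iff₀ two_pos]
    refine (norm_sub_le _ _).trans ?_
    rw [norm_mul, norm_mul, norm_I, norm_real, Real.norm_eq_abs, hε]
    linarith [(hK r hr).1, (hK r hr).2, mul_nonneg hn hK0]
  · have hr1 : 1 ≤ r := hr
    rw [norm_exp_I_mul_ofReal_mul, norm_div, norm_neg, norm_mul, norm_mul, norm_mul, norm_I,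
      norm_real, norm_real, Real.norm_eq_abs, Real.norm_eq_abs, hε, norm_ofNat, one_mul, one_mul,
      zero_sub, Real.rpow_neg_one]
    calc |V r| * ‖u r‖ / 2 ≤ |V r| * ‖u r‖ := half_le_self (by positivity)
      _ ≤ n / r ^ 2 * K :=
          mul_le_mul (hV r hr) (hK r hr).1 (norm_nonneg _) ((abs_nonneg _).trans (hV r hr))
      _ = n * K * (r⁻¹ * r⁻¹) := by ring
      _ ≤ (1 + n) * K * (1 * r⁻¹) := by
          gcongr
          · exact le_add_of_nonneg_left zero_le_one
          · exact inv_le_one_of_one_le₀ hr1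
      _ = (1 + n) * K * r⁻¹ := by rw [one_mul]

end HalfWaves

section SphereFourier

open scoped Pointwise
open Metric

variable {E : Type*} [NormedAddCommGroup E] [InnerProductSpace ℝ E]

/-- The action of a linear isometry on the unit sphere. -/
def sphereHomeomorph (L : E ≃ₗᵢ[ℝ] E) : sphere (0 : E) 1 ≃ₜ sphere (0 : E) 1 :=
  L.toHomeomorph.subtype fun x ↦ by simp

variable [FiniteDimensional ℝ E] [MeasurableSpace E] [BorelSpace E] {c : E → ℂ} {e v w x : E}
  {r : ℝ}

theorem measurePreserving_sphereHomeomorph (L : E ≃ₗᵢ[ℝ] E) :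
    MeasurePreserving (sphereHomeomorph L) (volume : Measure E).toSphere
      (volume : Measure E).toSphere := by
  refine ⟨(sphereHomeomorph L).measurable, Measure.ext fun s hs ↦ ?_⟩
  have hcone : L ⁻¹' (Ioo (0 : ℝ) 1 • ((↑) '' s : Set E)) =
      Ioo (0 : ℝ) 1 • ((↑) '' (sphereHomeomorph L ⁻¹' s) : Set E) := by
    ext ξ
    refine exists_congr fun r ↦ and_congr_right fun _ ↦ ?_
    simp only [exists_mem_image]
    refine (sphereHomeomorph L).surjective.exists.trans (exists_congr fun ω ↦ and_congr_right
      fun _ ↦ ?_)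
    exact (Eq.congr_left (map_smul L r (ω : E)).symm).trans L.injective.eq_iff
  rw [Measure.map_apply (sphereHomeomorph L).measurable hs, Measure.toSphere_apply' _ hs,
    Measure.toSphere_apply' _ ((sphereHomeomorph L).measurable hs), ← hcone,
    L.measurePreserving.measure_preimage_emb L.toHomeomorph.measurableEmbedding]

/-- The Fourier transform, without normalising factors, of the surface measure of the unit sphere
with density `c`. -/
noncomputable def sphereFourier (c : E → ℂ) (x : E) : ℂ :=
  ∫ ω : sphere (0 : E) 1, c ω * exp (I * ((⟪x, (ω : E)⟫ : ℝ) : ℂ)) ∂(volume : Measure E).toSphere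

theorem sphereFourier_comp_linearIsometryEquiv (L : E ≃ₗᵢ[ℝ] E) (c : E → ℂ) (x : E) :
    sphereFourier (c ∘ L) x = sphereFourier c (L x) := by
  refine Eq.trans ?_ ((measurePreserving_sphereHomeomorph L).integral_comp
    (sphereHomeomorph L).measurableEmbedding
    fun ω ↦ c ω * exp (I * ((⟪L x, (ω : E)⟫ : ℝ) : ℂ)))
  exact integral_congr_ae (.of_forall fun ω ↦
    congrArg (fun y : ℝ ↦ c (L ω) * exp (I * (y : ℂ))) (L.inner_map_map x ω).symm)

theorem sphereFourier_one_eq_of_norm_eq {y : E} (h : ‖x‖ = ‖y‖) :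
    sphereFourier 1 x = sphereFourier 1 y := by
  rw [← Submodule.reflection_sub h, ← sphereFourier_comp_linearIsometryEquiv]
  rfl

theorem norm_sphereFourier_one_le (x : E) :
    ‖sphereFourier 1 x‖ ≤ (volume : Measure E).toSphere.real univ := by
  refine (norm_integral_le_of_norm_le_const (.of_forall fun ω ↦ ?_)).trans_eq (one_mul _)
  rw [mul_comm, norm_exp_I_mul_ofReal_mul, Pi.one_apply, norm_one]

theorem integrable_sphereFourier (hc : Continuous c) (x : E) :
    Integrable (fun ω : sphere (0 : E) 1 ↦ c ω * exp (I * ((⟪x, (ω : E)⟫ : ℝ) : ℂ)))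
      (volume : Measure E).toSphere :=
  Continuous.integrable_of_hasCompactSupport (by fun_prop) (.of_compactSpace _)

theorem hasDerivAt_sphereFourier (hc : Continuous c) (x v : E) (s : ℝ) :
    HasDerivAt (fun s : ℝ ↦ sphereFourier c (x + s • v))
      (sphereFourier (fun ω ↦ c ω * (I * ⟪v, ω⟫)) (x + s • v)) s := by
  have hc' : Continuous fun ω ↦ c ω * (I * ⟪v, ω⟫) := by fun_prop
  refine (hasDerivAt_integral_of_dominated_loc_of_deriv_le
    (F' := fun s ω ↦ c ω * (I * ⟪v, ω⟫) * exp (I * ((⟪x + s • v, (ω : E)⟫ : ℝ) : ℂ)))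
    Filter.univ_mem
    (.of_forall fun s ↦ (integrable_sphereFourier hc (x + s • v)).aestronglyMeasurable)
    (integrable_sphereFourier hc (x + s • v))
    (integrable_sphereFourier hc' (x + s • v)).aestronglyMeasurable
    (.of_forall fun ω s _ ↦ ?_) (integrable_sphereFourier hc' (x + s • v)).norm
    (.of_forall fun ω s _ ↦ ?_)).2
  · simp only [mul_comm (c ω * _) (exp _), norm_exp_I_mul_ofReal_mul, le_refl]
  · simp only [inner_add_left, inner_smul_left, conj_trivial]
    refine ((((((hasDerivAt_id' s).mul_const ⟪v, (ω : E)⟫).const_add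
      ⟪x, (ω : E)⟫).ofReal_comp).const_mul I).cexp.const_mul (c ω)).congr_deriv ?_
    rw [one_mul]
    ring

theorem sphereFourier_inner_eq_zero (h : ⟪w, x⟫ = 0) :
    sphereFourier (fun ω ↦ I * ⟪w, ω⟫) x = 0 := by
  set L := (ℝ ∙ w)ᗮ.reflection
  have hw : L w = -w := Submodule.reflection_orthogonalComplement_singleton_eq_neg w
  have hx : L x = x := Submodule.reflection_mem_subspace_eq_self
    (Submodule.mem_orthogonal_singleton_iff_inner_right.2 h)
  have hodd : (fun ω ↦ I * ⟪w, ω⟫) ∘ L = fun ω ↦ -(I * ⟪w, ω⟫ : ℂ) := funext fun ω ↦ by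
    rw [Function.comp_apply, ← mul_neg, ← ofReal_neg, ← inner_neg_left, ← hw,
      ← L.inner_map_map w, Submodule.reflection_reflection]
  refine self_eq_neg.1 ?_
  conv_lhs => rw [← hx, ← sphereFourier_comp_linearIsometryEquiv, hodd]
  simp only [sphereFourier, neg_mul, integral_neg]

theorem sphereFourier_inner_smul_sub_smul (r s : ℝ) (v w x : E) :
    sphereFourier (fun ω ↦ I * ⟪r • v - s • w, ω⟫) x =
      r * sphereFourier (fun ω ↦ I * ⟪v, ω⟫) x - s * sphereFourier (fun ω ↦ I * ⟪w, ω⟫) x := by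
  have hint : ∀ u : E, Integrable (fun ω : sphere (0 : E) 1 ↦
      I * ⟪u, (ω : E)⟫ * exp (I * ((⟪x, (ω : E)⟫ : ℝ) : ℂ))) (volume : Measure E).toSphere :=
    fun u ↦ integrable_sphereFourier (c := fun ω ↦ I * ⟪u, ω⟫) (by fun_prop) x
  simp only [sphereFourier]
  rw [← integral_const_mul, ← integral_const_mul,
    ← integral_sub ((hint v).const_mul _) ((hint w).const_mul _)]
  refine integral_congr_ae (.of_forall fun ω ↦ ?_)
  simp only [inner_sub_left, inner_smul_left, conj_trivial]
  push_cast
  ring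

theorem mul_sphereFourier_inner_mul_inner (hev : ⟪e, v⟫ = 0) (hnorm : ‖e‖ = ‖v‖) (r : ℝ) :
    r * sphereFourier (fun ω ↦ I * ⟪v, ω⟫ * (I * ⟪v, ω⟫)) (r • e) =
      sphereFourier (fun ω ↦ I * ⟪e, ω⟫) (r • e) := by
  have hrot : ∀ s : ℝ, r * sphereFourier (fun ω ↦ I * ⟪v, ω⟫) (r • e + s • v) =
      s * sphereFourier (fun ω ↦ I * ⟪e, ω⟫) (r • e + s • v) := fun s ↦ by
    have hzero := sphereFourier_inner_eq_zero (w := r • v - s • e) (x := r • e + s • v) (by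
      simp only [inner_sub_left, inner_add_right, inner_smul_left, inner_smul_right, hev,
        real_inner_comm e v, real_inner_self_eq_norm_sq, hnorm, conj_trivial]
      ring)
    rwa [sphereFourier_inner_smul_sub_smul, sub_eq_zero] at hzero
  have hleft := (hasDerivAt_sphereFourier (c := fun ω ↦ I * ⟪v, ω⟫) (by fun_prop) (r • e) v
    0).const_mul (r : ℂ)
  have hright := (hasDerivAt_id' (0 : ℝ)).ofReal_comp.mul
    (hasDerivAt_sphereFourier (c := fun ω ↦ I * ⟪e, ω⟫) (by fun_prop) (r • e) v 0)
  simpa using hleft.unique (hright.congr_of_eventuallyEq (.of_forall hrot))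

theorem hasDerivAt_sphereFourier_smul (hc : Continuous c) (e : E) (r : ℝ) :
    HasDerivAt (fun r : ℝ ↦ sphereFourier c (r • e))
      (sphereFourier (fun ω ↦ c ω * (I * ⟪e, ω⟫)) (r • e)) r := by
  simpa only [zero_add] using hasDerivAt_sphereFourier hc 0 e r

theorem sum_sphereFourier_inner_mul_inner {ι : Type*} [Fintype ι] (b : OrthonormalBasis ι ℝ E)
    (x : E) :
    ∑ j, sphereFourier (fun ω ↦ I * ⟪b j, ω⟫ * (I * ⟪b j, ω⟫)) x = -sphereFourier 1 x := by
  simp only [sphereFourier]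
  rw [← integral_finsetSum _ fun j _ ↦ integrable_sphereFourier
    (c := fun ω ↦ I * ⟪b j, ω⟫ * (I * ⟪b j, ω⟫)) (by fun_prop) x, ← integral_neg]
  refine integral_congr_ae (.of_forall fun ω ↦ ?_)
  have hsum : ∑ j, (⟪b j, (ω : E)⟫ : ℂ) ^ 2 = 1 := by
    exact_mod_cast (b.sum_sq_inner_right (ω : E)).trans (by simp)
  simp only [← Finset.sum_mul, ← sq, mul_pow, I_sq, neg_mul, one_mul, Finset.sum_neg_distrib,
    hsum, Pi.one_apply]

theorem hasDerivAt_sphereFourier_inner {ι : Type*} [Fintype ι] (b : OrthonormalBasis ι ℝ E) (i : ι)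
    (hr : r ≠ 0) :
    HasDerivAt (fun r : ℝ ↦ sphereFourier (fun ω ↦ I * ⟪b i, ω⟫) (r • b i))
      (-sphereFourier 1 (r • b i) -
        (Module.finrank ℝ E - 1) / r * sphereFourier (fun ω ↦ I * ⟪b i, ω⟫) (r • b i)) r := by
  classical
  refine (hasDerivAt_sphereFourier_smul (by fun_prop) (b i) r).congr_deriv ?_
  have hr' : (r : ℂ) ≠ 0 := ofReal_ne_zero.2 hr
  have hother : ∀ j ∈ Finset.univ.erase i,
      sphereFourier (fun ω ↦ I * ⟪b j, ω⟫ * (I * ⟪b j, ω⟫)) (r • b i) =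
        sphereFourier (fun ω ↦ I * ⟪b i, ω⟫) (r • b i) / r := fun j hj ↦ by
    rw [eq_div_iff hr', mul_comm]
    exact mul_sphereFourier_inner_mul_inner (b.orthonormal.2 (Finset.ne_of_mem_erase hj).symm)
      (by simp) r
  have hsum := sum_sphereFourier_inner_mul_inner b (r • b i)
  rw [← Finset.add_sum_erase _ _ (Finset.mem_univ i), Finset.sum_congr rfl hother,
    Finset.sum_const, Finset.card_erase_of_mem (Finset.mem_univ i), Finset.card_univ, nsmul_eq_mul,
    Nat.cast_pred (Fintype.card_pos_iff.2 ⟨i⟩), ← Module.finrank_eq_card_basis b.toBasis] at hsum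
  rw [← hsum]
  ring

end SphereFourier

/-- The Liouville substitution `u = r ^ k * g`, which removes the first-order term of the Bessel
equation. -/
theorem hasDerivAt_rpow_mul_of_bessel {g g' : ℝ → ℂ} {r : ℝ} (k : ℝ) (hr : 0 < r)
    (hg : HasDerivAt g (g' r) r) (hg' : HasDerivAt g' (-g r - 2 * k / r * g' r) r) :
    HasDerivAt (fun r ↦ ((k * r ^ (k - 1) : ℝ) : ℂ) * g r + ((r ^ k : ℝ) : ℂ) * g' r)
      ((k * (k - 1) / r ^ 2 - 1) • (((r ^ k : ℝ) : ℂ) * g r)) r := by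
  refine (((((Real.hasDerivAt_rpow_const (p := k - 1) (Or.inl hr.ne')).const_mul
    k).ofReal_comp).mul hg).add (((Real.hasDerivAt_rpow_const
    (p := k) (Or.inl hr.ne')).ofReal_comp).mul hg')).congr_deriv ?_
  have hr' : (r : ℂ) ≠ 0 := ofReal_ne_zero.2 hr.ne'
  rw [Real.rpow_sub_one hr.ne', Real.rpow_sub_one hr.ne', real_smul]
  push_cast
  field_simp
  ring

section RadialIntegral

open Metric Module

variable {E : Type*} [NormedAddCommGroup E] [InnerProductSpace ℝ E] [FiniteDimensional ℝ E]
  [MeasurableSpace E] [BorelSpace E]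

theorem continuous_sphereFourier_smul {c : E → ℂ} (hc : Continuous c) (x : E) :
    Continuous fun r : ℝ ↦ sphereFourier c (r • x) :=
  continuous_iff_continuousAt.2 fun r ↦ (hasDerivAt_sphereFourier_smul hc x r).continuousAt

theorem IsSymbolOn.integrableOn_Ioc {f : ℝ → ℂ} {s W R : ℝ} (hs : -1 < s)
    (hf : IsSymbolOn f s W (Ioi 0)) (hR : 0 ≤ R) : IntegrableOn f (Ioc 0 R) := by
  have hrpow : IntegrableOn (fun r : ℝ ↦ W * r ^ s) (Ioc 0 R) :=
    ((intervalIntegrable_iff_integrableOn_Ioc_of_le hR).1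
      (intervalIntegral.intervalIntegrable_rpow' hs)).const_mul W
  exact hrpow.mono' ((hf.continuousOn.mono Ioc_subset_Ioi_self).aestronglyMeasurable
    measurableSet_Ioc) ((ae_restrict_mem measurableSet_Ioc).mono fun r hr ↦ hf.norm_le r hr.1)

theorem IsSymbolOn.integrableOn_Ioi {f : ℝ → ℂ} {s W R : ℝ} (hs : -1 < s)
    (hf : IsSymbolOn f s W (Ioi 0)) (hR : ∀ r, R ≤ r → f r = 0) : IntegrableOn f (Ioi 0) :=
  (hf.integrableOn_Ioc hs (le_max_left 0 R)).of_forall_sdiff_eq_zero measurableSet_Ioi fun r hr ↦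
    hR r (not_lt.1 fun h ↦ hr.2 ⟨hr.1, h.le.trans (le_max_right _ _)⟩)

variable (E) in
theorem exists_sphereFourier_eq_halfWave_add [Nontrivial E] :
    ∃ (α : ℝ → ℝ → ℂ) (A : ℝ), (∀ ε : ℝ, |ε| = 1 → IsSymbolOn (α ε) 0 A (Ici 1)) ∧
      ∀ x : E, ((‖x‖ ^ (((finrank ℝ E : ℝ) - 1) / 2) : ℝ) : ℂ) * sphereFourier 1 x =
        exp (I * ((1 * ‖x‖ : ℝ) : ℂ)) * α 1 ‖x‖ + exp (I * ((-1 * ‖x‖ : ℝ) : ℂ)) * α (-1) ‖x‖ := by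
  set k : ℝ := ((finrank ℝ E : ℝ) - 1) / 2 with hk
  set b := stdOrthonormalBasis ℝ E
  set e : E := b ⟨0, finrank_pos⟩
  have he : ‖e‖ = 1 := b.norm_eq_one _
  have hg : ∀ r : ℝ, HasDerivAt (fun r : ℝ ↦ sphereFourier 1 (r • e))
      (sphereFourier (fun ω ↦ I * ⟪e, ω⟫) (r • e)) r := fun r ↦ by
    simpa only [Pi.one_apply, one_mul] using hasDerivAt_sphereFourier_smul continuous_one e r
  set u : ℝ → ℂ := fun r ↦ ((r ^ k : ℝ) : ℂ) * sphereFourier 1 (r • e)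
  set u' : ℝ → ℂ := fun r ↦ ((k * r ^ (k - 1) : ℝ) : ℂ) * sphereFourier 1 (r • e) +
    ((r ^ k : ℝ) : ℂ) * sphereFourier (fun ω ↦ I * ⟪e, ω⟫) (r • e)
  have hpos : ∀ r ∈ Ici (1 : ℝ), 0 < r := fun r hr ↦ one_pos.trans_le hr
  have hu : ∀ r ∈ Ici (1 : ℝ), HasDerivAt u (u' r) r := fun r hr ↦
    (Real.hasDerivAt_rpow_const (Or.inl (hpos r hr).ne')).ofReal_comp.mul (hg r)
  have hu' : ∀ r ∈ Ici (1 : ℝ), HasDerivAt u' ((k * (k - 1) / r ^ 2 - 1) • u r) r := fun r hr ↦ by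
    refine hasDerivAt_rpow_mul_of_bessel k (hpos r hr) (hg r) ?_
    refine (hasDerivAt_sphereFourier_inner b ⟨0, finrank_pos⟩ (hpos r hr).ne').congr_deriv ?_
    rw [hk]
    push_cast
    ring
  obtain ⟨A, hA⟩ := exists_isSymbolOn_halfWaveAmplitude (abs_nonneg (k * (k - 1))) hu hu'
    (continuousOn_const.div (by fun_prop) fun r hr ↦ (pow_pos (hpos r hr) 2).ne')
    fun r _ ↦ by rw [abs_div, abs_sq]
  refine ⟨halfWaveAmplitude u u', A, hA, fun x ↦ ?_⟩
  rw [← eq_exp_mul_halfWaveAmplitude_add, sphereFourier_one_eq_of_norm_eq (y := ‖x‖ • e)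
    (by rw [norm_smul, norm_norm, he, mul_one])]

variable (E) in
theorem exists_integralBoundedOn_exp_rpow_mul_sphereFourier [Nontrivial E] {m : ℝ} (hm : 1 < m) :
    ∃ C : ℝ, 0 ≤ C ∧ ∀ (t W : ℝ) (f : ℝ → ℂ) (x : E), ‖x‖ = 1 →
      IsSymbolOn f ((finrank ℝ E : ℝ) / 2 - 1) W (Ici 1) →
      IntegralBoundedOn (fun r ↦ exp (I * ((t * r ^ m : ℝ) : ℂ)) * f r * sphereFourier 1 (r • x))
        (Ici 1) (C * W) := by
  obtain ⟨K, hK, hbound⟩ := exists_integralBoundedOn_exp_rpow_phase_mul hm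
  obtain ⟨α, A, hα, hwave⟩ := exists_sphereFourier_eq_halfWave_add E
  set k : ℝ := ((finrank ℝ E : ℝ) - 1) / 2 with hk
  have hA : 0 ≤ A := (hα 1 abs_one).nonneg self_mem_Ici one_pos
  refine ⟨K * (2 * (2 * max 1 |-k|) * A) + K * (2 * (2 * max 1 |-k|) * A), by positivity,
    fun t W f x hx hf ↦ ?_⟩
  have hsub : Ici (1 : ℝ) ⊆ Ioi 0 := Ici_subset_Ioi.2 one_pos
  have hsymbol : ∀ ε : ℝ, |ε| = 1 → IsSymbolOn (fun r ↦ f r * ((r ^ (-k) : ℝ) : ℂ) * α ε r)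
      (-(1 / 2)) (2 * (2 * W * max 1 |-k|) * A) (Ici 1) := fun ε hε ↦ by
    have := ((hf.mul hsub ((IsSymbolOn.rpow (-k)).mono hsub)).mul hsub (hα ε hε))
    convert this using 1
    rw [hk]
    ring
  have hneg : |(-1 : ℝ)| = 1 := by rw [abs_neg, abs_one]
  have hsum := IntegralBoundedOn.add
    ((hsymbol 1 abs_one).continuousOn_exp_rpow_phase_mul (t := t) (zero_le_one.trans hm.le))
    ((hsymbol (-1) hneg).continuousOn_exp_rpow_phase_mul (t := t) (zero_le_one.trans hm.le))
    (hbound 1 t _ _ abs_one (hsymbol 1 abs_one)) (hbound (-1) t _ _ hneg (hsymbol (-1) hneg))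
  intro a ha b hb hab
  refine (congrArg norm (intervalIntegral.integral_congr fun r hr ↦ ?_)).trans_le
    ((hsum a ha b hb hab).trans_eq (by ring))
  have hr : 0 < r := hsub (OrdConnected.uIcc_subset ordConnected_Ici ha hb hr)
  have hrx := hwave (r • x)
  rw [norm_smul, hx, mul_one, Real.norm_of_nonneg hr.le] at hrx
  have hcancel : ((r ^ (-k) : ℝ) : ℂ) * ((r ^ k : ℝ) : ℂ) = 1 := by
    rw [← ofReal_mul, ← Real.rpow_add hr, neg_add_cancel, Real.rpow_zero, ofReal_one]
  simp only [ofReal_add _ (t * r ^ m), mul_add, exp_add]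
  linear_combination exp (I * ((t * r ^ m : ℝ) : ℂ)) * f r * (((r ^ (-k) : ℝ) : ℂ) * hrx -
    sphereFourier 1 (r • x) * hcancel)

theorem IsSymbolOn.norm_integral_zero_one_mul_le {f g : ℝ → ℂ} {s W S : ℝ} (hs : -1 < s)
    (hf : IsSymbolOn f s W (Ioi 0)) (hg : ∀ r, ‖g r‖ ≤ S) :
    ‖∫ r in (0 : ℝ)..1, f r * g r‖ ≤ S / (s + 1) * W := by
  have hrpow := (intervalIntegral.intervalIntegrable_rpow' (a := 0) (b := 1) hs).const_mul (W * S)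
  refine (intervalIntegral.norm_integral_le_of_norm_le zero_le_one (.of_forall fun r hr ↦ ?_)
    hrpow).trans_eq ?_
  · rw [norm_mul, mul_right_comm]
    exact mul_le_mul (hf.norm_le r hr.1) (hg r) (norm_nonneg _)
      ((norm_nonneg _).trans (hf.norm_le r hr.1))
  · rw [intervalIntegral.integral_const_mul, integral_rpow (Or.inl hs), Real.one_rpow,
      Real.zero_rpow (by linarith), sub_zero]
    ring

variable (E) in
theorem exists_norm_integral_Ioi_exp_rpow_mul_sphereFourier_le [Nontrivial E] {m : ℝ}
    (hm : 1 < m) :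
    ∃ C : ℝ, 0 ≤ C ∧ ∀ (t W R : ℝ) (f : ℝ → ℂ) (x : E), ‖x‖ = 1 →
      IsSymbolOn f ((finrank ℝ E : ℝ) / 2 - 1) W (Ioi 0) → (∀ r, R ≤ r → f r = 0) →
      ‖∫ r in Ioi (0 : ℝ), exp (I * ((t * r ^ m : ℝ) : ℂ)) * f r * sphereFourier 1 (r • x)‖ ≤
        C * W := by
  obtain ⟨C, hC, hbound⟩ := exists_integralBoundedOn_exp_rpow_mul_sphereFourier E hm
  set S := (volume : Measure E).toSphere.real univ
  have hs : -1 < (finrank ℝ E : ℝ) / 2 - 1 := by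
    have := Nat.cast_pos (α := ℝ).2 (finrank_pos (R := ℝ) (M := E))
    linarith
  have hs' : 0 < (finrank ℝ E : ℝ) / 2 - 1 + 1 := by linarith
  refine ⟨S / ((finrank ℝ E : ℝ) / 2 - 1 + 1) + C, by positivity, fun t W R f x hx hf hR ↦ ?_⟩
  set F : ℝ → ℂ := fun r ↦ exp (I * ((t * r ^ m : ℝ) : ℂ)) * f r * sphereFourier 1 (r • x)
  have hphase : Continuous fun r : ℝ ↦ r ^ m := Real.continuous_rpow_const (zero_le_one.trans hm.le)
  have hFf : F = fun r ↦ f r * (exp (I * ((t * r ^ m : ℝ) : ℂ)) * sphereFourier 1 (r • x)) :=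
    funext fun r ↦ (mul_assoc _ _ _).trans (mul_left_comm _ _ _)
  have hg : ∀ r, ‖exp (I * ((t * r ^ m : ℝ) : ℂ)) * sphereFourier 1 (r • x)‖ ≤ S := fun r ↦ by
    rw [norm_exp_I_mul_ofReal_mul]
    exact norm_sphereFourier_one_le _
  have hint : IntegrableOn F (Ioi 0) := by
    have hgc := continuous_sphereFourier_smul continuous_one x
    rw [hFf]
    exact (hf.integrableOn_Ioi hs hR).mul_bdd (by fun_prop) (.of_forall hg)
  have hint1 : IntegrableOn F (Ioi 1) := hint.mono_set (Ioi_subset_Ioi zero_le_one)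
  rw [← intervalIntegral.integral_interval_add_Ioi hint hint1, add_mul]
  refine norm_add_le_of_le ?_ ?_
  · rw [hFf]
    exact hf.norm_integral_zero_one_mul_le hs hg
  · exact (hbound t W f x hx (hf.mono (Ici_subset_Ioi.2 one_pos))).norm_integral_Ioi_le hint1

end RadialIntegral

section Polar

open Metric Module

variable {F : Type*} [NormedAddCommGroup F] [NormedSpace ℝ F]

theorem integral_volumeIoiPow (n : ℕ) (f : ℝ → F) :
    ∫ r : Ioi (0 : ℝ), f r ∂Measure.volumeIoiPow n = ∫ r in Ioi (0 : ℝ), r ^ n • f r := by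
  simp only [Measure.volumeIoiPow, ENNReal.ofReal]
  rw [integral_withDensity_eq_integral_smul (measurable_subtype_coe.pow_const _).real_toNNReal,
    integral_subtype_comap measurableSet_Ioi fun r ↦ Real.toNNReal (r ^ n) • f r]
  refine setIntegral_congr_fun measurableSet_Ioi fun r hr ↦ ?_
  rw [NNReal.smul_def, Real.coe_toNNReal _ (pow_nonneg (le_of_lt hr) _)]

theorem integral_eq_integral_Ioi_smul_integral_sphere {E : Type*} [NormedAddCommGroup E]
    [NormedSpace ℝ E] [FiniteDimensional ℝ E] [Nontrivial E] [MeasurableSpace E] [BorelSpace E]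
    (μ : Measure E) [μ.IsAddHaarMeasure] {f : E → F} (hf : Integrable f μ) :
    ∫ x, f x ∂μ = ∫ r in Ioi (0 : ℝ),
      r ^ (finrank ℝ E - 1) • ∫ ω : sphere (0 : E) 1, f (r • ω) ∂μ.toSphere := by
  set e := homeomorphUnitSphereProd E
  set G : sphere (0 : E) 1 × Ioi (0 : ℝ) → F := fun p ↦ f ((p.2 : ℝ) • (p.1 : E))
  have hG : G ∘ e = f ∘ Subtype.val := funext fun x ↦
    congrArg (f ∘ Subtype.val) (e.symm_apply_apply x)
  have hmp := μ.measurePreserving_homeomorphUnitSphereProd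
  have hint : Integrable G (μ.toSphere.prod (.volumeIoiPow (finrank ℝ E - 1))) := by
    rw [← hmp.integrable_comp_emb e.measurableEmbedding, hG,
      ← integrableOn_iff_comap_subtypeVal (measurableSet_singleton _).compl, IntegrableOn,
      restrict_compl_singleton]
    exact hf
  calc ∫ x, f x ∂μ = ∫ x : ({0}ᶜ : Set E), (G ∘ e) x ∂μ.comap (↑) := by
        rw [hG]
        refine Eq.trans ?_ (integral_subtype_comap (measurableSet_singleton _).compl f).symm
        rw [restrict_compl_singleton]
    _ = ∫ p, G p ∂μ.toSphere.prod (.volumeIoiPow (finrank ℝ E - 1)) :=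
        hmp.integral_comp e.measurableEmbedding G
    _ = _ := by
        rw [integral_prod_symm _ hint]
        exact integral_volumeIoiPow _ fun r ↦ ∫ ω : sphere (0 : E) 1, f (r • ω) ∂μ.toSphere

end Polar

section RadialMultiplier

theorem IsSymbolOn.pow_pred_mul {a : ℝ → ℂ} {n : ℕ} {W : ℝ} (hn : 0 < n)
    (ha : IsSymbolOn a (-((n : ℝ) / 2)) W (Ioi 0)) :
    IsSymbolOn (fun r ↦ ((r ^ (n - 1) : ℝ) : ℂ) * a r) ((n : ℝ) / 2 - 1)
      (2 * max 1 |(n : ℝ) - 1| * W) (Ioi 0) := by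
  have h := (IsSymbolOn.rpow ((n : ℝ) - 1)).mul Subset.rfl ha
  rw [show (n : ℝ) - 1 + -((n : ℝ) / 2) = (n : ℝ) / 2 - 1 by ring] at h
  rw [← Nat.cast_pred hn] at h ⊢
  simpa only [Real.rpow_natCast] using h

open Module

variable {E : Type*} [NormedAddCommGroup E] [InnerProductSpace ℝ E] [FiniteDimensional ℝ E]
  [MeasurableSpace E] [BorelSpace E]

theorem integral_exp_phase_mul_norm_eq_smul {m t : ℝ} {x : E} (hx : x ≠ 0) (a : ℝ → ℂ) :
    ∫ ξ : E, exp (I * ((⟪x, ξ⟫ + t * ‖ξ‖ ^ m : ℝ) : ℂ)) * a ‖ξ‖ =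
      (‖x‖ ^ finrank ℝ E)⁻¹ •
        ∫ ξ : E, exp (I * ((⟪‖x‖⁻¹ • x, ξ⟫ + t * ‖x‖ ^ (-m) * ‖ξ‖ ^ m : ℝ) : ℂ)) *
          a (‖x‖⁻¹ * ‖ξ‖) := by
  have hx0 : 0 < ‖x‖ := norm_pos_iff.2 hx
  rw [eq_inv_smul_iff₀ (pow_pos hx0 _).ne', ← Measure.integral_comp_inv_smul_of_nonneg volume _
    (norm_nonneg x)]
  refine integral_congr_ae (.of_forall fun ξ ↦ ?_)
  simp only [inner_smul_left, inner_smul_right, norm_smul, norm_inv, norm_norm, conj_trivial,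
    Real.mul_rpow (inv_nonneg.2 hx0.le) (norm_nonneg ξ), Real.inv_rpow hx0.le,
    Real.rpow_neg hx0.le, mul_assoc]

variable [Nontrivial E]

theorem IsSymbolOn.integrable_exp_phase_mul_norm {a : ℝ → ℂ} {m t W R : ℝ} (hm : 0 ≤ m) (x : E)
    (ha : IsSymbolOn a (-((finrank ℝ E : ℝ) / 2)) W (Ioi 0)) (hR : ∀ r, R ≤ r → a r = 0) :
    Integrable fun ξ : E ↦ exp (I * ((⟪x, ξ⟫ + t * ‖ξ‖ ^ m : ℝ) : ℂ)) * a ‖ξ‖ := by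
  have hpos := Nat.cast_pos (α := ℝ).2 (finrank_pos (R := ℝ) (M := E))
  have : Continuous fun r : ℝ ↦ r ^ m := Real.continuous_rpow_const hm
  refine Integrable.bdd_mul (c := 1) ((integrable_fun_norm_addHaar volume).2 ?_)
    (by fun_prop) (.of_forall fun ξ ↦ ?_)
  · simpa only [real_smul] using (ha.pow_pred_mul finrank_pos).integrableOn_Ioi (by linarith)
      fun r hr ↦ by rw [hR r hr, mul_zero]
  · rw [← mul_one (exp _), norm_exp_I_mul_ofReal_mul, norm_one]

theorem integral_exp_phase_mul_norm_eq {a : ℝ → ℂ} {m t W R : ℝ} (hm : 0 ≤ m) (x : E)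
    (ha : IsSymbolOn a (-((finrank ℝ E : ℝ) / 2)) W (Ioi 0)) (hR : ∀ r, R ≤ r → a r = 0) :
    ∫ ξ : E, exp (I * ((⟪x, ξ⟫ + t * ‖ξ‖ ^ m : ℝ) : ℂ)) * a ‖ξ‖ =
      ∫ r in Ioi (0 : ℝ), exp (I * ((t * r ^ m : ℝ) : ℂ)) *
        (((r ^ (finrank ℝ E - 1) : ℝ) : ℂ) * a r) * sphereFourier 1 (r • x) := by
  rw [integral_eq_integral_Ioi_smul_integral_sphere volume
    (ha.integrable_exp_phase_mul_norm hm x hR)]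
  refine setIntegral_congr_fun measurableSet_Ioi fun r hr ↦ ?_
  have hnorm : ∀ ω : Metric.sphere (0 : E) 1, ‖r • (ω : E)‖ = r := fun ω ↦ by
    rw [norm_smul, norm_eq_of_mem_sphere, mul_one, Real.norm_of_nonneg (le_of_lt hr)]
  simp only [sphereFourier, ← integral_const_mul, ← integral_smul, hnorm, inner_smul_right,
    real_inner_smul_left, ofReal_add _ (t * r ^ m), mul_add, exp_add, real_smul, Pi.one_apply]
  congr 1
  ext ω
  ring

variable (E) in
theorem exists_norm_integral_exp_phase_mul_norm_le_of_norm_eq_one {m : ℝ} (hm : 1 < m) :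
    ∃ C : ℝ, 0 ≤ C ∧ ∀ (t W R : ℝ) (a : ℝ → ℂ) (x : E), ‖x‖ = 1 →
      IsSymbolOn a (-((finrank ℝ E : ℝ) / 2)) W (Ioi 0) → (∀ r, R ≤ r → a r = 0) →
      ‖∫ ξ : E, exp (I * ((⟪x, ξ⟫ + t * ‖ξ‖ ^ m : ℝ) : ℂ)) * a ‖ξ‖‖ ≤ C * W := by
  obtain ⟨C, hC, hbound⟩ := exists_norm_integral_Ioi_exp_rpow_mul_sphereFourier_le E hm
  refine ⟨C * (2 * max 1 |(finrank ℝ E : ℝ) - 1|), by positivity, fun t W R a x hx ha hR ↦ ?_⟩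
  rw [integral_exp_phase_mul_norm_eq (zero_le_one.trans hm.le) x ha hR, mul_assoc]
  exact hbound t _ R _ x hx (ha.pow_pred_mul finrank_pos) fun r hr ↦ by rw [hR r hr, mul_zero]

variable (E) in
theorem exists_norm_integral_exp_phase_mul_norm_le {m : ℝ} (hm : 1 < m) :
    ∃ C : ℝ, 0 ≤ C ∧ ∀ (t W R : ℝ) (a : ℝ → ℂ) (x : E), x ≠ 0 →
      IsSymbolOn a (-((finrank ℝ E : ℝ) / 2)) W (Ioi 0) → (∀ r, R ≤ r → a r = 0) →
      ‖∫ ξ : E, exp (I * ((⟪x, ξ⟫ + t * ‖ξ‖ ^ m : ℝ) : ℂ)) * a ‖ξ‖‖ ≤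
        C * W * ‖x‖ ^ (-(finrank ℝ E : ℝ) / 2) := by
  obtain ⟨C, hC, hbound⟩ := exists_norm_integral_exp_phase_mul_norm_le_of_norm_eq_one E hm
  refine ⟨C, hC, fun t W R a x hx ha hR ↦ ?_⟩
  have hx0 : 0 < ‖x‖ := norm_pos_iff.2 hx
  have hunit : ‖‖x‖⁻¹ • x‖ = 1 := by rw [norm_smul, norm_inv, norm_norm, inv_mul_cancel₀ hx0.ne']
  have hscaled := hbound (t * ‖x‖ ^ (-m)) _ (‖x‖ * R) _ _ hunit
    (ha.comp_mul_left (inv_pos.2 hx0)) fun r hr ↦ hR _ ((le_inv_mul_iff₀ hx0).2 hr)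
  rw [integral_exp_phase_mul_norm_eq_smul hx, norm_smul, Real.norm_of_nonneg (by positivity)]
  refine (mul_le_mul_of_nonneg_left hscaled (by positivity)).trans_eq ?_
  have hpow : (‖x‖ ^ finrank ℝ E)⁻¹ * ‖x‖⁻¹ ^ (-((finrank ℝ E : ℝ) / 2)) =
      ‖x‖ ^ (-(finrank ℝ E : ℝ) / 2) := by
    rw [Real.inv_rpow hx0.le, ← Real.rpow_neg hx0.le, ← Real.rpow_natCast, ← Real.rpow_neg hx0.le,
      ← Real.rpow_add hx0]
    congr 1
    ring
  rw [← hpow]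
  ring

end RadialMultiplier

section DyadicCutoff

open Filter Topology Module

theorem IsSymbolOn.of_eventuallyEq {f : ℝ → ℂ} {σ A : ℝ} {s : Set ℝ}
    (h : ∀ r ∈ s, ∃ g : ℝ → ℂ, f =ᶠ[𝓝 r] g ∧ IsSymbolOn g σ A s) : IsSymbolOn f σ A s where
  differentiableAt r hr := by
    obtain ⟨g, hfg, hg⟩ := h r hr
    exact (hg.differentiableAt r hr).congr_of_eventuallyEq hfg
  continuousOn_deriv r hr := by
    obtain ⟨g, hfg, hg⟩ := h r hr
    exact (hg.continuousOn_deriv r hr).congr_of_eventuallyEq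
      (hfg.deriv.filter_mono nhdsWithin_le_nhds) hfg.deriv_eq
  norm_le r hr := by
    obtain ⟨g, hfg, hg⟩ := h r hr
    exact hfg.eq_of_nhds ▸ hg.norm_le r hr
  norm_deriv_le r hr := by
    obtain ⟨g, hfg, hg⟩ := h r hr
    exact hfg.deriv_eq ▸ hg.norm_deriv_le r hr

theorem IsSymbolOn.sum {ι : Type*} (u : Finset ι) {f : ι → ℝ → ℂ} {σ A : ℝ} {s : Set ℝ}
    (hf : ∀ i ∈ u, IsSymbolOn (f i) σ A s) :
    IsSymbolOn (fun r ↦ ∑ i ∈ u, f i r) σ (u.card * A) s := by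
  refine .of_hasDerivAt
    (fun r hr ↦ .fun_sum fun i hi ↦ ((hf i hi).differentiableAt r hr).hasDerivAt)
    (continuousOn_finsetSum _ fun i hi ↦ (hf i hi).continuousOn_deriv) (fun r hr ↦ ?_)
    (fun r hr ↦ ?_)
  · refine (norm_sum_le_of_le u fun i hi ↦ (hf i hi).norm_le r hr).trans_eq ?_
    rw [Finset.sum_const, nsmul_eq_mul, mul_assoc]
  · refine (norm_sum_le_of_le u fun i hi ↦ (hf i hi).norm_deriv_le r hr).trans_eq ?_
    rw [Finset.sum_const, nsmul_eq_mul, mul_assoc]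

theorem IsSymbolOn.zero {A : ℝ} (σ : ℝ) (hA : 0 ≤ A) : IsSymbolOn (fun _ ↦ 0) σ A (Ioi 0) := by
  refine .of_hasDerivAt (fun r _ ↦ hasDerivAt_const r 0) continuousOn_const
    (fun r hr ↦ ?_) (fun r hr ↦ ?_)
  all_goals
    rw [norm_zero]
    exact mul_nonneg hA (Real.rpow_nonneg (le_of_lt hr) _)

theorem exists_isSymbolOn_of_hasCompactSupport {f : ℝ → ℂ} (hf : ContDiff ℝ 1 f)
    (hsupp : HasCompactSupport f) : ∃ W : ℝ, 0 ≤ W ∧ IsSymbolOn f 0 W (Ioi 0) := by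
  have hf' : Continuous (deriv f) := hf.continuous_deriv le_rfl
  obtain ⟨A, hA⟩ := hsupp.exists_bound_of_continuous hf.continuous
  obtain ⟨B, hB⟩ := (hsupp.deriv.mul_left (f := fun r : ℝ ↦ (r : ℂ))).exists_bound_of_continuous
    (continuous_ofReal.mul hf')
  refine ⟨max A B, (norm_nonneg _).trans ((hA 0).trans (le_max_left _ _)),
    fun r _ ↦ (hf.differentiable one_ne_zero).differentiableAt, hf'.continuousOn, fun r _ ↦ ?_,
    fun r hr ↦ ?_⟩
  · rw [Real.rpow_zero, mul_one]
    exact (hA r).trans (le_max_left _ _)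
  · rw [zero_sub, Real.rpow_neg_one, ← div_eq_mul_inv, le_div_iff₀' hr]
    refine le_trans ?_ ((hB r).trans (le_max_right _ _))
    rw [Pi.mul_apply, norm_mul, norm_real, Real.norm_of_nonneg (le_of_lt hr)]

/-- The sum `φ_{≤ N}` of the dyadic dilates of `φ` living at the frequencies `2 ^ k`, `k ≤ N`. -/
noncomputable def dyadicCutoff (φ : ℝ → ℝ) (N : ℤ) (r : ℝ) : ℝ :=
  ∑' k : ℤ, if k ≤ N then φ ((2 : ℝ) ^ (-k) * r) else 0

variable {φ : ℝ → ℝ} {N n k : ℤ} {r : ℝ}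

theorem zpow_mem_Ioo_of_ne_zero (hsupp : Function.support φ ⊆ Ioo (1 / 2) 2)
    (h : φ ((2 : ℝ) ^ (-k) * r) ≠ 0) : r ∈ Ioo ((2 : ℝ) ^ (k - 1)) (2 ^ (k + 1)) := by
  have h2 : (0 : ℝ) < 2 ^ k := by positivity
  obtain ⟨hlow, hhigh⟩ := hsupp h
  rw [zpow_neg, lt_inv_mul_iff₀ h2] at hlow
  rw [zpow_neg, inv_mul_lt_iff₀ h2] at hhigh
  rw [zpow_sub_one₀ two_ne_zero, zpow_add_one₀ two_ne_zero, ← one_div]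
  exact ⟨hlow, hhigh⟩

theorem dyadicCutoff_eq_zero (hsupp : Function.support φ ⊆ Ioo (1 / 2) 2)
    (hr : (2 : ℝ) ^ (N + 1) ≤ r) : dyadicCutoff φ N r = 0 := by
  refine (tsum_congr fun k ↦ ?_).trans tsum_zero
  split_ifs with hk
  · by_contra h
    exact ((zpow_mem_Ioo_of_ne_zero hsupp h).2.trans_le
      (zpow_le_zpow_right₀ one_le_two (add_le_add_left hk 1))).not_ge hr
  · rfl

theorem dyadicCutoff_eq_sum (hsupp : Function.support φ ⊆ Ioo (1 / 2) 2)
    (hr : r ∈ Ioo ((2 : ℝ) ^ (n - 1)) (2 ^ (n + 1))) :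
    dyadicCutoff φ N r =
      ∑ k ∈ Finset.Icc (n - 1) (n + 1), if k ≤ N then φ ((2 : ℝ) ^ (-k) * r) else 0 := by
  refine tsum_eq_sum fun k hk ↦ ?_
  split_ifs
  · by_contra h
    have hkr := zpow_mem_Ioo_of_ne_zero hsupp h
    have hkn := (zpow_lt_zpow_iff_right₀ one_lt_two).1 (hkr.1.trans hr.2)
    have hnk := (zpow_lt_zpow_iff_right₀ one_lt_two).1 (hr.1.trans hkr.2)
    exact hk (Finset.mem_Icc.2 (by omega))
  · rfl

theorem exists_isSymbolOn_dyadicCutoff (hφ : ContDiff ℝ 1 φ)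
    (hsupp : Function.support φ ⊆ Ioo (1 / 2) 2) :
    ∃ W : ℝ, ∀ N : ℤ, IsSymbolOn (fun r ↦ (dyadicCutoff φ N r : ℂ)) 0 W (Ioi 0) := by
  have hcompact : HasCompactSupport φ := .of_support_subset_isCompact isCompact_Icc
    (hsupp.trans Ioo_subset_Icc_self)
  obtain ⟨W, hW, hφW⟩ := exists_isSymbolOn_of_hasCompactSupport
    (f := fun r ↦ (φ r : ℂ)) (ofRealCLM.contDiff.comp hφ) (hcompact.comp_left ofReal_zero)
  refine ⟨3 * W, fun N ↦ ?_⟩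
  have hterm : ∀ k : ℤ, IsSymbolOn
      (fun r ↦ ((if k ≤ N then φ ((2 : ℝ) ^ (-k) * r) else 0 : ℝ) : ℂ)) 0 W (Ioi 0) := fun k ↦ by
    split_ifs
    · simpa only [Real.rpow_zero, mul_one] using hφW.comp_mul_left (zpow_pos two_pos (-k))
    · simpa only [ofReal_zero] using IsSymbolOn.zero 0 hW
  refine .of_eventuallyEq fun r hr ↦ ?_
  obtain ⟨n, hnr, hrn⟩ := exists_mem_Ico_zpow (show 0 < r from hr) one_lt_two
  have hnear : Ioo ((2 : ℝ) ^ (n - 1)) (2 ^ (n + 1)) ∈ 𝓝 r :=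
    Ioo_mem_nhds ((zpow_lt_zpow_right₀ one_lt_two (sub_one_lt n)).trans_le hnr) hrn
  refine ⟨_, mem_of_superset hnear fun y hy ↦ (congrArg ((↑) : ℝ → ℂ)
    (dyadicCutoff_eq_sum hsupp hy)).trans (ofReal_sum _ _), ?_⟩
  have hcard : (Finset.Icc (n - 1) (n + 1)).card = 3 := by
    rw [Int.card_Icc]
    omega
  have hsum := IsSymbolOn.sum (Finset.Icc (n - 1) (n + 1)) fun k _ ↦ hterm k
  rwa [hcard] at hsum

end DyadicCutoff

theorem statement5_general {E : Type*} [NormedAddCommGroup E] [InnerProductSpace ℝ E]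
    [FiniteDimensional ℝ E] [Nontrivial E] [MeasurableSpace E] [BorelSpace E] {m : ℝ} (hm : 1 < m)
    {φ : ℝ → ℝ} (hφ : ContDiff ℝ 1 φ) (hφsupp : Function.support φ ⊆ Ioo (1 / 2 : ℝ) 2) :
    ∃ C : ℝ, 0 < C ∧ ∀ (N : ℤ) (t : ℝ) (x : E), x ≠ 0 →
      ‖∫ ξ : E, exp (I * ((⟪x, ξ⟫ + t * ‖ξ‖ ^ m : ℝ) : ℂ)) *
          ((∑' k : ℤ, if k ≤ N then φ ((2 : ℝ) ^ (-k) * ‖ξ‖) else 0) /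
            ‖ξ‖ ^ ((Module.finrank ℝ E : ℝ) / 2) : ℝ)‖ ≤
        C * ‖x‖ ^ (-(Module.finrank ℝ E : ℝ) / 2) := by
  obtain ⟨C, hC, hmultiplier⟩ := exists_norm_integral_exp_phase_mul_norm_le E hm
  obtain ⟨W, hcutoff⟩ := exists_isSymbolOn_dyadicCutoff hφ hφsupp
  have hsymbol := fun N ↦
    (hcutoff N).mul Subset.rfl (IsSymbolOn.rpow (-((Module.finrank ℝ E : ℝ) / 2)))
  simp only [zero_add] at hsymbol
  have hW : 0 ≤ W := (hcutoff 0).nonneg (mem_Ioi.2 one_pos) one_pos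
  refine ⟨C * (2 * W * max 1 |-((Module.finrank ℝ E : ℝ) / 2)|) + 1, by positivity,
    fun N t x hx ↦ ?_⟩
  have hbound := hmultiplier t _ _ _ x hx (hsymbol N) fun r hr ↦ by
    rw [dyadicCutoff_eq_zero hφsupp hr, ofReal_zero, zero_mul]
  refine (congrArg norm (integral_congr_ae (.of_forall fun ξ ↦ ?_))).trans_le
    (hbound.trans (mul_le_mul_of_nonneg_right (le_add_of_nonneg_right zero_le_one)
      (Real.rpow_nonneg (norm_nonneg x) _)))
  simp only [Real.rpow_neg (norm_nonneg ξ), ← ofReal_mul, ← div_eq_mul_inv]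
  rfl

/-- Let `d ≥ 1`, `m ∈ (1,∞)`, and `φ ∈ C_0^∞` supported in `(1/2,2)` with
`∑_{k ∈ ℤ} φ(2^{-k}r) = 1` for `r > 0`. With `φ_{≤N}(r) = ∑_{k ≤ N} φ(2^{-k}r)`, one has
`sup_t |∫ e^{i(x·ξ + t|ξ|^m)} φ_{≤N}(|ξ|) |ξ|^{-d/2} dξ| ≲ |x|^{-d/2}`
uniformly in `N ∈ ℤ` and `x ≠ 0`. -/
theorem statement5 (d : ℕ) (hd : 1 ≤ d) (m : ℝ) (hm : 1 < m)
    (φ : ℝ → ℝ) (hφ : ContDiff ℝ (⊤ : ℕ∞) φ) (hφsupp : Function.support φ ⊆ Set.Ioo (1/2 : ℝ) 2)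
    (hφsum : ∀ r : ℝ, 0 < r → (∑' k : ℤ, φ ((2 : ℝ) ^ (-k) * r)) = 1) :
    ∃ C : ℝ, 0 < C ∧
      ∀ (N : ℤ) (t : ℝ) (x : EuclideanSpace ℝ (Fin d)), x ≠ 0 →
        ‖∫ ξ : EuclideanSpace ℝ (Fin d),
            Complex.exp (Complex.I * ((⟪x, ξ⟫ + t * ‖ξ‖ ^ m : ℝ) : ℂ)) *
              ((∑' k : ℤ, if k ≤ N then φ ((2 : ℝ) ^ (-k) * ‖ξ‖) else 0) / ‖ξ‖ ^ ((d : ℝ) / 2) : ℝ)‖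
          ≤ C * ‖x‖ ^ (-(d : ℝ) / 2) := by
  have : Nonempty (Fin d) := ⟨⟨0, hd⟩⟩
  simpa only [finrank_euclideanSpace_fin] using statement5_general (E := EuclideanSpace ℝ (Fin d))
    hm (hφ.of_le (by exact_mod_cast le_top)) hφsupp
end

section
/- Let $d \ge 1$, $0 < \lambda < d$, $1 < p_1, p_2 < \infty$, $1 \le a \le \infty$ with $\frac{1}{p_1} + \frac{1}{p_2} + \frac{\lambda}{d} = 2$. Then $\big| \iint_{\mathbb{R}^d \times \mathbb{R}^d} f(x) g(y) |x-y|^{-\lambda} \, dx\, dy \big| \lesssim \|f\|_{L^{p_1,a}} \|g\|_{L^{p_2,a'}}$ for all $f \in L^{p_1,a}(\mathbb{R}^d)$ and $g \in L^{p_2,a'}(\mathbb{R}^d)$, where $a'$ is the Hölder conjugate of $a$. -/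
open MeasureTheory Set
open scoped ENNReal NNReal

/-- The Lorentz `L^{p,a}`-(quasi)norm of an `ℝ≥0∞`-valued function, defined through the
distribution function (for `a < ∞` via the layer-cake formula, for `a = ∞` as the weak
quasinorm, and `L^{∞,·} = L^∞`). -/
noncomputable def lorentzNorm {α : Type*} [MeasurableSpace α] (μ : Measure α)
    (f : α → ℝ≥0∞) (p a : ℝ≥0∞) : ℝ≥0∞ :=
  if p = ∞ then essSup f μ
  else if a = ∞ then ⨆ s : ℝ≥0, (s : ℝ≥0∞) * (μ {x | (s : ℝ≥0∞) < f x}) ^ (1 / p.toReal)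
  else (∫⁻ s in Set.Ioi (0 : ℝ),
      ENNReal.ofReal s ^ (a.toReal - 1) *
        (μ {x | ENNReal.ofReal s < f x}) ^ (a.toReal / p.toReal)) ^ (1 / a.toReal)

/-!
By the layer-cake formula, a bilinear form `∫ f(x) g(y) dρ(x, y)` depends only on the masses
`ρ(A × B)` of products of superlevel sets, and `ρ` is of restricted weak type when these are at
most `C * min (μ A * ν B ^ (1 - γ)) (μ A ^ (1 - γ) * ν B)`. The kernel `max(x, y)^{-γ}` on `(0, ∞)²`
gives each box `(0, α) × (0, β)` at least the mass `min (α * β ^ (1 - γ)) (α ^ (1 - γ) * β)`, so it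
is extremal: the form is at most `C` times the model form evaluated at the decreasing rearrangements
`f*`, `g*`.

Put `cᵢ = 1 - 1/pᵢ`, so that `c₁ + c₂ = γ` by scaling. In terms of `x^{1/p₁} f*(x)` and
`y^{1/p₂} g*(y)` and the measure `dx/x`, the model kernel becomes `x^{c₁} y^{c₂} max(x, y)^{-γ}`.
This is homogeneous of degree `0` with marginals `1/c₁ + 1/c₂`, and hence bounded on `L^a × L^{a'}`
by Schur's test, while `‖x^{1/p} f*‖_{L^a(dx/x)}` is the Lorentz norm up to a constant.

The kernel `|x - y|^{-λ}` lies in weak `L^{d/λ}` in each variable, uniformly in the other, and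
Kolmogorov's inequality turns this into the restricted weak type bound with `γ = λ/d`.
-/

/-- Lebesgue measure on the half-line `(0, ∞)`. -/
noncomputable abbrev posVolume : Measure ℝ := volume.restrict (Ioi 0)

/-- The multiplicatively invariant measure `dx / x` on `(0, ∞)`. -/
noncomputable abbrev invVolume : Measure ℝ :=
  posVolume.withDensity fun x => ENNReal.ofReal x ^ (-1 : ℝ)

theorem ae_posVolume_pos : ∀ᵐ x ∂posVolume, 0 < x := ae_restrict_mem measurableSet_Ioi

theorem ae_invVolume_pos : ∀ᵐ x ∂invVolume, 0 < x :=
  withDensity_absolutelyContinuous _ _ ae_posVolume_pos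

@[fun_prop]
theorem measurable_ofReal_rpow (r : ℝ) : Measurable fun x : ℝ => ENNReal.ofReal x ^ r :=
  ENNReal.measurable_ofReal.pow_const r

theorem ofReal_rpow_mul_ofReal_rpow {x : ℝ} (hx : 0 < x) (r s : ℝ) :
    ENNReal.ofReal x ^ r * ENNReal.ofReal x ^ s = ENNReal.ofReal x ^ (r + s) :=
  (ENNReal.rpow_add _ _ (ENNReal.ofReal_pos.2 hx).ne' ENNReal.ofReal_ne_top).symm

theorem measurableSet_ofReal_lt (c : ℝ≥0∞) : MeasurableSet {s : ℝ | ENNReal.ofReal s < c} :=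
  measurableSet_lt ENNReal.measurable_ofReal measurable_const

theorem setLIntegral_Ioc_rpow {r b : ℝ} (hr : 0 < r) (hb : 0 ≤ b) :
    ∫⁻ x in Ioc 0 b, ENNReal.ofReal x ^ (r - 1) = ENNReal.ofReal b ^ r / ENNReal.ofReal r := by
  have integrable : IntegrableOn (fun x : ℝ => x ^ (r - 1)) (Ioc 0 b) :=
    (intervalIntegrable_iff_integrableOn_Ioc_of_le hb).1
      (intervalIntegral.intervalIntegrable_rpow' (by linarith))
  have nonneg : ∀ᵐ x ∂volume.restrict (Ioc 0 b), 0 ≤ x ^ (r - 1) := by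
    filter_upwards [ae_restrict_mem measurableSet_Ioc] with x hx using Real.rpow_nonneg hx.1.le _
  calc ∫⁻ x in Ioc 0 b, ENNReal.ofReal x ^ (r - 1)
      = ∫⁻ x in Ioc 0 b, ENNReal.ofReal (x ^ (r - 1)) :=
        setLIntegral_congr_fun measurableSet_Ioc fun x hx => ENNReal.ofReal_rpow_of_pos hx.1
    _ = ENNReal.ofReal (b ^ r / r) := by
        rw [← ofReal_integral_eq_lintegral_ofReal integrable nonneg,
          ← intervalIntegral.integral_of_le hb, integral_rpow (.inl (by linarith)), sub_add_cancel,
          Real.zero_rpow hr.ne', sub_zero]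
    _ = ENNReal.ofReal b ^ r / ENNReal.ofReal r := by
        rw [ENNReal.ofReal_div_of_pos hr, ENNReal.ofReal_rpow_of_nonneg hb hr.le]

theorem setLIntegral_Ioi_rpow {r c : ℝ} (hr : 0 < r) (hc : 0 < c) :
    ∫⁻ x in Ioi c, ENNReal.ofReal x ^ (-r - 1) = ENNReal.ofReal c ^ (-r) / ENNReal.ofReal r := by
  have integrable : IntegrableOn (fun x : ℝ => x ^ (-r - 1)) (Ioi c) :=
    integrableOn_Ioi_rpow_of_lt (by linarith) hc
  have nonneg : ∀ᵐ x ∂volume.restrict (Ioi c), 0 ≤ x ^ (-r - 1) := by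
    filter_upwards [ae_restrict_mem measurableSet_Ioi] with x hx
      using Real.rpow_nonneg (hc.trans hx).le _
  calc ∫⁻ x in Ioi c, ENNReal.ofReal x ^ (-r - 1)
      = ∫⁻ x in Ioi c, ENNReal.ofReal (x ^ (-r - 1)) :=
        setLIntegral_congr_fun measurableSet_Ioi fun x hx =>
          ENNReal.ofReal_rpow_of_pos (hc.trans hx)
    _ = ENNReal.ofReal (c ^ (-r) / r) := by
        rw [← ofReal_integral_eq_lintegral_ofReal integrable nonneg,
          integral_Ioi_rpow_of_lt (by linarith) hc, sub_add_cancel, neg_div_neg_eq]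
    _ = ENNReal.ofReal c ^ (-r) / ENNReal.ofReal r := by
        rw [ENNReal.ofReal_div_of_pos hr, ENNReal.ofReal_rpow_of_pos hc]

theorem restrict_posVolume_ofReal_lt {c : ℝ≥0∞} (hc : c ≠ ∞) :
    posVolume.restrict {s | ENNReal.ofReal s < c} = volume.restrict (Ioo 0 c.toReal) := by
  rw [Measure.restrict_restrict (measurableSet_ofReal_lt c)]
  congr 1
  ext s
  rw [mem_inter_iff, and_comm]
  exact and_congr_right fun hs : 0 < s => ENNReal.ofReal_lt_iff_lt_toReal hs.le hc

theorem setLIntegral_ofReal_lt_rpow {r : ℝ} (hr : 0 < r) (c : ℝ≥0∞) :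
    ∫⁻ s in {s | ENNReal.ofReal s < c}, ENNReal.ofReal s ^ (r - 1) ∂posVolume
      = c ^ r / ENNReal.ofReal r := by
  have of_ne_top {b : ℝ≥0∞} (hb : b ≠ ∞) :
      ∫⁻ s in {s | ENNReal.ofReal s < b}, ENNReal.ofReal s ^ (r - 1) ∂posVolume
        = b ^ r / ENNReal.ofReal r := by
    rw [restrict_posVolume_ofReal_lt hb, Measure.restrict_congr_set Ioo_ae_eq_Ioc,
      setLIntegral_Ioc_rpow hr ENNReal.toReal_nonneg, ENNReal.ofReal_toReal hb]
  rcases eq_or_ne c ∞ with rfl | hc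
  · rw [ENNReal.top_rpow_of_pos hr, ENNReal.top_div_of_ne_top ENNReal.ofReal_ne_top]
    refine ENNReal.eq_top_of_forall_nnreal_le fun n => ?_
    set b : ℝ≥0∞ := (n * ENNReal.ofReal r) ^ r⁻¹ with b_def
    have hb : b ≠ ∞ := by finiteness
    calc (n : ℝ≥0∞) = b ^ r / ENNReal.ofReal r := by
          rw [b_def, ENNReal.rpow_inv_rpow hr.ne',
            ENNReal.mul_div_cancel_right (ENNReal.ofReal_pos.2 hr).ne' ENNReal.ofReal_ne_top]
      _ ≤ _ := (of_ne_top hb).ge.trans (lintegral_mono_set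
          fun s (hs : ENNReal.ofReal s < b) => hs.trans_le le_top)
  · exact of_ne_top hc

theorem posVolume_ofReal_lt (c : ℝ≥0∞) : posVolume {s | ENNReal.ofReal s < c} = c := by
  simpa using setLIntegral_ofReal_lt_rpow one_pos c

theorem antitone_meas_ofReal_lt {X : Type*} [MeasurableSpace X] (μ : Measure X) (f : X → ℝ≥0∞) :
    Antitone fun s : ℝ => μ {x | ENNReal.ofReal s < f x} := fun _ _ h =>
  measure_mono fun _ hx => (ENNReal.ofReal_le_ofReal h).trans_lt hx

section LayerCake

variable {X : Type*} [MeasurableSpace X] (ρ : Measure X) [SFinite ρ] {F G : X → ℝ≥0∞}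

theorem lintegral_measure_ofReal_lt (hF : Measurable F) (ν : Measure ℝ) [SFinite ν] :
    ∫⁻ x, ν {s | ENNReal.ofReal s < F x} ∂ρ = ∫⁻ s, ρ {x | ENNReal.ofReal s < F x} ∂ν := by
  have hS : MeasurableSet {z : X × ℝ | ENNReal.ofReal z.2 < F z.1} :=
    measurableSet_lt (by fun_prop) (by fun_prop)
  exact (Measure.prod_apply hS).symm.trans (Measure.prod_apply_symm hS)

theorem lintegral_rpow_eq_setLIntegral_meas_lt (hF : Measurable F) {r : ℝ} (hr : 0 < r) :
    ∫⁻ x, F x ^ r ∂ρ = ENNReal.ofReal r *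
      ∫⁻ s in Ioi 0, ENNReal.ofReal s ^ (r - 1) * ρ {x | ENNReal.ofReal s < F x} := by
  have layer := lintegral_measure_ofReal_lt ρ hF
    (posVolume.withDensity fun s => ENNReal.ofReal s ^ (r - 1))
  simp only [withDensity_apply _ (measurableSet_ofReal_lt _), setLIntegral_ofReal_lt_rpow hr,
    div_eq_mul_inv] at layer
  rw [lintegral_mul_const _ (hF.pow_const r), lintegral_withDensity_eq_lintegral_mul _
    (measurable_ofReal_rpow _) (antitone_meas_ofReal_lt ρ F).measurable] at layer
  simp only [Pi.mul_apply] at layer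
  rw [← layer, mul_left_comm, ENNReal.mul_inv_cancel (ENNReal.ofReal_pos.2 hr).ne'
    ENNReal.ofReal_ne_top, mul_one]

theorem lintegral_eq_setLIntegral_meas_lt (hF : Measurable F) :
    ∫⁻ x, F x ∂ρ = ∫⁻ s in Ioi (0 : ℝ), ρ {x | ENNReal.ofReal s < F x} := by
  simpa using lintegral_rpow_eq_setLIntegral_meas_lt ρ hF one_pos

theorem lintegral_mul_eq_setLIntegral_meas_inter (hF : Measurable F) (hG : Measurable G) :
    ∫⁻ x, F x * G x ∂ρ = ∫⁻ s in Ioi (0 : ℝ), ∫⁻ t in Ioi (0 : ℝ),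
      ρ ({x | ENNReal.ofReal s < F x} ∩ {x | ENNReal.ofReal t < G x}) := by
  calc ∫⁻ x, F x * G x ∂ρ = ∫⁻ x, F x ∂ρ.withDensity G := by
        simp [lintegral_withDensity_eq_lintegral_mul _ hG hF, mul_comm]
    _ = ∫⁻ s in Ioi (0 : ℝ), ∫⁻ x in {x | ENNReal.ofReal s < F x}, G x ∂ρ := by
        rw [lintegral_eq_setLIntegral_meas_lt _ hF]
        simp_rw [withDensity_apply _ (measurableSet_lt measurable_const hF)]
    _ = _ := by
        simp_rw [lintegral_eq_setLIntegral_meas_lt (ρ.restrict _) hG,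
          Measure.restrict_apply (measurableSet_lt measurable_const hG), inter_comm]

end LayerCake

/-- The decreasing rearrangement of `f`, as a function on `(0, ∞)` (extended to `ℝ` by its value
at `0`). -/
noncomputable def rearrangement {X : Type*} [MeasurableSpace X] (μ : Measure X) (f : X → ℝ≥0∞)
    (x : ℝ) : ℝ≥0∞ :=
  sInf {s | μ {y | s < f y} ≤ ENNReal.ofReal x}

section Rearrangement

variable {X : Type*} [MeasurableSpace X] (μ : Measure X) (f : X → ℝ≥0∞)

theorem meas_rearrangement_lt_le (x : ℝ) :
    μ {y | rearrangement μ f x < f y} ≤ ENNReal.ofReal x := by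
  obtain ⟨u, u_anti, u_lim, hu⟩ := exists_seq_tendsto_sInf
    (S := {s | μ {y | s < f y} ≤ ENNReal.ofReal x}) ⟨∞, by simp⟩ (OrderBot.bddBelow _)
  calc μ {y | rearrangement μ f x < f y} ≤ μ (⋃ n, {y | u n < f y}) :=
        measure_mono fun y hy => mem_iUnion.2 (u_lim.eventually_lt_const hy).exists
    _ = ⨆ n, μ {y | u n < f y} :=
        Monotone.measure_iUnion fun _ _ h _ hy => (u_anti h).trans_lt hy
    _ ≤ ENNReal.ofReal x := iSup_le hu

theorem lt_rearrangement_iff {x : ℝ} {s : ℝ≥0∞} :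
    s < rearrangement μ f x ↔ ENNReal.ofReal x < μ {y | s < f y} := by
  refine lt_iff_lt_of_le_iff_le ⟨fun h => ?_, fun h => sInf_le h⟩
  exact (measure_mono fun y hy => h.trans_lt hy).trans (meas_rearrangement_lt_le μ f x)

theorem antitone_rearrangement : Antitone (rearrangement μ f) := fun _ _ h =>
  sInf_le_sInf fun _ hs => le_trans hs (ENNReal.ofReal_le_ofReal h)

theorem measurable_rearrangement : Measurable (rearrangement μ f) :=
  (antitone_rearrangement μ f).measurable

theorem rpow_mul_rearrangement_le_lorentzNorm {p x : ℝ} (hp : 0 < p) (hx : 0 < x) :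
    ENNReal.ofReal x ^ (1 / p) * rearrangement μ f x
      ≤ lorentzNorm μ f (ENNReal.ofReal p) ∞ := by
  have hx0 : ENNReal.ofReal x ^ (1 / p) ≠ 0 := by simp [hx]
  have hxt : ENNReal.ofReal x ^ (1 / p) ≠ ∞ := by finiteness
  rw [mul_comm, ← ENNReal.le_div_iff_mul_le (.inl hx0) (.inl hxt)]
  refine ENNReal.le_of_forall_nnreal_lt fun s hs => ?_
  rw [ENNReal.le_div_iff_mul_le (.inl hx0) (.inl hxt), lorentzNorm,
    if_neg ENNReal.ofReal_ne_top, if_pos rfl, ENNReal.toReal_ofReal hp.le]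
  refine le_trans ?_ (le_iSup _ s)
  gcongr
  exact ((lt_rearrangement_iff μ f).1 hs).le

theorem lintegral_rpow_mul_rearrangement_rpow {r b : ℝ} (hr : 0 < r) (hb : 0 < b) :
    ∫⁻ x, (ENNReal.ofReal x ^ b * rearrangement μ f x) ^ r ∂invVolume
      = ENNReal.ofReal b⁻¹ *
        ∫⁻ s in Ioi 0, ENNReal.ofReal s ^ (r - 1) * μ {y | ENNReal.ofReal s < f y} ^ (r * b) := by
  have hrb : 0 < r * b := mul_pos hr hb
  have hf := measurable_rearrangement μ f
  set ν : Measure ℝ := posVolume.withDensity fun x => ENNReal.ofReal x ^ (r * b - 1)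
  have ν_superlevel (s : ℝ) : ν {x | ENNReal.ofReal s < rearrangement μ f x}
      = μ {y | ENNReal.ofReal s < f y} ^ (r * b) / ENNReal.ofReal (r * b) := by
    simp_rw [lt_rearrangement_iff]
    rw [withDensity_apply _ (measurableSet_ofReal_lt _), setLIntegral_ofReal_lt_rpow hrb]
  calc ∫⁻ x, (ENNReal.ofReal x ^ b * rearrangement μ f x) ^ r ∂invVolume
      = ∫⁻ x, rearrangement μ f x ^ r ∂ν := by
        rw [lintegral_withDensity_eq_lintegral_mul _ (by fun_prop) (by fun_prop),
          lintegral_withDensity_eq_lintegral_mul _ (by fun_prop) (by fun_prop)]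
        refine setLIntegral_congr_fun measurableSet_Ioi fun x (hx : 0 < x) => ?_
        simp only [Pi.mul_apply]
        rw [ENNReal.mul_rpow_of_nonneg _ _ hr.le, ← ENNReal.rpow_mul, ← mul_assoc,
          ofReal_rpow_mul_ofReal_rpow hx, neg_add_eq_sub, mul_comm b]
    _ = ENNReal.ofReal r * ∫⁻ s in Ioi 0, ENNReal.ofReal s ^ (r - 1) *
          (μ {y | ENNReal.ofReal s < f y} ^ (r * b) / ENNReal.ofReal (r * b)) := by
        simp_rw [lintegral_rpow_eq_setLIntegral_meas_lt ν hf hr, ν_superlevel]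
    _ = ENNReal.ofReal r * (ENNReal.ofReal (r * b))⁻¹ * ∫⁻ s in Ioi 0,
          ENNReal.ofReal s ^ (r - 1) * μ {y | ENNReal.ofReal s < f y} ^ (r * b) := by
        simp_rw [div_eq_mul_inv, ← mul_assoc]
        rw [lintegral_mul_const' _ _ (ENNReal.inv_ne_top.2 (ENNReal.ofReal_pos.2 hrb).ne')]
        ring
    _ = _ := by
        rw [← ENNReal.ofReal_inv_of_pos hrb, ← ENNReal.ofReal_mul hr.le]
        congr 2
        field_simp

theorem eLpNorm_rpow_mul_rearrangement_le {p : ℝ} (hp : 0 < p) {a : ℝ≥0∞} (ha : a ≠ 0) :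
    eLpNorm (fun x => ENNReal.ofReal x ^ (1 / p) * rearrangement μ f x) a invVolume
      ≤ ENNReal.ofReal p ^ (1 / a).toReal * lorentzNorm μ f (ENNReal.ofReal p) a := by
  rcases eq_or_ne a ∞ with rfl | hat
  · simp only [ENNReal.div_top, ENNReal.toReal_zero, ENNReal.rpow_zero, one_mul,
      eLpNorm_exponent_top]
    refine essSup_le_of_ae_le _ ?_
    filter_upwards [ae_invVolume_pos] with x hx
      using rpow_mul_rearrangement_le_lorentzNorm μ f hp hx
  · have hr : 0 < a.toReal := ENNReal.toReal_pos ha hat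
    have hb : (1 / p)⁻¹ = p := by simp
    simp_rw [eLpNorm_eq_lintegral_rpow_enorm_toReal ha hat, enorm_eq_self,
      lintegral_rpow_mul_rearrangement_rpow μ f hr (one_div_pos.2 hp), hb, lorentzNorm,
      if_neg ENNReal.ofReal_ne_top, if_neg hat, ENNReal.toReal_ofReal hp.le, mul_one_div,
      ENNReal.toReal_div, ENNReal.toReal_one,
      ENNReal.mul_rpow_of_nonneg _ _ (one_div_nonneg.2 hr.le)]
    exact le_rfl

end Rearrangement

section SchurTest

variable {X Y : Type*} [MeasurableSpace X] [MeasurableSpace Y] {μ : Measure X} {ν : Measure Y}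

theorem lintegral_mul_le_eLpNorm_top_mul_eLpNorm_one (F : X → ℝ≥0∞) {G : X → ℝ≥0∞}
    (hG : AEMeasurable G μ) : ∫⁻ x, F x * G x ∂μ ≤ eLpNorm F ∞ μ * eLpNorm G 1 μ := by
  rw [eLpNorm_one_eq_lintegral_enorm, eLpNorm_exponent_top]
  simp_rw [enorm_eq_self]
  rw [← lintegral_const_mul'' _ hG]
  refine lintegral_mono_ae ?_
  filter_upwards [ae_le_eLpNormEssSup (f := F) (μ := μ)] with x hx using mul_le_mul_left hx _

theorem lintegral_mul_le_eLpNorm_mul_eLpNorm {F G : X → ℝ≥0∞} (hF : AEMeasurable F μ)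
    (hG : AEMeasurable G μ) (a a' : ℝ≥0∞) [hconj : a.HolderConjugate a'] :
    ∫⁻ x, F x * G x ∂μ ≤ eLpNorm F a μ * eLpNorm G a' μ := by
  rcases eq_or_ne a ∞ with rfl | ha
  · obtain rfl : a' = 1 := by simpa using hconj.inv_add_inv_eq_inv
    exact lintegral_mul_le_eLpNorm_top_mul_eLpNorm_one F hG
  rcases eq_or_ne a' ∞ with rfl | ha'
  · obtain rfl : a = 1 := by simpa using hconj.inv_add_inv_eq_inv
    simpa only [mul_comm] using lintegral_mul_le_eLpNorm_top_mul_eLpNorm_one G hF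
  have hreal := ENNReal.HolderConjugate.toReal_of_ne_top ha ha'
  have ha0 : a ≠ 0 := (ENNReal.toReal_pos_iff.1 hreal.pos).1.ne'
  have ha0' : a' ≠ 0 := (ENNReal.toReal_pos_iff.1 hreal.symm.pos).1.ne'
  rw [eLpNorm_eq_lintegral_rpow_enorm_toReal ha0 ha,
    eLpNorm_eq_lintegral_rpow_enorm_toReal ha0' ha']
  exact ENNReal.lintegral_mul_le_Lp_mul_Lq μ hreal hF hG

theorem lintegral_mul_le_of_fst_le_of_snd_le {ρ : Measure (X × Y)} {M : ℝ≥0∞}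
    (hfst : ρ.fst ≤ M • μ) (hsnd : ρ.snd ≤ M • ν) {F : X → ℝ≥0∞} {G : Y → ℝ≥0∞}
    (hF : Measurable F) (hG : Measurable G) (a a' : ℝ≥0∞) [hconj : a.HolderConjugate a'] :
    ∫⁻ z, F z.1 * G z.2 ∂ρ ≤ M * (eLpNorm F a μ * eLpNorm G a' ν) := by
  have hexp : (1 / a).toReal + (1 / a').toReal = 1 := by
    rw [← ENNReal.toReal_add (by simp [ENNReal.HolderConjugate.ne_zero a a'])
      (by simp [ENNReal.HolderConjugate.ne_zero a' a])]
    simp [hconj.inv_add_inv_eq_inv]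
  have norm_fst : eLpNorm (F ∘ Prod.fst) a ρ ≤ M ^ (1 / a).toReal * eLpNorm F a μ := by
    rw [← eLpNorm_map_measure hF.aestronglyMeasurable measurable_fst.aemeasurable]
    exact (eLpNorm_mono_measure F hfst).trans (eLpNorm_smul_measure_le M F a _)
  have norm_snd : eLpNorm (G ∘ Prod.snd) a' ρ ≤ M ^ (1 / a').toReal * eLpNorm G a' ν := by
    rw [← eLpNorm_map_measure hG.aestronglyMeasurable measurable_snd.aemeasurable]
    exact (eLpNorm_mono_measure G hsnd).trans (eLpNorm_smul_measure_le M G a' _)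
  calc ∫⁻ z, F z.1 * G z.2 ∂ρ ≤ eLpNorm (F ∘ Prod.fst) a ρ * eLpNorm (G ∘ Prod.snd) a' ρ :=
        lintegral_mul_le_eLpNorm_mul_eLpNorm (hF.comp measurable_fst).aemeasurable
          (hG.comp measurable_snd).aemeasurable a a'
    _ ≤ (M ^ (1 / a).toReal * eLpNorm F a μ) * (M ^ (1 / a').toReal * eLpNorm G a' ν) :=
        mul_le_mul' norm_fst norm_snd
    _ = M * (eLpNorm F a μ * eLpNorm G a' ν) := by
        rw [mul_mul_mul_comm, ← ENNReal.rpow_add_of_nonneg _ _ ENNReal.toReal_nonneg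
          ENNReal.toReal_nonneg, hexp, ENNReal.rpow_one]

variable [SFinite μ] [SFinite ν] {K : X × Y → ℝ≥0∞} {M : ℝ≥0∞}

theorem fst_withDensity_prod_le (hK : Measurable K)
    (hM : ∀ᵐ x ∂μ, ∫⁻ y, K (x, y) ∂ν ≤ M) : ((μ.prod ν).withDensity K).fst ≤ M • μ := by
  refine Measure.le_iff.2 fun A hA => ?_
  calc ((μ.prod ν).withDensity K).fst A = ∫⁻ x in A, ∫⁻ y, K (x, y) ∂ν ∂μ := by
        rw [Measure.fst_apply hA, withDensity_apply _ (measurable_fst hA), ← prod_univ,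
          setLIntegral_prod K hK.aemeasurable, Measure.restrict_univ]
    _ ≤ ∫⁻ _ in A, M ∂μ := lintegral_mono_ae (ae_restrict_of_ae hM)
    _ = (M • μ) A := by simp

theorem snd_withDensity_prod_le (hK : Measurable K)
    (hM : ∀ᵐ y ∂ν, ∫⁻ x, K (x, y) ∂μ ≤ M) : ((μ.prod ν).withDensity K).snd ≤ M • ν := by
  refine Measure.le_iff.2 fun B hB => ?_
  calc ((μ.prod ν).withDensity K).snd B = ∫⁻ y in B, ∫⁻ x, K (x, y) ∂μ ∂ν := by
        rw [Measure.snd_apply hB, withDensity_apply _ (measurable_snd hB), ← univ_prod,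
          setLIntegral_prod_symm K hK.aemeasurable, Measure.restrict_univ]
    _ ≤ ∫⁻ _ in B, M ∂ν := lintegral_mono_ae (ae_restrict_of_ae hM)
    _ = (M • ν) B := by simp

end SchurTest

/-- The measure `max(x, y) ^ (-γ) dx dy` on `(0, ∞)²`, the model to which bilinear forms with a
kernel of weak type are compared. -/
noncomputable def maxMeasure (γ : ℝ) : Measure (ℝ × ℝ) :=
  (posVolume.prod posVolume).withDensity fun z => ENNReal.ofReal (max z.1 z.2) ^ (-γ)

section MaxMeasure

variable {γ : ℝ}

theorem lintegral_rpow_mul_max_rpow {r s x : ℝ} (hr : 0 < r) (hs : 0 < s) (hx : 0 < x) :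
    ∫⁻ y, ENNReal.ofReal y ^ (r - 1) * ENNReal.ofReal (max x y) ^ (-(s + r)) ∂posVolume
      = (ENNReal.ofReal r)⁻¹ * ENNReal.ofReal x ^ (-s)
        + (ENNReal.ofReal s)⁻¹ * ENNReal.ofReal x ^ (-s) := by
  have below : ∫⁻ y in Ioc 0 x, ENNReal.ofReal y ^ (r - 1) * ENNReal.ofReal (max x y) ^ (-(s + r))
      = (ENNReal.ofReal r)⁻¹ * ENNReal.ofReal x ^ (-s) := by
    calc _ = ∫⁻ y in Ioc 0 x, ENNReal.ofReal y ^ (r - 1) * ENNReal.ofReal x ^ (-(s + r)) :=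
          setLIntegral_congr_fun measurableSet_Ioc fun y hy => by simp only [max_eq_left hy.2]
      _ = (ENNReal.ofReal r)⁻¹ * (ENNReal.ofReal x ^ r * ENNReal.ofReal x ^ (-(s + r))) := by
          rw [lintegral_mul_const _ (by fun_prop), setLIntegral_Ioc_rpow hr hx.le, div_eq_mul_inv]
          ring
      _ = _ := by rw [ofReal_rpow_mul_ofReal_rpow hx, neg_add, add_neg_cancel_comm_assoc]
  have above : ∫⁻ y in Ioi x, ENNReal.ofReal y ^ (r - 1) * ENNReal.ofReal (max x y) ^ (-(s + r))
      = (ENNReal.ofReal s)⁻¹ * ENNReal.ofReal x ^ (-s) := by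
    calc _ = ∫⁻ y in Ioi x, ENNReal.ofReal y ^ (-s - 1) :=
          setLIntegral_congr_fun measurableSet_Ioi fun y (hy : x < y) => by
            simp only [max_eq_right hy.le, ofReal_rpow_mul_ofReal_rpow (hx.trans hy)]
            congr 1
            ring
      _ = _ := by rw [setLIntegral_Ioi_rpow hs hx, div_eq_mul_inv, mul_comm]
  rw [posVolume, ← Ioc_union_Ioi_eq_Ioi hx.le, lintegral_union measurableSet_Ioi
    (Ioc_disjoint_Ioi le_rfl), below, above]

theorem lintegral_invVolume_rpow_mul_max_rpow {r s x : ℝ} (hr : 0 < r) (hs : 0 < s) (hx : 0 < x) :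
    ∫⁻ y, ENNReal.ofReal x ^ s * ENNReal.ofReal y ^ r * ENNReal.ofReal (max x y) ^ (-(s + r))
      ∂invVolume = (ENNReal.ofReal s)⁻¹ + (ENNReal.ofReal r)⁻¹ := by
  have cancel : ENNReal.ofReal x ^ s * ENNReal.ofReal x ^ (-s) = 1 := by
    rw [ofReal_rpow_mul_ofReal_rpow hx, add_neg_cancel, ENNReal.rpow_zero]
  calc _ = ∫⁻ y, ENNReal.ofReal x ^ s *
        (ENNReal.ofReal y ^ (r - 1) * ENNReal.ofReal (max x y) ^ (-(s + r))) ∂posVolume := by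
        rw [lintegral_withDensity_eq_lintegral_mul _ (by fun_prop) (by fun_prop)]
        refine lintegral_congr_ae ?_
        filter_upwards [ae_posVolume_pos] with y hy
        rw [sub_eq_neg_add, ← ofReal_rpow_mul_ofReal_rpow hy, Pi.mul_apply]
        ring
    _ = ENNReal.ofReal x ^ s * ENNReal.ofReal x ^ (-s) *
          ((ENNReal.ofReal s)⁻¹ + (ENNReal.ofReal r)⁻¹) := by
        rw [lintegral_const_mul _ (by fun_prop), lintegral_rpow_mul_max_rpow hr hs hx]
        ring
    _ = _ := by rw [cancel, one_mul]

theorem lintegral_maxMeasure_eq_lintegral_invVolume (c₁ c₂ : ℝ) {F G : ℝ → ℝ≥0∞}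
    (hF : Measurable F) (hG : Measurable G) :
    ∫⁻ z, F z.1 * G z.2 ∂maxMeasure (c₁ + c₂)
      = ∫⁻ z, (ENNReal.ofReal z.1 ^ (1 - c₁) * F z.1) * (ENNReal.ofReal z.2 ^ (1 - c₂) * G z.2)
          ∂(invVolume.prod invVolume).withDensity fun z => ENNReal.ofReal z.1 ^ c₁ *
            ENNReal.ofReal z.2 ^ c₂ * ENNReal.ofReal (max z.1 z.2) ^ (-(c₁ + c₂)) := by
  have pos : ∀ᵐ z ∂posVolume.prod posVolume, 0 < z.1 ∧ 0 < z.2 := by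
    filter_upwards [Measure.quasiMeasurePreserving_fst.ae ae_posVolume_pos,
      Measure.quasiMeasurePreserving_snd.ae ae_posVolume_pos] with z using And.intro
  have split {x : ℝ} (hx : 0 < x) (c : ℝ) : ENNReal.ofReal x ^ (-1 : ℝ) *
      (ENNReal.ofReal x ^ c * ENNReal.ofReal x ^ (1 - c)) = 1 := by
    rw [ofReal_rpow_mul_ofReal_rpow hx, ofReal_rpow_mul_ofReal_rpow hx]
    simp
  rw [maxMeasure, lintegral_withDensity_eq_lintegral_mul _ (by fun_prop) (by fun_prop),
    lintegral_withDensity_eq_lintegral_mul _ (by fun_prop) (by fun_prop),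
    prod_withDensity (by fun_prop) (by fun_prop),
    lintegral_withDensity_eq_lintegral_mul _ (by fun_prop) (by fun_prop)]
  refine lintegral_congr_ae ?_
  filter_upwards [pos] with z ⟨hz₁, hz₂⟩
  calc _ = ENNReal.ofReal (max z.1 z.2) ^ (-(c₁ + c₂)) * (1 * F z.1 * (1 * G z.2)) := by
        simp only [Pi.mul_apply, one_mul]
    _ = _ := by
        nth_rw 1 [← split hz₁ c₁]
        rw [← split hz₂ c₂]
        simp only [Pi.mul_apply]
        ring

theorem lintegral_maxMeasure_le_eLpNorm_mul_eLpNorm {c₁ c₂ : ℝ} (hc₁ : 0 < c₁) (hc₂ : 0 < c₂)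
    {F G : ℝ → ℝ≥0∞} (hF : Measurable F) (hG : Measurable G)
    (a a' : ℝ≥0∞) [a.HolderConjugate a'] :
    ∫⁻ z, F z.1 * G z.2 ∂maxMeasure (c₁ + c₂)
      ≤ ((ENNReal.ofReal c₁)⁻¹ + (ENNReal.ofReal c₂)⁻¹) *
        (eLpNorm (fun x => ENNReal.ofReal x ^ (1 - c₁) * F x) a invVolume *
          eLpNorm (fun y => ENNReal.ofReal y ^ (1 - c₂) * G y) a' invVolume) := by
  rw [lintegral_maxMeasure_eq_lintegral_invVolume c₁ c₂ hF hG]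
  refine lintegral_mul_le_of_fst_le_of_snd_le
    (fst_withDensity_prod_le (by fun_prop) ?_) (snd_withDensity_prod_le (by fun_prop) ?_)
    (by fun_prop) (by fun_prop) a a'
  · filter_upwards [ae_invVolume_pos] with x hx
    exact (lintegral_invVolume_rpow_mul_max_rpow hc₂ hc₁ hx).le
  · filter_upwards [ae_invVolume_pos] with y hy
    have := lintegral_invVolume_rpow_mul_max_rpow hc₁ hc₂ hy
    simpa only [mul_comm, max_comm, add_comm] using this.le

theorem rpow_le_setLIntegral_max_rpow (hγ₀ : 0 ≤ γ) (hγ₁ : γ < 1) {x : ℝ} (hx : 0 < x)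
    {β : ℝ≥0∞} (hβ : ENNReal.ofReal x ≤ β) :
    β ^ (1 - γ) ≤
      ∫⁻ y in {y | ENNReal.ofReal y < β}, ENNReal.ofReal (max x y) ^ (-γ) ∂posVolume := by
  have hθ : 0 < 1 - γ := sub_pos.2 hγ₁
  refine le_of_forall_lt_imp_le_of_dense fun b hb => ?_
  -- `c` is finite even if `β = ∞`, and the integrand is at least `c ^ (-γ)` where `y < c`.
  set c : ℝ≥0∞ := max (ENNReal.ofReal x) (b ^ (1 - γ)⁻¹)
  have hc : c ≠ ∞ := by finiteness [hb.ne_top]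
  have hc0 : c ≠ 0 := ((ENNReal.ofReal_pos.2 hx).trans_le (le_max_left _ _)).ne'
  have hcβ : c ≤ β := max_le hβ ((ENNReal.rpow_inv_le_iff hθ).2 hb.le)
  calc b = (b ^ (1 - γ)⁻¹) ^ (1 - γ) := (ENNReal.rpow_inv_rpow hθ.ne' b).symm
    _ ≤ c ^ (1 - γ) := ENNReal.rpow_le_rpow (le_max_right _ _) hθ.le
    _ = c ^ (-γ) * posVolume {y | ENNReal.ofReal y < c} := by
        rw [posVolume_ofReal_lt, sub_eq_neg_add, ENNReal.rpow_add _ _ hc0 hc, ENNReal.rpow_one]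
    _ ≤ ∫⁻ y in {y | ENNReal.ofReal y < c}, ENNReal.ofReal (max x y) ^ (-γ) ∂posVolume := by
        rw [← setLIntegral_const]
        refine setLIntegral_mono' (measurableSet_ofReal_lt c) fun y hy => ?_
        rw [ENNReal.rpow_neg, ENNReal.rpow_neg, ENNReal.inv_le_inv, ENNReal.ofReal_max]
        exact ENNReal.rpow_le_rpow (max_le (le_max_left _ _) (le_of_lt hy)) hγ₀
    _ ≤ _ := lintegral_mono_set fun y (hy : ENNReal.ofReal y < c) => hy.trans_le hcβ

theorem mul_rpow_le_maxMeasure (hγ₀ : 0 ≤ γ) (hγ₁ : γ < 1) {α β : ℝ≥0∞} (h : α ≤ β) :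
    α * β ^ (1 - γ) ≤
      maxMeasure γ ({x | ENNReal.ofReal x < α} ×ˢ {y | ENNReal.ofReal y < β}) := by
  have hα := measurableSet_ofReal_lt α
  rw [maxMeasure, withDensity_apply _ (hα.prod (measurableSet_ofReal_lt β)),
    setLIntegral_prod _ (by fun_prop)]
  calc α * β ^ (1 - γ) = ∫⁻ _ in {x | ENNReal.ofReal x < α}, β ^ (1 - γ) ∂posVolume := by
        rw [setLIntegral_const, posVolume_ofReal_lt, mul_comm]
    _ ≤ _ := by
        refine lintegral_mono_ae ?_
        filter_upwards [ae_restrict_mem hα, ae_restrict_of_ae ae_posVolume_pos] with x hxα hx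
        exact rpow_le_setLIntegral_max_rpow hγ₀ hγ₁ hx ((le_of_lt hxα).trans h)

theorem maxMeasure_prod_comm {A B : Set ℝ} (hA : MeasurableSet A) (hB : MeasurableSet B) :
    maxMeasure γ (A ×ˢ B) = maxMeasure γ (B ×ˢ A) := by
  rw [maxMeasure, withDensity_apply _ (hA.prod hB), withDensity_apply _ (hB.prod hA),
    setLIntegral_prod _ (by fun_prop), setLIntegral_prod_symm _ (by fun_prop)]
  simp_rw [max_comm]

theorem min_mul_rpow_le_maxMeasure (hγ₀ : 0 ≤ γ) (hγ₁ : γ < 1) (α β : ℝ≥0∞) :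
    min (α * β ^ (1 - γ)) (α ^ (1 - γ) * β) ≤
      maxMeasure γ ({x | ENNReal.ofReal x < α} ×ˢ {y | ENNReal.ofReal y < β}) := by
  rcases le_total α β with h | h
  · exact (min_le_left _ _).trans (mul_rpow_le_maxMeasure hγ₀ hγ₁ h)
  · rw [maxMeasure_prod_comm (measurableSet_ofReal_lt α) (measurableSet_ofReal_lt β),
      mul_comm (α ^ _)]
    exact (min_le_right _ _).trans (mul_rpow_le_maxMeasure hγ₀ hγ₁ h)

end MaxMeasure

/-- A measure `ρ` on `X × Y` is of restricted weak type if the bilinear form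
`(f, g) ↦ ∫ f(x) g(y) dρ(x, y)`, tested on indicator functions, satisfies the two extreme estimates
with the homogeneity of a kernel in weak `L^{1/γ}`. -/
def IsRestrictedWeakType {X Y : Type*} [MeasurableSpace X] [MeasurableSpace Y]
    (ρ : Measure (X × Y)) (μ : Measure X) (ν : Measure Y) (γ : ℝ) (C : ℝ≥0∞) : Prop :=
  ∀ A B, MeasurableSet A → MeasurableSet B →
    ρ (A ×ˢ B) ≤ C * min (μ A * ν B ^ (1 - γ)) (μ A ^ (1 - γ) * ν B)

section RestrictedWeakType

variable {X Y : Type*} [MeasurableSpace X] [MeasurableSpace Y] {μ : Measure X} {ν : Measure Y}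

theorem lintegral_mul_le_lintegral_rearrangement {ρ : Measure (X × Y)} [SFinite ρ] {C : ℝ≥0∞}
    {γ : ℝ} (hγ₀ : 0 ≤ γ) (hγ₁ : γ < 1) (hρ : IsRestrictedWeakType ρ μ ν γ C)
    {F : X → ℝ≥0∞} {G : Y → ℝ≥0∞} (hF : Measurable F) (hG : Measurable G) :
    ∫⁻ z, F z.1 * G z.2 ∂ρ
      ≤ C * ∫⁻ z, rearrangement μ F z.1 * rearrangement ν G z.2 ∂maxMeasure γ := by
  have hF' := measurable_rearrangement μ F
  have hG' := measurable_rearrangement ν G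
  have : SFinite (maxMeasure γ) := inferInstanceAs (SFinite (Measure.withDensity _ _))
  rw [← smul_eq_mul, ← lintegral_smul_measure,
    lintegral_mul_eq_setLIntegral_meas_inter ρ (by fun_prop) (by fun_prop),
    lintegral_mul_eq_setLIntegral_meas_inter (C • maxMeasure γ) (by fun_prop) (by fun_prop)]
  refine lintegral_mono fun s => lintegral_mono fun t => ?_
  set A := {x | ENNReal.ofReal s < F x}
  set B := {y | ENNReal.ofReal t < G y}
  have hA : MeasurableSet A := measurableSet_lt measurable_const hF
  have hB : MeasurableSet B := measurableSet_lt measurable_const hG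
  simp only [lt_rearrangement_iff]
  calc ρ (A ×ˢ B) ≤ C * min (μ A * ν B ^ (1 - γ)) (μ A ^ (1 - γ) * ν B) := hρ A B hA hB
    _ ≤ C * maxMeasure γ ({x | ENNReal.ofReal x < μ A} ×ˢ {y | ENNReal.ofReal y < ν B}) := by
        gcongr
        exact min_mul_rpow_le_maxMeasure hγ₀ hγ₁ _ _

theorem one_sub_one_div_pos {p : ℝ} (hp : 1 < p) : 0 < 1 - 1 / p :=
  sub_pos.2 ((div_lt_one (by linarith)).2 hp)

/-- The norm of the model form on `L^{p₁,a} × L^{p₂,a'}` provided by Schur's test, which is the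
constant in O'Neil's inequality for a measure of restricted weak type with `C = 1`. -/
noncomputable def oneilConst (p₁ p₂ : ℝ) (a a' : ℝ≥0∞) : ℝ≥0∞ :=
  ((ENNReal.ofReal (1 - 1 / p₁))⁻¹ + (ENNReal.ofReal (1 - 1 / p₂))⁻¹) *
    (ENNReal.ofReal p₁ ^ (1 / a).toReal * ENNReal.ofReal p₂ ^ (1 / a').toReal)

theorem oneilConst_ne_top {p₁ p₂ : ℝ} (hp₁ : 1 < p₁) (hp₂ : 1 < p₂) (a a' : ℝ≥0∞) :
    oneilConst p₁ p₂ a a' ≠ ∞ := by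
  have := (ENNReal.ofReal_pos.2 (one_sub_one_div_pos hp₁)).ne'
  have := (ENNReal.ofReal_pos.2 (one_sub_one_div_pos hp₂)).ne'
  unfold oneilConst
  finiteness

theorem lintegral_mul_le_lorentzNorm_mul_lorentzNorm {ρ : Measure (X × Y)} [SFinite ρ] {C : ℝ≥0∞}
    {γ : ℝ} (hγ : γ < 1) (hρ : IsRestrictedWeakType ρ μ ν γ C)
    {p₁ p₂ : ℝ} (hp₁ : 1 < p₁) (hp₂ : 1 < p₂) (hscal : 1 / p₁ + 1 / p₂ + γ = 2)
    (a a' : ℝ≥0∞) [a.HolderConjugate a']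
    {F : X → ℝ≥0∞} {G : Y → ℝ≥0∞} (hF : Measurable F) (hG : Measurable G) :
    ∫⁻ z, F z.1 * G z.2 ∂ρ ≤ C * oneilConst p₁ p₂ a a' *
      (lorentzNorm μ F (ENNReal.ofReal p₁) a * lorentzNorm ν G (ENNReal.ofReal p₂) a') := by
  have hc₁ := one_sub_one_div_pos hp₁
  have hc₂ := one_sub_one_div_pos hp₂
  have hsum : 1 - 1 / p₁ + (1 - 1 / p₂) = γ := by linarith
  have model := lintegral_maxMeasure_le_eLpNorm_mul_eLpNorm hc₁ hc₂ (measurable_rearrangement μ F)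
    (measurable_rearrangement ν G) a a'
  rw [hsum, sub_sub_cancel, sub_sub_cancel] at model
  calc ∫⁻ z, F z.1 * G z.2 ∂ρ
      ≤ C * ∫⁻ z, rearrangement μ F z.1 * rearrangement ν G z.2 ∂maxMeasure γ :=
        lintegral_mul_le_lintegral_rearrangement (by linarith) hγ hρ hF hG
    _ ≤ C * (((ENNReal.ofReal (1 - 1 / p₁))⁻¹ + (ENNReal.ofReal (1 - 1 / p₂))⁻¹) *
          ((ENNReal.ofReal p₁ ^ (1 / a).toReal * lorentzNorm μ F (ENNReal.ofReal p₁) a) *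
            (ENNReal.ofReal p₂ ^ (1 / a').toReal * lorentzNorm ν G (ENNReal.ofReal p₂) a'))) := by
        refine mul_le_mul_right (model.trans (mul_le_mul_right (mul_le_mul' ?_ ?_) _)) _
        · exact eLpNorm_rpow_mul_rearrangement_le μ F (by linarith)
            (ENNReal.HolderConjugate.ne_zero a a')
        · exact eLpNorm_rpow_mul_rearrangement_le ν G (by linarith)
            (ENNReal.HolderConjugate.ne_zero a' a)
    _ = _ := by
        rw [oneilConst]
        ring

end RestrictedWeakType

section MeasurableMajorant

variable {X : Type*} [MeasurableSpace X] {μ : Measure X}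

theorem exists_measurable_ge_meas_lt_eq (μ : Measure X) (f : X → ℝ≥0∞) :
    ∃ F : X → ℝ≥0∞, Measurable F ∧ f ≤ F ∧ ∀ t, μ {x | t < F x} = μ {x | t < f x} := by
  obtain ⟨D, D_countable, D_dense⟩ := TopologicalSpace.exists_countable_dense ℝ≥0∞
  have := D_countable.to_subtype
  set S : ℝ≥0∞ → Set X := fun q => toMeasurable μ {x | q < f x}
  set F : X → ℝ≥0∞ := fun x => ⨆ q : D, (S q).indicator (fun _ => (q : ℝ≥0∞)) x
  have superlevel_F (t : ℝ≥0∞) : {x | t < F x} = ⋃ q : {q : D // t < q}, S q := by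
    ext x
    have lt_indicator (q : ℝ≥0∞) : t < (S q).indicator (fun _ => q) x ↔ t < q ∧ x ∈ S q := by
      by_cases hx : x ∈ S q <;> simp [hx]
    simp [F, lt_iSup_iff, lt_indicator, and_left_comm]
  have superlevel_f (t : ℝ≥0∞) :
      {x | t < f x} = ⋃ q : {q : D // t < q}, {x | (q : ℝ≥0∞) < f x} := by
    ext x
    simp only [mem_iUnion]
    refine ⟨fun hx => ?_, fun ⟨q, hq⟩ => q.2.trans hq⟩
    obtain ⟨q, hqD, htq, hqf⟩ := D_dense.exists_between hx
    exact ⟨⟨⟨q, hqD⟩, htq⟩, hqf⟩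
  have meas_eq (t : ℝ≥0∞) : μ {x | t < F x} = μ {x | t < f x} := by
    rw [superlevel_F, superlevel_f, measure_iUnion_toMeasurable]
  refine ⟨F, ?_, fun x => ?_, meas_eq⟩
  · exact .iSup fun q => measurable_const.indicator (measurableSet_toMeasurable _ _)
  · refine le_of_forall_lt fun t (ht : x ∈ {x | t < f x}) => ?_
    suffices x ∈ {x | t < F x} from this
    rw [superlevel_f] at ht
    rw [superlevel_F]
    exact iUnion_mono (fun q => subset_toMeasurable _ _) ht

theorem lorentzNorm_congr_meas_lt {f g : X → ℝ≥0∞} (h : ∀ t, μ {x | t < f x} = μ {x | t < g x})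
    (p a : ℝ≥0∞) : lorentzNorm μ f p a = lorentzNorm μ g p a := by
  simp only [lorentzNorm, essSup_eq_sInf, h]

end MeasurableMajorant

section WeakTypeKernel

variable {X Y : Type*} [MeasurableSpace X] [MeasurableSpace Y] {μ : Measure X} {ν : Measure Y}
  [SFinite μ] [SFinite ν] {W : ℝ≥0∞} {γ : ℝ}

theorem setLIntegral_le_add_of_meas_lt_le (hγ₀ : 0 < γ) (hγ₁ : γ < 1) {h : X → ℝ≥0∞}
    (hh : Measurable h)
    (hW : ∀ t, 0 < t → μ {x | ENNReal.ofReal t < h x} ≤ W * ENNReal.ofReal t ^ (-(1 / γ)))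
    (B : Set X) {T : ℝ} (hT : 0 < T) :
    ∫⁻ x in B, h x ∂μ ≤ μ B * ENNReal.ofReal T +
      W * (ENNReal.ofReal T ^ (-(1 / γ - 1)) / ENNReal.ofReal (1 / γ - 1)) := by
  have low : ∫⁻ t in Ioc 0 T, μ.restrict B {x | ENNReal.ofReal t < h x}
      ≤ μ B * ENNReal.ofReal T := by
    calc _ ≤ ∫⁻ _ in Ioc 0 T, μ B := lintegral_mono fun t =>
          (measure_mono (subset_univ _)).trans_eq (Measure.restrict_apply_univ B)
      _ = μ B * ENNReal.ofReal T := by rw [setLIntegral_const, Real.volume_Ioc, sub_zero]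
  have high : ∫⁻ t in Ioi T, μ.restrict B {x | ENNReal.ofReal t < h x}
      ≤ W * (ENNReal.ofReal T ^ (-(1 / γ - 1)) / ENNReal.ofReal (1 / γ - 1)) := by
    calc _ ≤ ∫⁻ t in Ioi T, W * ENNReal.ofReal t ^ (-(1 / γ - 1) - 1) :=
          setLIntegral_mono' measurableSet_Ioi fun t (ht : T < t) => by
            refine (Measure.restrict_apply_le _ _).trans ((hW t (hT.trans ht)).trans_eq ?_)
            congr 2
            ring
      _ = _ := by
          rw [lintegral_const_mul _ (measurable_ofReal_rpow _),
            setLIntegral_Ioi_rpow (sub_pos.2 ((one_lt_div hγ₀).2 hγ₁)) hT]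
  rw [lintegral_eq_setLIntegral_meas_lt _ hh, ← Ioc_union_Ioi_eq_Ioi hT.le,
    lintegral_union measurableSet_Ioi (Ioc_disjoint_Ioi le_rfl)]
  exact add_le_add low high

theorem setLIntegral_le_of_meas_lt_le (hγ₀ : 0 < γ) (hγ₁ : γ < 1) {h : X → ℝ≥0∞}
    (hh : Measurable h)
    (hW : ∀ t, 0 < t → μ {x | ENNReal.ofReal t < h x} ≤ W * ENNReal.ofReal t ^ (-(1 / γ)))
    (B : Set X) :
    ∫⁻ x in B, h x ∂μ ≤ (1 + W / ENNReal.ofReal (1 / γ - 1)) * μ B ^ (1 - γ) := by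
  rcases eq_or_ne (μ B) 0 with hB0 | hB0
  · simp [setLIntegral_measure_zero _ _ hB0]
  rcases eq_or_ne (μ B) ∞ with hBt | hBt
  · simp [hBt, ENNReal.top_rpow_of_pos (sub_pos.2 hγ₁), ENNReal.mul_top]
  have hB : 0 < (μ B).toReal := ENNReal.toReal_pos hB0 hBt
  have hT : ENNReal.ofReal ((μ B).toReal ^ (-γ)) = μ B ^ (-γ) := by
    rw [← ENNReal.ofReal_rpow_of_pos hB, ENNReal.ofReal_toReal hBt]
  have hexp : -γ * -(1 / γ - 1) = 1 - γ := by field_simp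
  calc ∫⁻ x in B, h x ∂μ
      ≤ μ B * μ B ^ (-γ) +
          W * ((μ B ^ (-γ)) ^ (-(1 / γ - 1)) / ENNReal.ofReal (1 / γ - 1)) :=
        hT ▸ setLIntegral_le_add_of_meas_lt_le hγ₀ hγ₁ hh hW B (Real.rpow_pos_of_pos hB _)
    _ = μ B ^ (1 - γ) + W * (μ B ^ (1 - γ) / ENNReal.ofReal (1 / γ - 1)) := by
        rw [← ENNReal.rpow_mul, hexp, sub_eq_add_neg 1 γ, ENNReal.rpow_add _ _ hB0 hBt,
          ENNReal.rpow_one]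
    _ = _ := by
        simp only [div_eq_mul_inv]
        ring

variable {K : X × Y → ℝ≥0∞}

theorem isRestrictedWeakType_withDensity_prod (hγ₀ : 0 < γ) (hγ₁ : γ < 1) (hK : Measurable K)
    (hfst : ∀ x t, 0 < t →
      ν {y | ENNReal.ofReal t < K (x, y)} ≤ W * ENNReal.ofReal t ^ (-(1 / γ)))
    (hsnd : ∀ y t, 0 < t →
      μ {x | ENNReal.ofReal t < K (x, y)} ≤ W * ENNReal.ofReal t ^ (-(1 / γ))) :
    IsRestrictedWeakType ((μ.prod ν).withDensity K) μ ν γ (1 + W / ENNReal.ofReal (1 / γ - 1)) := by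
  intro A B hA hB
  set C := 1 + W / ENNReal.ofReal (1 / γ - 1)
  rw [withDensity_apply _ (hA.prod hB), mul_min]
  refine le_min ?_ ?_
  · calc ∫⁻ z in A ×ˢ B, K z ∂μ.prod ν = ∫⁻ x in A, ∫⁻ y in B, K (x, y) ∂ν ∂μ :=
          setLIntegral_prod _ hK.aemeasurable
      _ ≤ ∫⁻ _ in A, C * ν B ^ (1 - γ) ∂μ := lintegral_mono fun x =>
          setLIntegral_le_of_meas_lt_le hγ₀ hγ₁ (by fun_prop) (hfst x) B
      _ = _ := by rw [setLIntegral_const]; ring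
  · calc ∫⁻ z in A ×ˢ B, K z ∂μ.prod ν = ∫⁻ y in B, ∫⁻ x in A, K (x, y) ∂μ ∂ν :=
          setLIntegral_prod_symm _ hK.aemeasurable
      _ ≤ ∫⁻ _ in B, C * μ A ^ (1 - γ) ∂ν := lintegral_mono fun y =>
          setLIntegral_le_of_meas_lt_le hγ₀ hγ₁ (by fun_prop) (hsnd y) A
      _ = _ := by rw [setLIntegral_const]; ring

theorem lintegral_lintegral_mul_kernel_le_lorentzNorm_mul_lorentzNorm (hγ : γ < 1)
    (hK : Measurable K)
    (hfst : ∀ x t, 0 < t →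
      ν {y | ENNReal.ofReal t < K (x, y)} ≤ W * ENNReal.ofReal t ^ (-(1 / γ)))
    (hsnd : ∀ y t, 0 < t →
      μ {x | ENNReal.ofReal t < K (x, y)} ≤ W * ENNReal.ofReal t ^ (-(1 / γ)))
    {p₁ p₂ : ℝ} (hp₁ : 1 < p₁) (hp₂ : 1 < p₂) (hscal : 1 / p₁ + 1 / p₂ + γ = 2)
    (a a' : ℝ≥0∞) [a.HolderConjugate a'] (f : X → ℝ≥0∞) (g : Y → ℝ≥0∞) :
    ∫⁻ x, ∫⁻ y, f x * g y * K (x, y) ∂ν ∂μ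
      ≤ (1 + W / ENNReal.ofReal (1 / γ - 1)) * oneilConst p₁ p₂ a a' *
        (lorentzNorm μ f (ENNReal.ofReal p₁) a * lorentzNorm ν g (ENNReal.ofReal p₂) a') := by
  have hγ₀ : 0 < γ := by linarith [one_sub_one_div_pos hp₁, one_sub_one_div_pos hp₂]
  obtain ⟨F, hF, f_le, F_meas⟩ := exists_measurable_ge_meas_lt_eq μ f
  obtain ⟨G, hG, g_le, G_meas⟩ := exists_measurable_ge_meas_lt_eq ν g
  rw [← lorentzNorm_congr_meas_lt F_meas, ← lorentzNorm_congr_meas_lt G_meas]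
  calc ∫⁻ x, ∫⁻ y, f x * g y * K (x, y) ∂ν ∂μ ≤ ∫⁻ x, ∫⁻ y, F x * G y * K (x, y) ∂ν ∂μ :=
        lintegral_mono fun x => lintegral_mono fun y =>
          mul_le_mul_left (mul_le_mul' (f_le x) (g_le y)) _
    _ = ∫⁻ z, F z.1 * G z.2 ∂(μ.prod ν).withDensity K := by
        rw [lintegral_withDensity_eq_lintegral_mul _ hK (by fun_prop),
          lintegral_prod _ (by fun_prop)]
        simp only [Pi.mul_apply, mul_comm]
    _ ≤ _ := lintegral_mul_le_lorentzNorm_mul_lorentzNorm hγ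
        (isRestrictedWeakType_withDensity_prod hγ₀ hγ hK hfst hsnd) hp₁ hp₂ hscal a a' hF hG

end WeakTypeKernel

theorem addHaar_lt_norm_sub_rpow_le {E : Type*} [NormedAddCommGroup E] [NormedSpace ℝ E]
    [FiniteDimensional ℝ E] [MeasurableSpace E] [BorelSpace E] (μ : Measure E)
    [μ.IsAddHaarMeasure] {lam : ℝ} (hlam : 0 < lam) (x : E) {t : ℝ} (ht : 0 < t) :
    μ {y | ENNReal.ofReal t < ENNReal.ofReal (‖x - y‖ ^ (-lam))}
      ≤ μ (Metric.ball 0 1) * ENNReal.ofReal t ^ (-(Module.finrank ℝ E / lam)) := by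
  calc μ {y | ENNReal.ofReal t < ENNReal.ofReal (‖x - y‖ ^ (-lam))}
      ≤ μ (Metric.closedBall x (t ^ (-lam)⁻¹)) := by
        refine measure_mono fun y hy => ?_
        have hy : t < ‖x - y‖ ^ (-lam) := (ENNReal.ofReal_lt_ofReal_iff_of_nonneg ht.le).1 hy
        rw [Metric.mem_closedBall, dist_comm, dist_eq_norm]
        rcases (norm_nonneg (x - y)).eq_or_lt with h0 | h0
        · exact h0 ▸ (Real.rpow_pos_of_pos ht _).le
        · exact (Real.le_rpow_inv_iff_of_neg h0 ht (neg_lt_zero.2 hlam)).2 hy.le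
    _ = μ (Metric.ball 0 1) * ENNReal.ofReal t ^ (-(Module.finrank ℝ E / lam)) := by
        rw [Measure.addHaar_closedBall μ x (Real.rpow_nonneg ht.le _), mul_comm,
          ENNReal.ofReal_rpow_of_pos ht, ← Real.rpow_mul_natCast ht.le]
        congr 3
        ring

theorem statement6_general {E : Type*} [NormedAddCommGroup E] [NormedSpace ℝ E]
    [FiniteDimensional ℝ E] [MeasurableSpace E] [BorelSpace E] (μ : Measure E)
    [μ.IsAddHaarMeasure] {lam : ℝ} (hlam₀ : 0 < lam) (hlam : lam < Module.finrank ℝ E)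
    {p₁ p₂ : ℝ} (hp₁ : 1 < p₁) (hp₂ : 1 < p₂)
    (hscal : 1 / p₁ + 1 / p₂ + lam / Module.finrank ℝ E = 2)
    (a a' : ℝ≥0∞) [a.HolderConjugate a'] :
    ∃ C : ℝ, 0 < C ∧ ∀ f g : E → ℝ≥0∞,
      ∫⁻ x, ∫⁻ y, f x * g y * ENNReal.ofReal (‖x - y‖ ^ (-lam)) ∂μ ∂μ ≤
        ENNReal.ofReal C * lorentzNorm μ f (ENNReal.ofReal p₁) a *
          lorentzNorm μ g (ENNReal.ofReal p₂) a' := by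
  have hd : (0 : ℝ) < Module.finrank ℝ E := hlam₀.trans hlam
  have hγ₀ : 0 < lam / Module.finrank ℝ E := div_pos hlam₀ hd
  have hγ₁ : lam / Module.finrank ℝ E < 1 := (div_lt_one hd).2 hlam
  have weak (x : E) (t : ℝ) (ht : 0 < t) := addHaar_lt_norm_sub_rpow_le μ hlam₀ x ht
  rw [← one_div_div lam] at weak
  set K : ℝ≥0∞ := (1 + μ (Metric.ball 0 1) / ENNReal.ofReal (1 / (lam / Module.finrank ℝ E) - 1)) *
    oneilConst p₁ p₂ a a'
  have K_ne_top : K ≠ ∞ := by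
    have := oneilConst_ne_top hp₁ hp₂ a a'
    have : ENNReal.ofReal (1 / (lam / Module.finrank ℝ E) - 1) ≠ 0 :=
      (ENNReal.ofReal_pos.2 (sub_pos.2 ((one_lt_div hγ₀).2 hγ₁))).ne'
    have : μ (Metric.ball 0 1) ≠ ∞ := measure_ball_lt_top.ne
    finiteness
  refine ⟨K.toReal + 1, by positivity, fun f g => ?_⟩
  have K_le : K ≤ ENNReal.ofReal (K.toReal + 1) :=
    (ENNReal.ofReal_toReal K_ne_top).ge.trans (ENNReal.ofReal_le_ofReal (by linarith))
  calc _ ≤ K * (lorentzNorm μ f (ENNReal.ofReal p₁) a * lorentzNorm μ g (ENNReal.ofReal p₂) a') :=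
        lintegral_lintegral_mul_kernel_le_lorentzNorm_mul_lorentzNorm hγ₁
          (K := fun z : E × E => ENNReal.ofReal (‖z.1 - z.2‖ ^ (-lam))) (by fun_prop) weak
          (by simpa only [norm_sub_rev] using weak) hp₁ hp₂ hscal a a' f g
    _ ≤ _ := by
        rw [← mul_assoc]
        gcongr

/-- **O'Neil.** Let `d ≥ 1`, `0 < λ < d`, `1 < p₁, p₂ < ∞`, `1 ≤ a ≤ ∞` with
`1/p₁ + 1/p₂ + λ/d = 2`. Then
`|∬ f(x) g(y) |x-y|^{-λ} dx dy| ≲ ‖f‖_{L^{p₁,a}} ‖g‖_{L^{p₂,a'}}`, `a'` the conjugate of `a`. -/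
theorem statement6 (d : ℕ) (hd : 1 ≤ d) (lam : ℝ) (hlam0 : 0 < lam) (hlamd : lam < d)
    (p₁ p₂ : ℝ) (hp₁ : 1 < p₁) (hp₂ : 1 < p₂)
    (a a' : ℝ≥0∞) (ha : 1 ≤ a) (ha' : 1 / a + 1 / a' = 1)
    (hscal : 1 / p₁ + 1 / p₂ + lam / d = 2) :
    ∃ C : ℝ, 0 < C ∧
      ∀ f g : EuclideanSpace ℝ (Fin d) → ℂ,
        ∫⁻ x, ∫⁻ y, (‖f x‖₊ : ℝ≥0∞) * (‖g y‖₊ : ℝ≥0∞) * ENNReal.ofReal (‖x - y‖ ^ (-lam)) ≤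
          ENNReal.ofReal C *
            lorentzNorm volume (fun x => (‖f x‖₊ : ℝ≥0∞)) (ENNReal.ofReal p₁) a *
            lorentzNorm volume (fun y => (‖g y‖₊ : ℝ≥0∞)) (ENNReal.ofReal p₂) a' := by
  have : a.HolderConjugate a' := ENNReal.holderConjugate_iff.2 (by simpa only [one_div] using ha')
  obtain ⟨C, hC, bound⟩ := statement6_general (volume : Measure (EuclideanSpace ℝ (Fin d))) hlam0
    (by simpa using hlamd) hp₁ hp₂ (by simpa using hscal) a a'
  exact ⟨C, hC, fun f g => bound _ _⟩
end
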